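/- arXiv:math/0607428 — 2 statements merged into one kernel-verified Lean document; each statement's English description precedes it below -/
import Mathlib

section
/- Let W and W' be finitely generated Coxeter groups and let N(W) ≤ W and N(W') ≤ W' be the normal closures of the subgroups N(⟨B⟩) over all bases B of rank greater than 2 (with respect to any sets of Coxeter generators; these subgroups are independent of that choice). If W is isomorphic to W', then W/N(W) is isomorphic to W'/N(W'); that is, the isomorphism type of W^(2) = W/N(W) is an isomorphism invariant of W. -/
/-!
The subgroup `N(W)` is described without Coxeter generators. Call a group generalised dihedral if it
has an abelian subgroup of index at most two outside of which all elements are involutions, and say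
that an element of a group is *dihedrally killed* (`IsDK`) if it becomes trivial in every
generalised dihedral quotient. Then `N(W)` is the normal closure `MW W` of the elements `x` which
are dihedrally killed in some finite subgroup `F` of `W` containing them, see `nw_eq_mw`. Every
isomorphism `W ≃* W₂` carries `MW W` onto `MW W₂`, so it induces an isomorphism of the quotients.

The inclusion `N(W) ≤ MW W` says that for a base `B` the generators of `N(⟨B⟩)` are dihedrally
killed in `⟨B⟩` (`nb_le_dk`). In a generalised dihedral group the Coxeter relations force this: for
a chain `a - b - c` with odd labels and `a`, `c` commuting, `a` and `c` have the same image
(`GD.chain_odd`), and `c₁ - c₂ - c₃` with labels `3`, `4` forces `c₂` and `c₃` to have commuting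
images (`GD.c3`). In rank at least five such chains make all the generators of `⟨B⟩` commute in the
quotient (`Dia.rank5`, `Cox.comm5`).

For the converse, an element dihedrally killed in a finite subgroup is conjugate to one dihedrally
killed in a finite visual subgroup, because finite subgroups of Coxeter groups are conjugate into
finite visual subgroups (`tits_finite`). A finite visual subgroup is the direct product of its
irreducible components (`vis_split`), so it may be assumed irreducible (`dk_induction`). If its rank
is at most two, it is generated by at most two involutions, hence generalised dihedral, and the
element is trivial. Otherwise the visual subgroup is contained in a basic subgroup `⟨B⟩` of rank at
least three, and the quotient `⟨B⟩ / N(⟨B⟩)` is abelian (rank at least five and types `A₄`, `G₃`,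
`G₄`), generated by two involutions (`A₃`, `B₄`), or a quotient of `S₃ × C₂` (`C₃`, `C₄`) or of
`S₃ × S₃` (`F₄`). In each of these groups the only dihedrally killed element is `1` (`dk_le_nb`).

Only a rough form of the classification of finite Coxeter groups is needed. The form of a finite
irreducible visual subgroup is positive definite (`posDef_of_finite`), which excludes a short list of
subdiagrams and leaves the types above in rank three and four (`Dia.shape3`, `Dia.shape4`).
The facts about Coxeter groups used here, including faithfulness of the geometric representation,
follow from Tits' theorem that every root is either nonnegative or nonpositive (`geo_nonneg_of_lt`).
-/


variable {W : Type*} [Group W]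

/-- `S` is a set of Coxeter generators of the group `W`, with Coxeter matrix given by the
restriction of `m` to `S × S` (the value `0` of `m` encodes `∞`). -/
def IsCoxeterSystemOn (m : W → W → ℕ) (S : Set W) : Prop :=
  ∃ (cm : CoxeterMatrix S) (cs : CoxeterSystem cm W),
    (∀ s : S, cs.simple s = (s : W)) ∧ ∀ s t : S, cm.M s t = m s t

/-- The subset `B` is irreducible: its Coxeter diagram (edges between distinct `x, y` with
`m x y > 2`, including `m x y = ∞`, i.e. `m x y = 0`) is nonempty and connected. -/
def IsIrreducibleOn (m : W → W → ℕ) (B : Set W) : Prop :=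
  B.Nonempty ∧ ∀ u ∈ B, ∀ v ∈ B,
    Relation.ReflTransGen
      (fun x y => x ∈ B ∧ y ∈ B ∧ x ≠ y ∧ (m x y = 0 ∨ 2 < m x y)) u v

/-- `B` is a base of the Coxeter system `(W, S)`: the visual subgroup `⟨B⟩` is a noncyclic,
maximal, finite, irreducible visual subgroup. -/
def IsBase (m : W → W → ℕ) (S B : Set W) : Prop :=
  B ⊆ S ∧ IsIrreducibleOn m B ∧ (Subgroup.closure B : Set W).Finite ∧
    ¬ IsCyclic ↥(Subgroup.closure B) ∧
    ∀ B' : Set W, B' ⊆ S → B ⊆ B' → IsIrreducibleOn m B' →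
      (Subgroup.closure B' : Set W).Finite → B' = B

/-- The base `B` matches the base `B'`: the commutator subgroups of the visual subgroups
`⟨B⟩` and `⟨B'⟩` are conjugate in `W`. -/
def Matches (B B' : Set W) : Prop :=
  ∃ w : W,
    Subgroup.map ((MulAut.conj w).toMonoidHom)
        (⁅Subgroup.closure B, Subgroup.closure B⁆ : Subgroup W)
      = ⁅Subgroup.closure B', Subgroup.closure B'⁆

/-- `(⟨B⟩, B)` has the isomorphism type of the Coxeter system of the Coxeter matrix `std`. -/
def HasType (m : W → W → ℕ) (B : Set W) {n : ℕ} (std : Fin n → Fin n → ℕ) : Prop :=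
  ∃ e : ↥B ≃ Fin n, ∀ u v : ↥B, m u v = std (e u) (e v)

/-- The Coxeter matrix of type `Aₙ` (Coxeter's notation): linear diagram, all labels 3. -/
def aMat (n : ℕ) : Fin n → Fin n → ℕ := fun i j =>
  if i = j then 1 else if i.val + 1 = j.val ∨ j.val + 1 = i.val then 3 else 2

/-- The Coxeter matrix of type `Cₙ` in Coxeter's notation (Bourbaki's `Bₙ`):
linear diagram with labels 3, …, 3, 4. -/
def cMat (n : ℕ) : Fin n → Fin n → ℕ := fun i j =>
  if i = j then 1
  else if i.val + 1 = j.val ∨ j.val + 1 = i.val then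
    (if i.val + 1 = n ∨ j.val + 1 = n then 4 else 3)
  else 2

/-- The Coxeter matrix of type `Bₙ` in Coxeter's notation (Bourbaki's `Dₙ`), for `n ≥ 3`:
a chain `0, …, n-2` with labels 3 together with the edge `{n-3, n-1}` labelled 3. -/
def bMat (n : ℕ) : Fin n → Fin n → ℕ := fun i j =>
  if i = j then 1
  else if ((i.val + 1 = j.val ∧ j.val + 2 ≤ n) ∨ (j.val + 1 = i.val ∧ i.val + 2 ≤ n))
      ∨ (i.val + 3 = n ∧ j.val + 1 = n) ∨ (j.val + 3 = n ∧ i.val + 1 = n) then 3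
  else 2

/-- The dihedral Coxeter matrix `D₂(k)` (i.e. `I₂(k)`). -/
def d2Mat (k : ℕ) : Fin 2 → Fin 2 → ℕ := fun i j => if i = j then 1 else k

/-- The Coxeter matrix of type `G₃` in Coxeter's notation (i.e. `H₃`). -/
def g3Mat : Fin 3 → Fin 3 → ℕ := ![![1,3,2], ![3,1,5], ![2,5,1]]

/-- The Coxeter matrix of type `G₄` in Coxeter's notation (i.e. `H₄`). -/
def g4Mat : Fin 4 → Fin 4 → ℕ := ![![1,3,2,2], ![3,1,3,2], ![2,3,1,5], ![2,2,5,1]]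

/-- The Coxeter matrix of type `F₄`. -/
def f4Mat : Fin 4 → Fin 4 → ℕ := ![![1,3,2,2], ![3,1,4,2], ![2,4,1,3], ![2,2,3,1]]

/-- The 2-part of `k`: the largest power of 2 dividing `k` (with `0` encoding `∞`;
the 2-part of `∞` is `∞`). -/
def twoPart (k : ℕ) : ℕ := if k = 0 then 0 else 2 ^ (k.factorization 2)

/-- The subgroup `N_b`: the normal closure in `W` of the elements `(st) ^ b(s,t)` for
`s, t ∈ S` with `m s t < ∞`, where `b(s,t)` is the 2-part of `m s t`. -/
def NbSubgroup (m : W → W → ℕ) (S : Set W) : Subgroup W :=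
  Subgroup.normalClosure
    {x | ∃ s ∈ S, ∃ t ∈ S, m s t ≠ 0 ∧ x = (s * t) ^ twoPart (m s t)}

instance (m : W → W → ℕ) (S : Set W) : (NbSubgroup m S).Normal :=
  Subgroup.normalClosure_normal

/-- `(a, b)` is a special pair of elements of `S`: `m a b ≡ 2 mod 4` and either `v = a` or
`v = b` has the property that `m s a = m s b = 2` for every `s ∈ S \ {a, b}` with
`m s v < ∞`. -/
def IsSpecialPair (m : W → W → ℕ) (S : Set W) (a b : W) : Prop :=
  a ∈ S ∧ b ∈ S ∧ a ≠ b ∧ m a b % 4 = 2 ∧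
    ((∀ s ∈ S, s ≠ a → s ≠ b → m s a ≠ 0 → m s a = 2 ∧ m s b = 2) ∨
     (∀ s ∈ S, s ≠ a → s ≠ b → m s b ≠ 0 → m s a = 2 ∧ m s b = 2))

open scoped Classical in
/-- `m̄ a b = 2` if `(a, b)` is a special pair and `m̄ a b = m a b` otherwise. -/
noncomputable def mbar (m : W → W → ℕ) (S : Set W) (a b : W) : ℕ :=
  if IsSpecialPair m S a b then 2 else m a b

/-- The subgroup `N_e`: the normal closure in `W` of the elements `st` with `m s t` odd
together with the elements `(ab)²` with `(a, b)` a special pair. -/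
def NeSubgroup (m : W → W → ℕ) (S : Set W) : Subgroup W :=
  Subgroup.normalClosure
    ({x | ∃ s ∈ S, ∃ t ∈ S, Odd (m s t) ∧ x = s * t} ∪
     {x | ∃ a b : W, IsSpecialPair m S a b ∧ x = (a * b) ^ 2})

instance (m : W → W → ℕ) (S : Set W) : (NeSubgroup m S).Normal :=
  Subgroup.normalClosure_normal

/-- The word length of `w` with respect to the generating set `B`. -/
noncomputable def wordLength (B : Set W) (w : W) : ℕ :=
  sInf {n | ∃ l : List W, (∀ x ∈ l, x ∈ B) ∧ l.length = n ∧ l.prod = w}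

/-- `z` is a longest element of the visual subgroup `⟨B⟩`. -/
def IsLongestElement (B : Set W) (z : W) : Prop :=
  z ∈ Subgroup.closure B ∧
    ∀ w ∈ Subgroup.closure B, wordLength B w ≤ wordLength B z

/-- The basic subgroup `⟨B⟩` of `(W, S)` is reduced: for every set of Coxeter generators `S'`
of `W`, any base of `(W, S')` matching `B` generates a subgroup of order at least `|⟨B⟩|`. -/
def IsReducedBase (m : W → W → ℕ) (S B : Set W) : Prop :=
  ∀ (S' : Set W) (m' : W → W → ℕ) (B' : Set W),
    IsCoxeterSystemOn m' S' → S'.Finite → IsBase m' S' B' → Matches B B' →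
      Nat.card ↥(Subgroup.closure B) ≤ Nat.card ↥(Subgroup.closure B')

/-- The isomorphism type of `(⟨B⟩, B)` belongs to the family `F` of isomorphism types of
Coxeter systems (a family of Coxeter matrices). -/
def TypeIn (F : ∀ n : ℕ, (Fin n → Fin n → ℕ) → Prop) (m : W → W → ℕ) (B : Set W) : Prop :=
  ∃ (n : ℕ) (Mt : Fin n → Fin n → ℕ), F n Mt ∧ HasType m B Mt

/-- The subgroup `N(F)`: the normal closure in `W` of the commutator subgroups of all
reduced basic subgroups of `(W, S)` of type in `F` together with the commutator subgroups of
all unreduced basic subgroups of `(W, S)` matching a reduced basic subgroup of type in `F`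
of another system `(W, S')`. -/
def NFSubgroup (F : ∀ n : ℕ, (Fin n → Fin n → ℕ) → Prop)
    (m : W → W → ℕ) (S : Set W) : Subgroup W :=
  Subgroup.normalClosure
    {x | ∃ B : Set W, IsBase m S B ∧
      x ∈ (⁅Subgroup.closure B, Subgroup.closure B⁆ : Subgroup W) ∧
      ((IsReducedBase m S B ∧ TypeIn F m B) ∨
       (¬ IsReducedBase m S B ∧ ∃ (S' : Set W) (m' : W → W → ℕ) (B' : Set W),
          IsCoxeterSystemOn m' S' ∧ S'.Finite ∧ IsBase m' S' B' ∧
          IsReducedBase m' S' B' ∧ TypeIn F m' B' ∧ Matches B B'))}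

instance (F : ∀ n : ℕ, (Fin n → Fin n → ℕ) → Prop) (m : W → W → ℕ) (S : Set W) :
    (NFSubgroup F m S).Normal :=
  Subgroup.normalClosure_normal

/-- The normal closure, within the subgroup `H`, of the subset `X ⊆ H`,
as a subgroup of the ambient group. -/
def nClosIn (H : Subgroup W) (X : Set W) : Subgroup W :=
  Subgroup.map H.subtype (Subgroup.normalClosure ((fun x : H => (x : W)) ⁻¹' X))

/-- The generating set for the subgroup `N(⟨B⟩)` of a basic subgroup `⟨B⟩` of rank at least 3:
the commutator subgroup of `⟨B⟩` if the rank is at least 5 or the type is `A₄`, `G₃` or `G₄`;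
`a₁a₃` for type `A₃`; `b₁b₂, b₂b₃` (products of distinct commuting generators) for type `B₄`;
`(c₂c₃)²` for type `C₃`; `c₁c₃` for type `C₄`; and `(f₂f₃)²` for type `F₄`. -/
def genSetNB (m : W → W → ℕ) (B : Set W) : Set W :=
  {x | ((5 ≤ B.ncard ∨ HasType m B (aMat 4) ∨ HasType m B g3Mat ∨ HasType m B g4Mat) ∧
          x ∈ (⁅Subgroup.closure B, Subgroup.closure B⁆ : Subgroup W)) ∨
       (HasType m B (aMat 3) ∧ ∃ u ∈ B, ∃ v ∈ B, u ≠ v ∧ m u v = 2 ∧ x = u * v) ∨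
       (HasType m B (bMat 4) ∧ ∃ u ∈ B, ∃ v ∈ B, u ≠ v ∧ m u v = 2 ∧ x = u * v) ∨
       (HasType m B (cMat 3) ∧ ∃ u ∈ B, ∃ v ∈ B, m u v = 4 ∧ x = (u * v) ^ 2) ∨
       (HasType m B (cMat 4) ∧ ∃ u ∈ B, ∃ p ∈ B, ∃ v ∈ B, ∃ q ∈ B,
          m u p = 3 ∧ m p v = 3 ∧ m v q = 4 ∧ m u v = 2 ∧ x = u * v) ∨
       (HasType m B f4Mat ∧ ∃ u ∈ B, ∃ v ∈ B, m u v = 4 ∧ x = (u * v) ^ 2)}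

/-- The subgroup `N(⟨B⟩)` of the visual subgroup `⟨B⟩`, viewed as a subgroup of `W`. -/
def NBSubgroup (m : W → W → ℕ) (B : Set W) : Subgroup W :=
  nClosIn (Subgroup.closure B) (genSetNB m B)

/-- The subgroup `N(W)`: the normal closure in `W` of the subgroups `N(⟨B⟩)` over all
bases `B` of `(W, S)` of rank greater than 2. -/
def NWSubgroup (m : W → W → ℕ) (S : Set W) : Subgroup W :=
  Subgroup.normalClosure
    {x | ∃ B : Set W, IsBase m S B ∧ 2 < B.ncard ∧ x ∈ NBSubgroup m B}

instance (m : W → W → ℕ) (S : Set W) : (NWSubgroup m S).Normal :=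
  Subgroup.normalClosure_normal

/-! ### The geometric representation -/

namespace CoxAux
section Geom
variable {ι : Type*} (M : CoxeterMatrix ι)

/-- The entry `-cos (π / m(i,j))` of the Gram matrix of the geometric representation.
For `m(i,j) = ∞`, encoded as `0`, the convention `π / 0 = 0` gives the correct value `-1`. -/
noncomputable def gram (i j : ι) : ℝ := -Real.cos (Real.pi / M i j)

lemma gram_symm (i j : ι) : gram M i j = gram M j i := by
  simp [gram, M.symmetric i j]

lemma gram_self (i : ι) : gram M i i = 1 := by
  simp [gram]

open scoped Classical in
/-- The basis vector `e_i` of the geometric representation. -/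
noncomputable def ee (i : ι) : ι → ℝ := Pi.single i 1

variable [Fintype ι]

/-- The functional `v ↦ B(e_i, v)` for the form `B` with Gram matrix `gram M`. -/
noncomputable def bf (i : ι) : Module.Dual ℝ (ι → ℝ) :=
  ∑ j, gram M i j • LinearMap.proj j

lemma bf_apply (i : ι) (v : ι → ℝ) : bf M i v = ∑ j, gram M i j * v j := by
  simp [bf]

lemma bf_ee (i j : ι) : bf M i (ee j) = gram M i j := by
  classical
  simp [bf_apply, ee, Pi.single_apply]

lemma two_bf_ee (i : ι) : (2 • bf M i) (ee i) = (2 : ℝ) := by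
  simp [bf_ee, gram_self]

/-- The reflection `v ↦ v - 2 B(e_i, v) e_i`. -/
noncomputable def refl (i : ι) : (ι → ℝ) ≃ₗ[ℝ] (ι → ℝ) :=
  Module.reflection (two_bf_ee M i)

lemma refl_apply (i : ι) (v : ι → ℝ) : refl M i v = v - (2 * bf M i v) • ee i := by
  simp [refl, Module.reflection_apply]

lemma refl_refl (i : ι) (v : ι → ℝ) : refl M i (refl M i v) = v :=
  Module.involutive_reflection (two_bf_ee M i) v

/-- The Coxeter relations hold for the reflections of the geometric representation: the
composite of two of them acts as a rotation by `2π / m` on the plane they span. -/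
lemma refl_liftable : M.IsLiftable (refl M) := by
  intro i j
  rcases eq_or_ne i j with rfl | hij
  · ext1 v
    simp [refl_refl]
  rcases Nat.eq_zero_or_pos (M i j) with h0 | hpos
  · simp [h0]
  have h1 : M i j ≠ 1 := M.off_diagonal i j hij
  set m := M i j with hm
  have hg : gram M i j = -Real.cos (Real.pi / m) := rfl
  have hg' : gram M j i = -Real.cos (Real.pi / m) := by rw [gram_symm, hg]
  rcases eq_or_ne m 2 with h2 | h2
  · have hz : gram M i j = 0 := by rw [hg, h2]; simp
    have hz' : gram M j i = 0 := by rw [gram_symm, hz]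
    ext1 v
    rw [h2, pow_two]
    simp only [LinearEquiv.mul_apply, refl_apply, map_sub, map_smul, bf_ee, hz, hz', gram_self]
    simp only [LinearEquiv.coe_one, id]
    module
  have hm3 : 3 ≤ m := by omega
  have hmR : (3 : ℝ) ≤ m := by exact_mod_cast hm3
  have hmp : (0 : ℝ) < m := by linarith
  set φ : ℝ := 2 * (Real.pi / m) with hφ
  have hsin : Real.sin φ ≠ 0 := by
    apply ne_of_gt
    apply Real.sin_pos_of_pos_of_lt_pi
    · positivity
    · rw [hφ, ← mul_div_assoc, div_lt_iff₀ hmp]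
      nlinarith [Real.pi_pos]
  have ht : (2 * Real.cos φ : ℝ)
      = (2 • bf M i) (ee j) * (2 • bf M j) (ee i) - 2 := by
    simp only [LinearMap.smul_apply, bf_ee, hg, hg', hφ, Real.cos_two_mul]
    simp
    ring
  have hmφ : m * φ = 2 * Real.pi := by
    rw [hφ]; field_simp
  have hS : ∀ k : ℤ, ((Polynomial.Chebyshev.S ℝ k).eval (2 * Real.cos φ))
      = Real.sin ((k + 1) * φ) / Real.sin φ := by
    intro k
    rw [eq_div_iff hsin, Polynomial.Chebyshev.S_two_mul_real_cos]
  ext1 v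
  rw [refl, refl, Module.reflection_mul_reflection_pow_apply _ _ m v _ ht]
  simp only [hS]
  rcases Nat.even_or_odd' m with ⟨p, hp | hp⟩
  · have e1 : ((m : ℤ) - 2) / 2 = p - 1 := by omega
    have e2 : ((m : ℤ) - 1) / 2 = p - 1 := by omega
    have hs : Real.sin (p * φ) = 0 := by
      have : p * φ = Real.pi := by
        have : (m : ℝ) = 2 * p := by exact_mod_cast hp
        rw [this] at hmφ; linarith
      rw [this, Real.sin_pi]
    rw [e1, e2]
    push_cast
    simp [hs]
  · have e1 : ((m : ℤ) - 2) / 2 = p - 1 := by omega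
    have e2 : ((m : ℤ) - 1) / 2 = p := by omega
    have e3 : ((m : ℤ) - 3) / 2 = p - 1 := by omega
    have e4 : (m : ℤ) / 2 = p := by omega
    have hs : Real.sin ((p + 1) * φ) = -Real.sin (p * φ) := by
      have : (p + 1) * φ = 2 * Real.pi - p * φ := by
        have : (m : ℝ) = 2 * p + 1 := by exact_mod_cast hp
        rw [this] at hmφ; linarith
      rw [this, Real.sin_two_pi_sub]
    rw [e1, e2, e3, e4]
    push_cast
    simp [hs]
    simp [neg_div]

variable {M} {W : Type*} [Group W] (cs : CoxeterSystem M W)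

/-- The geometric representation of the Coxeter group. -/
noncomputable def geo : W →* ((ι → ℝ) ≃ₗ[ℝ] (ι → ℝ)) := cs.lift ⟨refl M, refl_liftable M⟩

lemma geo_simple (i : ι) : geo cs (cs.simple i) = refl M i := by
  simp [geo]

lemma geo_mul (a b : W) (v : ι → ℝ) : geo cs (a * b) v = geo cs a (geo cs b v) := by
  simp

lemma geo_inv_self (a : W) (v : ι → ℝ) : geo cs a⁻¹ (geo cs a v) = v := by
  rw [← geo_mul]; simp

/-- The action on `e_s` of the alternating words in `s, t` ending in `t`, in terms of the
sequence `c k = sin ((k + 1) θ) / sin θ` (or `k + 1` when `θ = 0`), characterized by its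
recursion. -/
lemma geo_alt (s t : ι) (c : ℕ → ℝ) (hc0 : c 0 = 1)
    (hc1 : c 1 = -2 * gram M s t)
    (hc : ∀ k, c (k + 2) = (-2 * gram M s t) * c (k + 1) - c k) (k : ℕ) :
    geo cs (cs.wordProd (CoxeterSystem.alternatingWord s t (k + 1))) (ee s)
      = c (k + 1) • ee (if Even k then t else s) + c k • ee (if Even k then s else t) := by
  induction k with
  | zero =>
    simp only [CoxeterSystem.alternatingWord, zero_add, List.concat_nil, cs.wordProd_singleton, geo_simple,
      refl_apply, bf_ee, hc0, hc1, gram_symm M t s]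
    simp
    module
  | succ k ih =>
    rw [CoxeterSystem.alternatingWord_succ', cs.wordProd_cons, geo_mul, ih, geo_simple, hc]
    by_cases hk : Even k
    · have hk' : ¬ Even (k + 1) := by simp [Nat.even_add_one, hk]
      simp only [hk, hk', if_true, if_false, refl_apply, map_add, map_smul, bf_ee, gram_self]
      module
    · have hk' : Even (k + 1) := by simp [Nat.even_add_one, hk]
      simp only [hk, hk', if_true, if_false, refl_apply, map_add, map_smul, bf_ee, gram_self,
        gram_symm M t s]
      module

/-- An alternating word in `s, t` ending in `t` of length less than `m(s,t)` sends `e_s` to a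
nonnegative combination of `e_s` and `e_t`. -/
lemma geo_alt_nonneg (s t : ι) (hst : s ≠ t) (k : ℕ) (hk : M s t = 0 ∨ k < M s t) :
    ∃ a b : ℝ, 0 ≤ a ∧ 0 ≤ b ∧
      geo cs (cs.wordProd (CoxeterSystem.alternatingWord s t k)) (ee s) = a • ee s + b • ee t := by
  rcases k with _ | k
  · exact ⟨1, 0, by simp, by simp, by simp [CoxeterSystem.alternatingWord]⟩
  obtain ⟨c, hc0, hc1, hc, hp⟩ : ∃ c : ℕ → ℝ, c 0 = 1 ∧ c 1 = -2 * gram M s t ∧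
      (∀ k, c (k + 2) = (-2 * gram M s t) * c (k + 1) - c k) ∧
      ∀ j ≤ k + 1, 0 ≤ c j := by
    have h1 : M s t ≠ 1 := M.off_diagonal s t hst
    rcases Nat.eq_zero_or_pos (M s t) with h0 | hpos
    · have hg : gram M s t = -1 := by simp [gram, h0]
      refine ⟨fun k => k + 1, by simp, by simp [hg]; norm_num, ?_, fun j _ => by positivity⟩
      intro k
      simp [hg]; ring
    · have hkm : k + 1 < M s t := by omega
      set m := M s t
      have hm2 : (2 : ℝ) ≤ m := by exact_mod_cast (by omega : 2 ≤ m)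
      have hmp : (0 : ℝ) < m := by linarith
      set θ := Real.pi / m with hθ
      have hg : gram M s t = -Real.cos θ := rfl
      have hθp : 0 < θ := by positivity
      have hmθ : m * θ = Real.pi := by rw [hθ]; field_simp
      have hθl : θ < Real.pi := by nlinarith
      have hs : 0 < Real.sin θ := Real.sin_pos_of_pos_of_lt_pi hθp hθl
      refine ⟨fun k => Real.sin ((k + 1) * θ) / Real.sin θ, ?_, ?_, ?_, ?_⟩
      · simp [hs.ne']
      · rw [hg]
        field_simp
        norm_num
        rw [Real.sin_two_mul]; ring
      · intro k
        rw [hg]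
        have e1 : ((k + 2 : ℕ) + 1 : ℝ) * θ = ((k + 1 : ℕ) + 1 : ℝ) * θ + θ := by push_cast; ring
        have e2 : ((k : ℝ) + 1) * θ = ((k + 1 : ℕ) + 1 : ℝ) * θ - θ := by push_cast; ring
        have key : Real.sin (((k + 2 : ℕ) + 1 : ℝ) * θ) =
            2 * Real.cos θ * Real.sin (((k + 1 : ℕ) + 1 : ℝ) * θ)
              - Real.sin (((k : ℝ) + 1) * θ) := by
          rw [e1, e2, Real.sin_add, Real.sin_sub]
          ring
        beta_reduce
        rw [key]
        ring
      · intro j hj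
        apply div_nonneg _ hs.le
        apply Real.sin_nonneg_of_nonneg_of_le_pi (by positivity)
        rw [← hmθ]
        have : ((j : ℝ) + 1) ≤ m := by exact_mod_cast (by omega : j + 1 ≤ m)
        nlinarith
  have h := geo_alt cs s t c hc0 hc1 hc k
  by_cases hk : Even k
  · refine ⟨c k, c (k + 1), hp _ (by omega), hp _ (by omega), ?_⟩
    rw [h]; simp [hk]; abel
  · refine ⟨c (k + 1), c k, hp _ (by omega), hp _ (by omega), ?_⟩
    rw [h]; simp [hk]

end Geom
end CoxAux

/-! ### Roots and Tits' positivity theorem -/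

namespace CoxAux
section Pos
variable {ι : Type*}

lemma ee_nonneg (i : ι) : 0 ≤ ee i := by
  classical
  intro j
  simp only [ee, Pi.single_apply, Pi.zero_apply]
  split_ifs <;> norm_num

lemma ee_ne_zero (i : ι) : ee i ≠ (0 : ι → ℝ) := by
  classical
  intro h
  have := congrFun h i
  simp [ee] at this

lemma ee_not_nonpos (i : ι) : ¬ ee i ≤ (0 : ι → ℝ) := by
  classical
  intro h
  have := h i
  simp [ee] at this
  linarith

variable [Fintype ι] {M : CoxeterMatrix ι} {W : Type*} [Group W]
  (cs : CoxeterSystem M W)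

/-- Tits' positivity theorem: if right multiplication by `s` increases the length of `w`, then
`w e_s` has nonnegative coordinates. Write `w = v u` with `u` an alternating word in `s, t` ending
in `t`, of maximal length among the length-additive factorizations of this kind; the statement
then holds for `v` with respect to both `s` and `t`, and `u e_s` is a nonnegative combination of
`e_s` and `e_t`. -/
theorem geo_nonneg_of_lt (n : ℕ) : ∀ (w : W) (s : ι), cs.length w = n →
    cs.length w < cs.length (w * cs.simple s) → 0 ≤ geo cs w (ee s) := by
  induction n using Nat.strong_induction_on with
  | _ n IH =>
  intro w s hn hlt
  by_cases hw : w = 1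
  · subst hw
    simpa using ee_nonneg s
  obtain ⟨t, ht⟩ := cs.exists_rightDescent_of_ne_one hw
  unfold CoxeterSystem.IsRightDescent at ht
  have hst : s ≠ t := by rintro rfl; omega
  let u : ℕ → W := fun k => cs.wordProd (CoxeterSystem.alternatingWord s t k)
  let u' : ℕ → W := fun k => cs.wordProd (CoxeterSystem.alternatingWord t s k)
  let P : ℕ → Prop := fun k => cs.length (w * (u k)⁻¹) + k = cs.length w
  have hu_succ : ∀ k, u (k + 1) = cs.simple (if Even k then t else s) * u k := by
    intro k
    simp only [u, CoxeterSystem.alternatingWord_succ', cs.wordProd_cons]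
  have hu_s : ∀ k, u k * cs.simple s = u' (k + 1) := by
    intro k
    simp only [u, u', CoxeterSystem.alternatingWord_succ, cs.wordProd_concat]
  have hstep : ∀ k, w * (u (k + 1))⁻¹ = w * (u k)⁻¹ * cs.simple (if Even k then t else s) := by
    intro k
    rw [hu_succ]; simp [mul_assoc]
  have hul : ∀ k, cs.length (u k) ≤ k := fun k => by
    simpa using cs.length_wordProd_le (CoxeterSystem.alternatingWord s t k)
  have hlow : ∀ k, cs.length w ≤ cs.length (w * (u k)⁻¹) + k := by
    intro k
    have := cs.length_mul_le (w * (u k)⁻¹) (u k)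
    rw [inv_mul_cancel_right] at this
    have := hul k
    omega
  have hdown : ∀ k, P (k + 1) → P k := by
    intro k hk
    have h1 := hlow k
    have h2 := cs.length_mul_simple (w * (u k)⁻¹) (if Even k then t else s)
    rw [← hstep] at h2
    simp only [P] at hk ⊢
    omega
  have hP1 : P 1 := by
    have : u 1 = cs.simple t := by simp [u, CoxeterSystem.alternatingWord]
    have h2 := cs.length_mul_simple w t
    simp only [P, this, CoxeterSystem.inv_simple]
    omega
  have hPle : ∀ k, P k → k ≤ n := by
    intro k hk
    simp only [P] at hk
    omega
  classical
  set k := Nat.findGreatest P n with hkdef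
  have hn1 : 1 ≤ n := hPle 1 hP1
  have hk1 : 1 ≤ k := Nat.le_findGreatest hn1 hP1
  have hPk : P k := Nat.findGreatest_spec hn1 hP1
  have hmax : ¬ P (k + 1) := fun h => by
    have := Nat.le_findGreatest (hPle _ h) h
    omega
  have hdown' : ∀ j i, P (i + j) → P i := by
    intro j
    induction j with
    | zero => intro i h; exact h
    | succ j ih => intro i h; exact ih i (hdown _ h)
  have hkm : M s t = 0 ∨ k < M s t := by
    by_contra! hcon
    obtain ⟨h0, hle⟩ := hcon
    have hPm : P (M s t) := by
      apply hdown' (k - M s t)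
      rwa [Nat.add_sub_cancel' hle]
    have hle2 : M s t + 1 ≤ M t s * 2 := by rw [M.symmetric t s]; omega
    have h1 : u (M s t) * cs.simple s
        = cs.wordProd (CoxeterSystem.alternatingWord s t (M t s * 2 - (M s t + 1))) := by
      rw [hu_s]
      exact cs.prod_alternatingWord_eq_prod_alternatingWord_sub t s _ hle2
    have h2 := cs.length_wordProd_le
      (CoxeterSystem.alternatingWord s t (M t s * 2 - (M s t + 1)))
    rw [← h1, CoxeterSystem.length_alternatingWord, M.symmetric t s] at h2
    have h3 := cs.length_mul_le (w * (u (M s t))⁻¹) (u (M s t) * cs.simple s)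
    rw [← mul_assoc, inv_mul_cancel_right] at h3
    simp only [P] at hPm
    omega
  set v := w * (u k)⁻¹ with hv
  have hvl : cs.length v < n := by
    have : cs.length v + k = cs.length w := hPk
    omega
  -- Both `s` and `t` increase the length of `v`: one by maximality of `k`, the other because
  -- `w` would otherwise have a word that is too short.
  have hnext : cs.length v < cs.length (v * cs.simple (if Even k then t else s)) := by
    have h2 := cs.length_mul_simple v (if Even k then t else s)
    have h3 : ¬ (cs.length (w * (u (k + 1))⁻¹) + (k + 1) = cs.length w) := hmax
    rw [hstep] at h3
    have : cs.length v + k = cs.length w := hPk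
    change ¬ (cs.length (v * cs.simple _) + (k + 1) = _) at h3
    omega
  have hprev : cs.length v < cs.length (v * cs.simple (if Even k then s else t)) := by
    obtain ⟨j, hj⟩ := Nat.exists_eq_add_of_le' hk1
    have hx : (if Even k then s else t) = (if Even j then t else s) := by
      rw [hj]
      by_cases h : Even j <;> simp [Nat.even_add_one, h]
    have h4 : v * cs.simple (if Even k then s else t) = w * (u j)⁻¹ := by
      rw [hv, hj, hstep, ← hj, hx, mul_assoc, cs.simple_mul_simple_self, mul_one]
    have h2 := hlow j
    rw [← h4] at h2
    have : cs.length v + k = cs.length w := hPk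
    omega
  have hs : 0 ≤ geo cs v (ee s) ∧ 0 ≤ geo cs v (ee t) := by
    by_cases hk : Even k
    · simp only [hk, if_true] at hnext hprev
      exact ⟨IH _ hvl v s rfl hprev, IH _ hvl v t rfl hnext⟩
    · simp only [hk, if_false] at hnext hprev
      exact ⟨IH _ hvl v s rfl hnext, IH _ hvl v t rfl hprev⟩
  obtain ⟨a, b, ha, hb, hab⟩ := geo_alt_nonneg cs s t hst k hkm
  have : geo cs w (ee s) = a • geo cs v (ee s) + b • geo cs v (ee t) := by
    have : w = v * u k := by simp [hv]
    rw [this, geo_mul, hab, map_add, map_smul, map_smul]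
  rw [this]
  exact add_nonneg (smul_nonneg ha hs.1) (smul_nonneg hb hs.2)

lemma geo_nonneg {w : W} {s : ι} (h : ¬ cs.IsRightDescent w s) : 0 ≤ geo cs w (ee s) := by
  refine geo_nonneg_of_lt cs _ w s rfl ?_
  rw [cs.not_isRightDescent_iff] at h
  omega

lemma geo_mul_simple_ee (w : W) (s : ι) :
    geo cs (w * cs.simple s) (ee s) = - geo cs w (ee s) := by
  rw [geo_mul, geo_simple, refl_apply, bf_ee, gram_self, ← map_neg]
  congr 1
  module

lemma geo_nonpos {w : W} {s : ι} (h : cs.IsRightDescent w s) : geo cs w (ee s) ≤ 0 := by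
  rw [cs.isRightDescent_iff_not_isRightDescent_mul] at h
  have := geo_nonneg cs h
  rw [geo_mul_simple_ee] at this
  exact neg_nonneg.mp this

lemma geo_sign (w : W) (s : ι) : 0 ≤ geo cs w (ee s) ∨ geo cs w (ee s) ≤ 0 := by
  by_cases h : cs.IsRightDescent w s
  · exact Or.inr (geo_nonpos cs h)
  · exact Or.inl (geo_nonneg cs h)

lemma eq_one_of_nonneg {w : W} (h : ∀ s, ¬ geo cs w (ee s) ≤ 0) : w = 1 := by
  by_contra hw
  obtain ⟨t, ht⟩ := cs.exists_rightDescent_of_ne_one hw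
  exact h t (geo_nonpos cs ht)

/-- The root system of the geometric representation. -/
def roots : Set (ι → ℝ) := {v | ∃ (w : W) (i : ι), v = geo cs w (ee i)}

lemma geo_mem_roots {v : ι → ℝ} (hv : v ∈ roots cs) (w : W) : geo cs w v ∈ roots cs := by
  obtain ⟨w', i, rfl⟩ := hv
  exact ⟨w * w', i, by rw [geo_mul]⟩

lemma ee_mem_roots (i : ι) : ee i ∈ roots cs := ⟨1, i, by simp⟩

lemma roots_sign {v : ι → ℝ} (hv : v ∈ roots cs) : 0 ≤ v ∨ v ≤ 0 := by
  obtain ⟨w, i, rfl⟩ := hv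
  exact geo_sign cs w i

lemma roots_ne_zero {v : ι → ℝ} (hv : v ∈ roots cs) : v ≠ 0 := by
  obtain ⟨w, i, rfl⟩ := hv
  intro h
  exact ee_ne_zero i ((geo cs w).map_eq_zero_iff.mp h)

lemma neg_mem_roots {v : ι → ℝ} (hv : v ∈ roots cs) : -v ∈ roots cs := by
  obtain ⟨w, i, rfl⟩ := hv
  exact ⟨w * cs.simple i, i, by rw [geo_mul_simple_ee]⟩

/-- The symmetric bilinear form `B` of the geometric representation. -/
noncomputable def bil (M : CoxeterMatrix ι) (v w : ι → ℝ) : ℝ := ∑ i, v i * bf M i w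

lemma bil_comm (v w : ι → ℝ) : bil M v w = bil M w v := by
  simp only [bil, bf_apply, Finset.mul_sum]
  rw [Finset.sum_comm]
  refine Finset.sum_congr rfl fun i _ => Finset.sum_congr rfl fun j _ => ?_
  rw [gram_symm M j i]; ring

lemma bil_ee_left (i : ι) (w : ι → ℝ) : bil M (ee i) w = bf M i w := by
  classical
  simp [bil, ee, Pi.single_apply]

lemma bil_sub_smul (v w x y : ι → ℝ) (a b : ℝ) : bil M (v - a • x) (w - b • y) =
    bil M v w - b * bil M v y - a * bil M x w + a * b * bil M x y := by
  simp only [bil, map_sub, map_smul, Pi.sub_apply, Pi.smul_apply, smul_eq_mul, Finset.mul_sum,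
    ← Finset.sum_sub_distrib, ← Finset.sum_add_distrib]
  refine Finset.sum_congr rfl fun i _ => ?_
  ring

lemma bil_geo (w : W) : ∀ v x : ι → ℝ, bil M (geo cs w v) (geo cs w x) = bil M v x := by
  induction w using cs.simple_induction with
  | simple i =>
    intro v x
    rw [geo_simple, refl_apply, refl_apply, bil_sub_smul, bil_comm v (ee i)]
    simp only [bil_ee_left, bf_ee, gram_self]
    ring
  | one => simp
  | mul a b ha hb =>
    intro v x
    rw [geo_mul, geo_mul, ha, hb]

lemma roots_norm {v : ι → ℝ} (hv : v ∈ roots cs) : bil M v v = 1 := by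
  obtain ⟨w, i, rfl⟩ := hv
  rw [bil_geo, bil_ee_left, bf_ee, gram_self]

/-- A simple reflection permutes the positive roots other than its own simple root. -/
lemma refl_pos {v : ι → ℝ} (hv : v ∈ roots cs) (hpos : 0 ≤ v) (i : ι) (hne : v ≠ ee i) :
    0 ≤ refl M i v := by
  classical
  have hr : refl M i v ∈ roots cs := by
    have := geo_mem_roots cs hv (cs.simple i)
    rwa [geo_simple] at this
  rcases roots_sign cs hr with h | h
  · exact h
  exfalso
  have hj : ∀ j, j ≠ i → v j = 0 := by
    intro j hj
    have h1 := h j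
    rw [refl_apply] at h1
    simp [ee, hj] at h1
    exact le_antisymm h1 (hpos j)
  have hvi : v = v i • ee i := by
    ext j
    by_cases hji : j = i
    · subst hji; simp [ee]
    · simp [ee, hji, hj j hji]
  have hn := roots_norm cs hv
  have h1 : v i * v i = 1 := by
    have : bil M v v = v i * v i := by
      conv_lhs => rw [hvi]
      have := bil_sub_smul (M := M) 0 0 (ee i) (ee i) (-(v i)) (-(v i))
      simp only [bil_ee_left, bf_ee, gram_self] at this
      simp only [bil] at this ⊢
      simpa using this
    linarith
  have h2 : v i = 1 := by nlinarith [show (0:ℝ) ≤ v i from hpos i]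
  rw [h2, one_smul] at hvi
  exact hne hvi

/-- The positive roots made negative by `w`. -/
def inv (w : W) : Set (ι → ℝ) := {v | v ∈ roots cs ∧ 0 ≤ v ∧ geo cs w v ≤ 0}

lemma inv_finite (w : W) : (inv cs w).Finite := by
  induction w using cs.simple_induction_right with
  | one =>
    convert Set.finite_empty
    ext v
    simp only [inv, Set.mem_ofPred_eq, Set.mem_empty_iff_false, iff_false]
    rintro ⟨h1, h2, h3⟩
    simp at h3
    exact roots_ne_zero cs h1 (le_antisymm h3 h2)
  | mul_simple_right w i ih =>
    apply ((ih.image (refl M i)).union (Set.finite_singleton (ee i))).subset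
    rintro v ⟨h1, h2, h3⟩
    by_cases hne : v = ee i
    · right; exact hne
    · left
      refine ⟨refl M i v, ⟨?_, refl_pos cs h1 h2 i hne, ?_⟩, refl_refl M i v⟩
      · have := geo_mem_roots cs h1 (cs.simple i)
        rwa [geo_simple] at this
      · rwa [geo_mul, geo_simple] at h3

end Pos
end CoxAux

/-! ### Finite subgroups of Coxeter groups -/

namespace CoxAux
section Tits
variable {ι : Type*} {M : CoxeterMatrix ι} {W : Type*} [Group W] (cs : CoxeterSystem M W)

/-- The visual subgroup generated by the simple reflections with index in `T`. -/
def vis (T : Set ι) : Subgroup W := Subgroup.closure (cs.simple '' T)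

lemma simple_mem_vis {T : Set ι} {t : ι} (ht : t ∈ T) : cs.simple t ∈ vis cs T :=
  Subgroup.subset_closure ⟨t, ht, rfl⟩

variable [Fintype ι]

lemma vis_coord {T : Set ι} {g : W} (hg : g ∈ vis cs T) {j : ι} (hj : j ∉ T) :
    ∀ v, geo cs g v j = v j := by
  classical
  induction hg using Subgroup.closure_induction with
  | mem x hx =>
    obtain ⟨t, ht, rfl⟩ := hx
    intro v
    have : j ≠ t := by rintro rfl; exact hj ht
    simp [geo_simple, refl_apply, ee, this]
  | one => simp
  | mul a b _ _ ha hb => intro v; rw [geo_mul, ha, hb]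
  | inv a _ ha =>
    intro v
    rw [← ha (geo cs a⁻¹ v), ← geo_mul]
    simp

lemma vis_eq_one {T : Set ι} {g : W} (hg : g ∈ vis cs T)
    (h : ∀ t ∈ T, geo cs g (ee t) = ee t) : g = 1 := by
  classical
  apply eq_one_of_nonneg cs
  intro s
  by_cases hs : s ∈ T
  · rw [h s hs]; exact ee_not_nonpos s
  · intro hle
    have h1 := hle s
    rw [vis_coord cs hg hs] at h1
    simp [ee] at h1
    linarith

lemma vis_finite {T : Set ι} {Z : Set (ι → ℝ)} (hZ : Z.Finite)
    (h : ∀ g ∈ vis cs T, ∀ t ∈ T, geo cs g (ee t) ∈ Z) : (vis cs T : Set W).Finite := by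
  apply Set.Finite.of_finite_image (f := fun g (t : T) => geo cs g (ee (t : ι)))
  · apply (Set.Finite.pi (fun _ : T => hZ)).subset
    rintro _ ⟨g, hg, rfl⟩ t _
    exact h g hg t t.2
  · intro a ha b hb hab
    have : b⁻¹ * a = 1 := by
      apply vis_eq_one cs (mul_mem (inv_mem hb) ha)
      intro t ht
      have := congrFun hab ⟨t, ht⟩
      simp only at this
      rw [geo_mul, this, geo_inv_self]
    exact (inv_mul_eq_one.mp this).symm

lemma dual_eq_sum (y : Module.Dual ℝ (ι → ℝ)) (v : ι → ℝ) : y v = ∑ i, v i * y (ee i) := by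
  classical
  conv_lhs => rw [← Finset.univ_sum_single v]
  rw [map_sum]
  refine Finset.sum_congr rfl fun i _ => ?_
  have : Pi.single i (v i) = v i • ee i := by
    rw [ee, ← Pi.single_smul]; simp
  rw [this, map_smul, smul_eq_mul]

/-- A functional that is negative on finitely many positive roots can be moved into the closed
fundamental chamber. -/
lemma exists_dominant (n : ℕ) : ∀ y : Module.Dual ℝ (ι → ℝ),
    {v | v ∈ roots cs ∧ 0 ≤ v ∧ y v < 0}.Finite →
    {v | v ∈ roots cs ∧ 0 ≤ v ∧ y v < 0}.ncard = n →
    ∃ w : W, ∀ i, 0 ≤ y (geo cs w (ee i)) := by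
  induction n using Nat.strong_induction_on with
  | _ n IH =>
  intro y hfin hn
  by_cases hall : ∀ i, 0 ≤ y (ee i)
  · exact ⟨1, by simpa using hall⟩
  push Not at hall
  obtain ⟨i, hi⟩ := hall
  have hsub : refl M i '' {v | v ∈ roots cs ∧ 0 ≤ v ∧ (y ∘ₗ (refl M i).toLinearMap) v < 0} ⊆
      {v | v ∈ roots cs ∧ 0 ≤ v ∧ y v < 0} \ {ee i} := by
    rintro _ ⟨v, ⟨h1, h2, h3⟩, rfl⟩
    have hne : v ≠ ee i := by
      rintro rfl
      simp [refl_apply, bf_ee, gram_self] at h3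
      linarith
    have h1' := geo_mem_roots cs h1 (cs.simple i)
    rw [geo_simple] at h1'
    refine ⟨⟨h1', refl_pos cs h1 h2 i hne, by simpa using h3⟩, ?_⟩
    intro h
    rw [Set.mem_singleton_iff] at h
    have : v = refl M i (ee i) := by rw [← h, refl_refl]
    rw [this] at h2
    apply ee_not_nonpos i
    have e : refl M i (ee i) = - ee i := by
      rw [refl_apply, bf_ee, gram_self]; module
    rw [e] at h2
    exact neg_nonneg.mp h2
  have hmem : ee i ∈ {v | v ∈ roots cs ∧ 0 ≤ v ∧ y v < 0} :=
    ⟨ee_mem_roots cs i, ee_nonneg i, hi⟩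
  have hfin' := (hfin.subset (hsub.trans Set.sdiff_subset)).of_finite_image
    (refl M i).injective.injOn
  have hlt : {v | v ∈ roots cs ∧ 0 ≤ v ∧ (y ∘ₗ (refl M i).toLinearMap) v < 0}.ncard < n := by
    rw [← hn, ← Set.ncard_image_of_injective _ (refl M i).injective]
    refine lt_of_le_of_lt (Set.ncard_le_ncard hsub (hfin.subset Set.sdiff_subset)) ?_
    exact Set.ncard_sdiff_singleton_lt_of_mem hmem hfin
  obtain ⟨w, hw⟩ := IH _ hlt _ hfin' rfl
  refine ⟨cs.simple i * w, fun j => ?_⟩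
  rw [geo_mul, geo_simple]
  exact hw j

/-- The stabilizer of a point of the closed fundamental chamber is generated by the simple
reflections fixing it. -/
lemma stab_dominant (y : Module.Dual ℝ (ι → ℝ)) (hy : ∀ i, 0 ≤ y (ee i)) (n : ℕ) :
    ∀ g : W, cs.length g = n → (∀ v, y (geo cs g v) = y v) →
      g ∈ vis cs {i | y (ee i) = 0} := by
  induction n using Nat.strong_induction_on with
  | _ n IH =>
  intro g hn hg
  by_cases h1 : g = 1
  · rw [h1]; exact one_mem _
  obtain ⟨s, hs⟩ := cs.exists_rightDescent_of_ne_one h1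
  have h2 := geo_nonpos cs hs
  have h3 : y (geo cs g (ee s)) ≤ 0 := by
    rw [dual_eq_sum]
    exact Finset.sum_nonpos fun i _ => mul_nonpos_of_nonpos_of_nonneg (h2 i) (hy i)
  have h4 : y (ee s) = 0 := le_antisymm (by rw [← hg]; exact h3) (hy s)
  have h5 : g * cs.simple s ∈ vis cs {i | y (ee i) = 0} := by
    refine IH (cs.length (g * cs.simple s)) (by rw [← hn]; exact hs) _ rfl ?_
    intro v
    rw [geo_mul, hg, geo_simple, refl_apply]
    simp [h4]
  have := mul_mem h5 (simple_mem_vis cs (show s ∈ {i | y (ee i) = 0} from h4))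
  simpa using this

/-- Tits: every finite subgroup of a Coxeter group is conjugate into a finite visual subgroup.
The sum over the subgroup of the translates of an interior point of the fundamental chamber is a
fixed point, and only finitely many roots are nonpositive at it. -/
theorem tits_finite (F : Subgroup W) [Finite F] :
    ∃ (w : W) (T : Set ι), (vis cs T : Set W).Finite ∧ ∀ g ∈ F, w⁻¹ * g * w ∈ vis cs T := by
  classical
  have := Fintype.ofFinite F
  let c : Module.Dual ℝ (ι → ℝ) := ∑ j, LinearMap.proj j
  have hc : ∀ v, c v = ∑ j, v j := fun v => by simp [c]
  have hcpos : ∀ v ∈ roots cs, 0 ≤ v → 0 < c v := by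
    intro v hv h0
    rw [hc]
    obtain ⟨j, hj⟩ := Function.ne_iff.mp (roots_ne_zero cs hv)
    exact Finset.sum_pos' (fun i _ => h0 i) ⟨j, Finset.mem_univ _, lt_of_le_of_ne (h0 j) (Ne.symm hj)⟩
  let x : Module.Dual ℝ (ι → ℝ) := ∑ f : F, c ∘ₗ (geo cs (f : W)).toLinearMap
  have hx : ∀ v, x v = ∑ f : F, c (geo cs (f : W) v) := fun v => by simp [x]
  have hxF : ∀ g ∈ F, ∀ v, x (geo cs g v) = x v := by
    intro g hg v
    rw [hx, hx, ← Equiv.sum_comp (Equiv.mulRight (⟨g, hg⟩ : F)) (fun f : F => c (geo cs (f : W) v))]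
    refine Finset.sum_congr rfl fun f _ => ?_
    simp
  set A : Set (ι → ℝ) := {v | v ∈ roots cs ∧ 0 ≤ v ∧ x v ≤ 0} with hA
  have hAfin : A.Finite := by
    apply (Set.finite_iUnion (fun f : F => inv_finite cs (f : W))).subset
    rintro v ⟨h1, h2, h3⟩
    rw [Set.mem_iUnion]
    by_contra! hcon
    have : 0 < x v := by
      rw [hx]
      apply Finset.sum_pos _ ⟨1, Finset.mem_univ _⟩
      intro f _
      have hr := geo_mem_roots cs h1 (f : W)
      apply hcpos _ hr
      rcases roots_sign cs hr with h | h
      · exact h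
      · exact absurd ⟨h1, h2, h⟩ (hcon f)
    linarith
  obtain ⟨w, hw⟩ := exists_dominant cs _ x
    (hAfin.subset fun v hv => ⟨hv.1, hv.2.1, le_of_lt hv.2.2⟩) rfl
  let y : Module.Dual ℝ (ι → ℝ) := x ∘ₗ (geo cs w).toLinearMap
  have hyv : ∀ v, y v = x (geo cs w v) := fun v => rfl
  have hZ : {v | v ∈ roots cs ∧ y v = 0}.Finite := by
    apply ((hAfin.union (hAfin.image (fun v => -v))).image (geo cs w⁻¹)).subset
    rintro v ⟨h1, h2⟩
    refine ⟨geo cs w v, ?_, geo_inv_self cs w v⟩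
    have hr := geo_mem_roots cs h1 w
    rcases roots_sign cs hr with h | h
    · exact Or.inl ⟨hr, h, le_of_eq h2⟩
    · refine Or.inr ⟨-geo cs w v, ⟨neg_mem_roots cs hr, neg_nonneg.mpr h, ?_⟩, neg_neg _⟩
      rw [map_neg, ← hyv, h2, neg_zero]
  refine ⟨w, {i | y (ee i) = 0}, vis_finite cs hZ ?_, ?_⟩
  · intro g hg t ht
    refine ⟨⟨g, t, rfl⟩, ?_⟩
    have hinv : ∀ v, y (geo cs g v) = y v := by
      clear ht
      induction hg using Subgroup.closure_induction with
      | mem a ha =>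
        obtain ⟨t, ht, rfl⟩ := ha
        intro v
        rw [geo_simple, refl_apply, map_sub, map_smul, show y (ee t) = 0 from ht]
        simp
      | one => simp
      | mul a b _ _ ha hb => intro v; rw [geo_mul, ha, hb]
      | inv a _ ha =>
        intro v
        rw [← ha (geo cs a⁻¹ v), ← geo_mul]
        simp
    rw [hinv]; exact ht
  · intro g hg
    apply stab_dominant cs y hw _ _ rfl
    intro v
    rw [hyv, hyv, ← geo_mul, show w * (w⁻¹ * g * w) = g * w by group, geo_mul, hxF g hg]

end Tits
end CoxAux

/-! ### Positivity of the form for finite irreducible visual subgroups -/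

namespace CoxAux

/-- Adjacency in the Coxeter diagram of `m` restricted to `B`. -/
def DAdj {α : Type*} (m : α → α → ℕ) (B : Set α) (x y : α) : Prop :=
  x ∈ B ∧ y ∈ B ∧ x ≠ y ∧ (m x y = 0 ∨ 2 < m x y)

/-- The Gram form of the diagram `m` is positive on finite families of distinct elements
of `B`. -/
def PosDefOn {α : Type*} (m : α → α → ℕ) (B : Set α) : Prop :=
  ∀ (n : ℕ) (f : Fin n → α) (a : Fin n → ℝ), Function.Injective f → (∀ p, f p ∈ B) → a ≠ 0 →
    0 < ∑ p, ∑ q, a p * a q * -Real.cos (Real.pi / m (f p) (f q))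

section PD
variable {ι : Type*} [Fintype ι] {M : CoxeterMatrix ι} {W : Type*} [Group W]
  (cs : CoxeterSystem M W)

lemma ee_self (i : ι) : ee i i = 1 := by
  classical
  simp [ee]

lemma ee_of_ne {i j : ι} (h : j ≠ i) : ee i j = 0 := by
  classical
  simp [ee, h]

/-- The form of a finite irreducible visual subgroup is positive definite: its reflections are
orthogonal for an averaged inner product, so that inner product is proportional to the form on each
simple root, and by connectedness the factor is constant. -/
theorem posDef_of_finite {B : Set ι} (hfin : (vis cs B : Set W).Finite)
    (hconn : ∀ u ∈ B, ∀ v ∈ B, Relation.ReflTransGen (DAdj (fun i j => M i j) B) u v) :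
    PosDefOn (fun i j => M i j) B := by
  classical
  intro n f a hf hfB ha
  have : Finite (vis cs B) := hfin
  have := Fintype.ofFinite (vis cs B)
  let ip : (ι → ℝ) → Module.Dual ℝ (ι → ℝ) := fun v =>
    ∑ h : vis cs B, ∑ j, geo cs (h : W) v j • (LinearMap.proj j ∘ₗ (geo cs (h : W)).toLinearMap)
  have hip : ∀ v w, ip v w = ∑ h : vis cs B, ∑ j, geo cs (h : W) v j * geo cs (h : W) w j := by
    intro v w; simp [ip]
  have hsymm : ∀ v w, ip v w = ip w v := by
    intro v w
    simp only [hip]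
    exact Finset.sum_congr rfl fun h _ => Finset.sum_congr rfl fun j _ => mul_comm _ _
  have hpos : ∀ v, v ≠ 0 → 0 < ip v v := by
    intro v hv
    rw [hip]
    apply Finset.sum_pos _ ⟨1, Finset.mem_univ _⟩
    intro h _
    have : geo cs (h : W) v ≠ 0 := fun h0 => hv ((geo cs (h : W)).map_eq_zero_iff.mp h0)
    obtain ⟨j, hj⟩ := Function.ne_iff.mp this
    apply Finset.sum_pos' (fun i _ => mul_self_nonneg _) ⟨j, Finset.mem_univ _, ?_⟩
    exact mul_self_pos.mpr hj
  have hinv : ∀ g ∈ vis cs B, ∀ v w, ip (geo cs g v) (geo cs g w) = ip v w := by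
    intro g hg v w
    rw [hip, hip, ← Equiv.sum_comp (Equiv.mulRight (⟨g, hg⟩ : vis cs B))
      (fun h : vis cs B => ∑ j, geo cs (h : W) v j * geo cs (h : W) w j)]
    refine Finset.sum_congr rfl fun h _ => ?_
    simp
  have hkey : ∀ i ∈ B, ∀ v, ip (ee i) v = bf M i v * ip (ee i) (ee i) := by
    intro i hi v
    have h1 := hinv _ (simple_mem_vis cs hi) (ee i) v
    have e : refl M i (ee i) = - ee i := by
      rw [refl_apply, bf_ee, gram_self]; module
    rw [geo_simple, hsymm, e, map_neg, hsymm, refl_apply, map_sub, map_smul, smul_eq_mul] at h1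
    linarith
  have hadj : ∀ i j, DAdj (fun i j => M i j) B i j →
      ip (ee i) (ee i) = ip (ee j) (ee j) := by
    rintro i j ⟨hi, hj, hij, hm⟩
    have h1 := hkey i hi (ee j)
    have h2 := hkey j hj (ee i)
    rw [hsymm, h2, bf_ee, bf_ee, gram_symm] at h1
    have hne : gram M i j ≠ 0 := by
      unfold gram
      apply neg_ne_zero.mpr
      apply ne_of_gt
      rcases hm with h0 | h2
      · simp [h0]
      · have h3 : (2 : ℝ) < M i j := by exact_mod_cast h2
        have hp : (0 : ℝ) < M i j := by linarith
        apply Real.cos_pos_of_mem_Ioo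
        constructor
        · have : 0 < Real.pi / M i j := by positivity
          linarith [Real.pi_pos]
        · exact div_lt_div_of_pos_left Real.pi_pos (by norm_num) h3
    exact (mul_left_cancel₀ hne h1).symm
  have hcon : ∀ i ∈ B, ∀ j ∈ B, ip (ee i) (ee i) = ip (ee j) (ee j) := by
    intro i hi j hj
    have := hconn i hi j hj
    induction this with
    | refl => rfl
    | tail _ h ih => exact (ih h.1).trans (hadj _ _ h)
  let v : ι → ℝ := ∑ p, a p • ee (f p)
  obtain ⟨p₀, hp₀⟩ := Function.ne_iff.mp ha
  have hvf : ∀ p, v (f p) = a p := by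
    intro p
    simp only [v, Finset.sum_apply, Pi.smul_apply, smul_eq_mul]
    rw [Finset.sum_eq_single p]
    · rw [ee_self, mul_one]
    · intro q _ hq
      rw [ee_of_ne (fun h => hq (hf h).symm), mul_zero]
    · simp
  have hv0 : v ≠ 0 := by
    intro h
    apply hp₀
    rw [← hvf, h]; rfl
  set c := ip (ee (f p₀)) (ee (f p₀)) with hc
  have hcpos : 0 < c := hpos _ (ee_ne_zero _)
  have hfin : ip v v = c * ∑ p, ∑ q, a p * a q * gram M (f p) (f q) := by
    have h1 : ∀ w, ip v w = ∑ p, a p * ip (ee (f p)) w := by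
      intro w
      rw [hsymm]
      simp only [v, map_sum, map_smul, smul_eq_mul]
      exact Finset.sum_congr rfl fun p _ => by rw [hsymm]
    rw [h1, Finset.mul_sum]
    refine Finset.sum_congr rfl fun p _ => ?_
    rw [hkey _ (hfB p), hcon _ (hfB p) _ (hfB p₀), ← hc]
    simp only [v, map_sum, map_smul, smul_eq_mul, bf_ee, Finset.sum_mul, Finset.mul_sum]
    refine Finset.sum_congr rfl fun q _ => ?_
    ring
  have h2 := hpos v hv0
  rw [hfin] at h2
  exact (mul_pos_iff_of_pos_left hcpos).mp h2

end PD
end CoxAux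

/-! ### Forbidden subdiagrams -/

namespace CoxAux

/-- `m` restricted to `B` is a Coxeter matrix whose diagram is connected and whose Gram form is
positive definite. -/
structure Dia {α : Type*} (m : α → α → ℕ) (B : Set α) : Prop where
  symm : ∀ x ∈ B, ∀ y ∈ B, m x y = m y x
  diag : ∀ x ∈ B, m x x = 1
  ne_one : ∀ x ∈ B, ∀ y ∈ B, x ≠ y → m x y ≠ 1
  pd : PosDefOn m B
  conn : ∀ u ∈ B, ∀ v ∈ B, Relation.ReflTransGen (DAdj m B) u v

/-- The label `m x y` is infinite (encoded by `0`) or at least `k`. -/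
def LE' {α : Type*} (m : α → α → ℕ) (k : ℕ) (x y : α) : Prop := m x y = 0 ∨ k ≤ m x y

section
variable {α : Type*} {m : α → α → ℕ} {B : Set α}

lemma cos_lb {k : ℕ} (hk : 2 ≤ k) {x y : α} (h : LE' m k x y) :
    Real.cos (Real.pi / k) ≤ Real.cos (Real.pi / m x y) := by
  rcases h with h | h
  · rw [h]; simp [Real.cos_le_one]
  · have h1 : (k : ℝ) ≤ m x y := by exact_mod_cast h
    have h0 : (2 : ℝ) ≤ k := by exact_mod_cast hk
    apply Real.cos_le_cos_of_nonneg_of_le_pi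
    · positivity
    · exact div_le_self Real.pi_pos.le (by linarith)
    · exact div_le_div_of_nonneg_left Real.pi_pos.le (by linarith) h1

lemma Dia.cos0 (hB : Dia m B) {x y : α} (hx : x ∈ B) (hy : y ∈ B) (h : x ≠ y) :
    0 ≤ Real.cos (Real.pi / m x y) := by
  have := cos_lb (m := m) (k := 2) le_rfl (x := x) (y := y)
    (by have := hB.ne_one x hx y hy h; unfold LE'; omega)
  simpa using this

lemma cos3 {x y : α} (h : LE' m 3 x y) : 1 / 2 ≤ Real.cos (Real.pi / m x y) := by
  have := cos_lb (m := m) (by norm_num) h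
  simpa using this

lemma cos4 {x y : α} (h : LE' m 4 x y) : √2 / 2 ≤ Real.cos (Real.pi / m x y) := by
  have := cos_lb (m := m) (by norm_num) h
  simpa using this

lemma cos5 {x y : α} (h : LE' m 5 x y) : 4 / 5 ≤ Real.cos (Real.pi / m x y) := by
  have := cos_lb (m := m) (by norm_num) h
  simp only [Nat.cast_ofNat, Real.cos_pi_div_five] at this
  have h5 : (11 / 5 : ℝ) ≤ √5 := Real.le_sqrt_of_sq_le (by norm_num)
  linarith

lemma cos6 {x y : α} (h : LE' m 6 x y) : √3 / 2 ≤ Real.cos (Real.pi / m x y) := by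
  have := cos_lb (m := m) (by norm_num) h
  simpa using this

/-- Positivity of the form bounds any nonnegative test vector, with labels replaced by lower
bounds. -/
lemma Dia.test (hB : Dia m B) {n : ℕ} (f : Fin n → α) (a : Fin n → ℝ) (l : Fin n → Fin n → ℝ)
    (hf : Function.Injective f) (hfB : ∀ p, f p ∈ B) (ha : a ≠ 0) (ha0 : ∀ p, 0 ≤ a p)
    (hl : ∀ p q, p < q → l p q ≤ Real.cos (Real.pi / m (f p) (f q))) :
    0 < ∑ p, ∑ q, a p * a q * (if p = q then 1 else if p < q then - l p q else - l q p) := by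
  refine (hB.pd n f a hf hfB ha).trans_le ?_
  refine Finset.sum_le_sum fun p _ => Finset.sum_le_sum fun q _ => ?_
  refine mul_le_mul_of_nonneg_left ?_ (mul_nonneg (ha0 p) (ha0 q))
  split_ifs with h1 h2
  · rw [h1, hB.diag _ (hfB q)]; simp
  · linarith [hl p q h2]
  · have h3 : q < p := by omega
    rw [hB.symm _ (hfB p) _ (hfB q)]
    linarith [hl q p h3]

lemma Dia.pd3 (hB : Dia m B) {x y z : α} (hx : x ∈ B) (hy : y ∈ B) (hz : z ∈ B)
    (hxy : x ≠ y) (hxz : x ≠ z) (hyz : y ≠ z) (a b c : ℝ) (ha : 0 < a) (hb : 0 ≤ b) (hc : 0 ≤ c)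
    {k l n : ℝ} (h1 : k ≤ Real.cos (Real.pi / m x y)) (h2 : l ≤ Real.cos (Real.pi / m x z))
    (h3 : n ≤ Real.cos (Real.pi / m y z)) :
    2 * (a * b * k + a * c * l + b * c * n) < a ^ 2 + b ^ 2 + c ^ 2 := by
  have := hB.test ![x, y, z] ![a, b, c] ![![0, k, l], ![0, 0, n], ![0, 0, 0]] ?_ ?_ ?_ ?_ ?_
  · simp [Fin.sum_univ_three] at this
    linarith
  · intro p q; fin_cases p <;> fin_cases q <;> simp [hxy, hxz, hyz, hxy.symm, hxz.symm, hyz.symm]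
  · intro p; fin_cases p <;> simp [hx, hy, hz]
  · intro h; exact ha.ne' (congrFun h 0)
  · intro p; fin_cases p <;> simp [ha.le, hb, hc]
  · intro p q; fin_cases p <;> fin_cases q <;> simp [h1, h2, h3]

lemma Dia.pd4 (hB : Dia m B) {x y z w : α} (hx : x ∈ B) (hy : y ∈ B) (hz : z ∈ B) (hw : w ∈ B)
    (hxy : x ≠ y) (hxz : x ≠ z) (hxw : x ≠ w) (hyz : y ≠ z) (hyw : y ≠ w) (hzw : z ≠ w)
    (a b c d : ℝ) (ha : 0 < a) (hb : 0 ≤ b) (hc : 0 ≤ c) (hd : 0 ≤ d)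
    {k l n r s t : ℝ} (h1 : k ≤ Real.cos (Real.pi / m x y)) (h2 : l ≤ Real.cos (Real.pi / m x z))
    (h3 : n ≤ Real.cos (Real.pi / m x w)) (h4 : r ≤ Real.cos (Real.pi / m y z))
    (h5 : s ≤ Real.cos (Real.pi / m y w)) (h6 : t ≤ Real.cos (Real.pi / m z w)) :
    2 * (a * b * k + a * c * l + a * d * n + b * c * r + b * d * s + c * d * t)
      < a ^ 2 + b ^ 2 + c ^ 2 + d ^ 2 := by
  have := hB.test ![x, y, z, w] ![a, b, c, d]
    ![![0, k, l, n], ![0, 0, r, s], ![0, 0, 0, t], ![0, 0, 0, 0]] ?_ ?_ ?_ ?_ ?_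
  · simp [Fin.sum_univ_four] at this
    linarith
  · intro p q; fin_cases p <;> fin_cases q <;> simp [hxy, hxz, hxw, hyz, hyw, hzw, hxy.symm,
      hxz.symm, hyz.symm, hxw.symm, hyw.symm, hzw.symm]
  · intro p; fin_cases p <;> simp [hx, hy, hz, hw]
  · intro h; exact ha.ne' (congrFun h 0)
  · intro p; fin_cases p <;> simp [ha.le, hb, hc, hd]
  · intro p q; fin_cases p <;> fin_cases q <;> simp [h1, h2, h3, h4, h5, h6]

/-- As `Dia.pd4` for five vertices, with the bound `0` for the pairs not involved in the
statement. -/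
lemma Dia.pd5 (hB : Dia m B) {x y z w v : α} (hx : x ∈ B) (hy : y ∈ B) (hz : z ∈ B) (hw : w ∈ B)
    (hv : v ∈ B)
    (hxy : x ≠ y) (hxz : x ≠ z) (hxw : x ≠ w) (hyz : y ≠ z) (hyw : y ≠ w) (hzw : z ≠ w)
    (hxv : v ≠ x) (hyv : v ≠ y) (hzv : v ≠ z) (hwv : v ≠ w)
    (a b c d e : ℝ) (ha : 0 < a) (hb : 0 ≤ b) (hc : 0 ≤ c) (hd : 0 ≤ d) (he : 0 ≤ e)
    {k l n r s t : ℝ} (h1 : k ≤ Real.cos (Real.pi / m x y)) (h2 : l ≤ Real.cos (Real.pi / m y z))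
    (h3 : n ≤ Real.cos (Real.pi / m z w)) (h4 : r ≤ Real.cos (Real.pi / m x v))
    (h5 : s ≤ Real.cos (Real.pi / m y v)) (h6 : t ≤ Real.cos (Real.pi / m y w)) :
    2 * (a * b * k + b * c * l + c * d * n + a * e * r + b * e * s + b * d * t)
      < a ^ 2 + b ^ 2 + c ^ 2 + d ^ 2 + e ^ 2 := by
  have := hB.test ![x, y, z, w, v] ![a, b, c, d, e]
    ![![0, k, 0, 0, r], ![0, 0, l, t, s], ![0, 0, 0, n, 0], ![0, 0, 0, 0, 0], ![0, 0, 0, 0, 0]]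
    ?_ ?_ ?_ ?_ ?_
  · simp [Fin.sum_univ_five] at this
    linarith
  · intro p q; fin_cases p <;> fin_cases q <;> simp [hxy, hxz, hxw, hyz, hyw, hzw, hxy.symm,
      hxz.symm, hyz.symm, hxw.symm, hyw.symm, hzw.symm, hxv, hyv, hzv, hwv, hxv.symm, hyv.symm,
      hzv.symm, hwv.symm]
  · intro p; fin_cases p <;> simp [hx, hy, hz, hw, hv]
  · intro h; exact ha.ne' (congrFun h 0)
  · intro p; fin_cases p <;> simp [ha.le, hb, hc, hd, he]
  · intro p q; fin_cases p <;> fin_cases q <;>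
      simp [h1, h2, h3, h4, h5, h6, hB.cos0, hx, hy, hz, hw, hv, hxz, hxw, hzv.symm, hwv.symm]


lemma s2 : √2 * √2 = (2 : ℝ) := Real.mul_self_sqrt (by norm_num)
lemma s3 : √3 * √3 = (3 : ℝ) := Real.mul_self_sqrt (by norm_num)
lemma s2p : 0 < √2 := by positivity
lemma s3p : 0 < √3 := by positivity

lemma LE'.mono {k l : ℕ} {x y : α} (h : LE' m k x y) (hl : l ≤ k) : LE' m l x y := by
  unfold LE' at *; omega

lemma Dia.le_symm (hB : Dia m B) {k : ℕ} {x y : α} (hx : x ∈ B) (hy : y ∈ B) (h : LE' m k x y) :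
    LE' m k y x := by
  unfold LE' at *; rwa [hB.symm y hy x hx]


/-- `l` is a list of distinct elements of `B`. -/
def In (B : Set α) (l : List α) : Prop := l.Nodup ∧ ∀ x ∈ l, x ∈ B

lemma In.p3 {x y z : α} (h : In B [x, y, z]) :
    (x ∈ B ∧ y ∈ B ∧ z ∈ B) ∧ x ≠ y ∧ x ≠ z ∧ y ≠ z := by
  simp only [In, List.nodup_cons, List.mem_cons, forall_eq_or_imp] at h
  grind

lemma In.p4 {x y z w : α} (h : In B [x, y, z, w]) :
    (x ∈ B ∧ y ∈ B ∧ z ∈ B ∧ w ∈ B) ∧ x ≠ y ∧ x ≠ z ∧ x ≠ w ∧ y ≠ z ∧ y ≠ w ∧ z ≠ w := by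
  simp only [In, List.nodup_cons, List.mem_cons, forall_eq_or_imp] at h
  grind

lemma In.p5 {x y z w v : α} (h : In B [x, y, z, w, v]) :
    (x ∈ B ∧ y ∈ B ∧ z ∈ B ∧ w ∈ B ∧ v ∈ B) ∧ x ≠ y ∧ x ≠ z ∧ x ≠ w ∧ y ≠ z ∧ y ≠ w ∧ z ≠ w ∧
      v ≠ x ∧ v ≠ y ∧ v ≠ z ∧ v ≠ w := by
  simp only [In, List.nodup_cons, List.mem_cons, forall_eq_or_imp] at h
  grind

section
variable {x y z w v : α}

lemma no_triangle (hB : Dia m B) (h : In B [x, y, z])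
    (h1 : LE' m 3 x y) (h2 : LE' m 3 y z) (h3 : LE' m 3 x z) : False := by
  obtain ⟨⟨hx, hy, hz⟩, hxy, hxz, hyz⟩ := h.p3
  have := hB.pd3 hx hy hz hxy hxz hyz 1 1 1 (by norm_num) (by norm_num) (by norm_num)
    (cos3 h1) (cos3 h3) (cos3 h2)
  norm_num at this

lemma no_44 (hB : Dia m B) (h : In B [x, y, z])
    (h1 : LE' m 4 x y) (h2 : LE' m 4 y z) : False := by
  obtain ⟨⟨hx, hy, hz⟩, hxy, hxz, hyz⟩ := h.p3
  have := hB.pd3 hx hy hz hxy hxz hyz 1 √2 1 (by norm_num) (by positivity) (by norm_num)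
    (cos4 h1) (hB.cos0 hx hz hxz) (cos4 h2)
  nlinarith [s2]

lemma no_36 (hB : Dia m B) (h : In B [x, y, z])
    (h1 : LE' m 3 x y) (h2 : LE' m 6 y z) : False := by
  obtain ⟨⟨hx, hy, hz⟩, hxy, hxz, hyz⟩ := h.p3
  have := hB.pd3 hx hy hz hxy hxz hyz 1 2 √3 (by norm_num) (by norm_num) (by positivity)
    (cos3 h1) (hB.cos0 hx hz hxz) (cos6 h2)
  nlinarith [s3]

lemma no_cycle4 (hB : Dia m B) (h : In B [x, y, z, w])
    (h1 : LE' m 3 x y) (h2 : LE' m 3 y z) (h3 : LE' m 3 z w) (h4 : LE' m 3 x w) : False := by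
  obtain ⟨⟨hx, hy, hz, hw⟩, hxy, hxz, hxw, hyz, hyw, hzw⟩ := h.p4
  have := hB.pd4 hx hy hz hw hxy hxz hxw hyz hyw hzw 1 1 1 1
    (by norm_num) (by norm_num) (by norm_num) (by norm_num)
    (cos3 h1) (hB.cos0 hx hz hxz) (cos3 h4) (cos3 h2) (hB.cos0 hy hw hyw) (cos3 h3)
  norm_num at this

/-- `x` is joined to `y` and `z`, and to `w` with a label at least `4`. -/
lemma no_star334 (hB : Dia m B) (h : In B [x, y, z, w])
    (h1 : LE' m 3 x y) (h2 : LE' m 3 x z) (h3 : LE' m 4 x w) : False := by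
  obtain ⟨⟨hx, hy, hz, hw⟩, hxy, hxz, hxw, hyz, hyw, hzw⟩ := h.p4
  have := hB.pd4 hx hy hz hw hxy hxz hxw hyz hyw hzw 2 1 1 √2
    (by norm_num) (by norm_num) (by norm_num) (by positivity)
    (cos3 h1) (cos3 h2) (cos4 h3) (hB.cos0 hy hz hyz) (hB.cos0 hy hw hyw) (hB.cos0 hz hw hzw)
  nlinarith [s2]

lemma no_434 (hB : Dia m B) (h : In B [x, y, z, w])
    (h1 : LE' m 4 x y) (h2 : LE' m 3 y z) (h3 : LE' m 4 z w) : False := by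
  obtain ⟨⟨hx, hy, hz, hw⟩, hxy, hxz, hxw, hyz, hyw, hzw⟩ := h.p4
  have := hB.pd4 hx hy hz hw hxy hxz hxw hyz hyw hzw 1 √2 √2 1
    (by norm_num) (by positivity) (by positivity) (by norm_num)
    (cos4 h1) (hB.cos0 hx hz hxz) (hB.cos0 hx hw hxw) (cos3 h2) (hB.cos0 hy hw hyw) (cos4 h3)
  nlinarith [s2]

lemma no_353 (hB : Dia m B) (h : In B [x, y, z, w])
    (h1 : LE' m 3 x y) (h2 : LE' m 5 y z) (h3 : LE' m 3 z w) : False := by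
  obtain ⟨⟨hx, hy, hz, hw⟩, hxy, hxz, hxw, hyz, hyw, hzw⟩ := h.p4
  have := hB.pd4 hx hy hz hw hxy hxz hxw hyz hyw hzw 1 2 2 1
    (by norm_num) (by positivity) (by positivity) (by norm_num)
    (cos3 h1) (hB.cos0 hx hz hxz) (hB.cos0 hx hw hxw) (cos5 h2) (hB.cos0 hy hw hyw) (cos3 h3)
  norm_num at this

/-- The affine diagram of type `F₄`. -/
lemma no_3433 (hB : Dia m B) (h : In B [x, y, z, w, v])
    (h1 : LE' m 3 x y) (h2 : LE' m 4 y z) (h3 : LE' m 3 z w) (h4 : LE' m 3 w v) : False := by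
  obtain ⟨⟨hx, hy, hz, hw, hv⟩, hxy, hxz, hxw, hyz, hyw, hzw, hxv, hyv, hzv, hwv⟩ := h.p5
  have := hB.pd5 hw hz hy hx hv hzw.symm hyw.symm hxw.symm hyz.symm hxz.symm hxy.symm
    hwv hzv hyv hxv 2 3 (2 * √2) √2 1
    (by norm_num) (by norm_num) (by positivity) (by positivity) (by norm_num)
    (cos3 (hB.le_symm hz hw h3)) (cos4 (hB.le_symm hy hz h2)) (cos3 (hB.le_symm hx hy h1))
    (cos3 h4) (hB.cos0 hz hv hzv.symm) (hB.cos0 hz hx hxz.symm)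
  nlinarith [s2]

/-- The affine diagram of type `C₄` in Bourbaki's notation. -/
lemma no_4334 (hB : Dia m B) (h : In B [x, y, z, w, v])
    (h1 : LE' m 4 x y) (h2 : LE' m 3 y z) (h3 : LE' m 3 z w) (h4 : LE' m 4 w v) : False := by
  obtain ⟨⟨hx, hy, hz, hw, hv⟩, hxy, hxz, hxw, hyz, hyw, hzw, hxv, hyv, hzv, hwv⟩ := h.p5
  have := hB.pd5 hw hz hy hx hv hzw.symm hyw.symm hxw.symm hyz.symm hxz.symm hxy.symm
    hwv hzv hyv hxv √2 √2 √2 1 1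
    (by positivity) (by positivity) (by positivity) (by norm_num) (by norm_num)
    (cos3 (hB.le_symm hz hw h3)) (cos3 (hB.le_symm hy hz h2)) (cos4 (hB.le_symm hx hy h1))
    (cos4 h4) (hB.cos0 hz hv hzv.symm) (hB.cos0 hz hx hxz.symm)
  nlinarith [s2]

/-- The affine diagram of type `B₄` in Bourbaki's notation: `y` is joined to `v`, `w` and `z`, and
`z` is joined to `x` with a label at least `4`. -/
lemma no_affB4 (hB : Dia m B) (h : In B [x, z, y, w, v])
    (h1 : LE' m 4 z x) (h2 : LE' m 3 y z) (h3 : LE' m 3 y w) (h4 : LE' m 3 y v) : False := by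
  obtain ⟨⟨hx, hz, hy, hw, hv⟩, hxz, hxy, hxw, hzy, hzw, hyw, hxv, hzv, hyv, hwv⟩ := h.p5
  have h6 := hB.test ![x, z, y, w, v] ![√2, 2, 2, 1, 1]
    ![![0, √2 / 2, 0, 0, 0], ![0, 0, 1 / 2, 0, 0], ![0, 0, 0, 1 / 2, 1 / 2], ![0, 0, 0, 0, 0],
      ![0, 0, 0, 0, 0]] ?_ ?_ ?_ ?_ ?_
  · simp [Fin.sum_univ_five] at h6
    nlinarith [s2]
  · intro p q; fin_cases p <;> fin_cases q <;> simp [hxy, hxz, hxw, hzy, hyw, hzw, hxy.symm,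
      hxz.symm, hzy.symm, hxw.symm, hyw.symm, hzw.symm, hxv, hyv, hzv, hwv, hxv.symm, hyv.symm,
      hzv.symm, hwv.symm]
  · intro p; fin_cases p <;> simp [hx, hy, hz, hw, hv]
  · intro h; exact two_ne_zero (congrFun h 1)
  · intro p; fin_cases p <;> simp
  · have e1 := cos4 (hB.le_symm hz hx h1)
    have e2 := cos3 (hB.le_symm hy hz h2)
    have e3 := cos3 h3
    have e4 := cos3 h4
    rw [one_div] at e2 e3 e4
    intro p q; fin_cases p <;> fin_cases q <;>
      simp [e1, e2, e3, e4, hB.cos0, hx, hy, hz, hw, hv, hxy, hxw, hzw, hzv.symm, hxv.symm, hwv.symm]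

/-- The affine diagram of type `D₄`. -/
lemma no_affD4 (hB : Dia m B) (h : In B [x, y, z, w, v])
    (h1 : LE' m 3 x y) (h2 : LE' m 3 x z) (h3 : LE' m 3 x w) (h4 : LE' m 3 x v) : False := by
  obtain ⟨⟨hx, hy, hz, hw, hv⟩, hxy, hxz, hxw, hyz, hyw, hzw, hxv, hyv, hzv, hwv⟩ := h.p5
  have h6 := hB.test ![x, y, z, w, v] ![2, 1, 1, 1, 1]
    ![![0, 1 / 2, 1 / 2, 1 / 2, 1 / 2], 0, 0, 0, 0] ?_ ?_ ?_ ?_ ?_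
  · simp [Fin.sum_univ_five] at h6
    norm_num at h6
  · intro p q; fin_cases p <;> fin_cases q <;> simp [hxy, hxz, hxw, hyz, hyw, hzw, hxy.symm,
      hxz.symm, hyz.symm, hxw.symm, hyw.symm, hzw.symm, hxv, hyv, hzv, hwv, hxv.symm, hyv.symm,
      hzv.symm, hwv.symm]
  · intro p; fin_cases p <;> simp [hx, hy, hz, hw, hv]
  · intro h; exact two_ne_zero (congrFun h 0)
  · intro p; fin_cases p <;> simp
  · have e1 := cos3 h1
    have e2 := cos3 h2
    have e3 := cos3 h3
    have e4 := cos3 h4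
    rw [one_div] at e1 e2 e3 e4
    intro p q; fin_cases p <;> fin_cases q <;>
      simp [e1, e2, e3, e4, hB.cos0, hx, hy, hz, hw, hv, hyz, hyw, hzw, hzv.symm, hyv.symm, hwv.symm]

end
end
end CoxAux

/-! ### Shapes of positive definite connected diagrams -/

namespace CoxAux
section
variable {α : Type*} {m : α → α → ℕ} {B : Set α}

lemma Dia.dichotomy (hB : Dia m B) {x y : α} (hx : x ∈ B) (hy : y ∈ B) (h : x ≠ y) :
    m x y = 2 ∨ LE' m 3 x y := by
  have := hB.ne_one x hx y hy h
  unfold LE'; omega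

lemma Dia.two_symm (hB : Dia m B) {x y : α} (hx : x ∈ B) (hy : y ∈ B) {k : ℕ} (h : m x y = k) :
    m y x = k := by rw [hB.symm y hy x hx, h]

/-- A connected diagram can be grown by an adjacent vertex from any proper nonempty part. -/
lemma Dia.grow (hB : Dia m B) {U : Set α} (hU : U ⊆ B) {u₀ : α} (hu : u₀ ∈ U) (hne : ¬ B ⊆ U) :
    ∃ u ∈ U, ∃ x ∈ B, x ∉ U ∧ LE' m 3 x u := by
  obtain ⟨v, hvB, hvU⟩ := Set.not_subset.mp hne
  by_contra! hcon
  have key : ∀ w, Relation.ReflTransGen (DAdj m B) u₀ w → w ∈ U := by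
    intro w hw
    induction hw with
    | refl => exact hu
    | tail _ h ih =>
      by_contra hc
      refine hcon _ ih _ h.2.1 hc (hB.le_symm h.1 h.2.1 ?_)
      have := h.2.2.2
      unfold LE'; omega
  exact hvU (key v (hB.conn _ (hU hu) _ hvB))

lemma not_subset_of_ncard {T : Set α} {n : ℕ} (hT : T.Finite) (hn : T.ncard ≤ n)
    (h : n < B.ncard) : ¬ B ⊆ T := fun hs =>
  absurd (Set.ncard_le_ncard hs hT) (by omega)

lemma ncard_pair_le (a b : α) : ({a, b} : Set α).ncard ≤ 2 := by
  classical
  have := Set.ncard_insert_le a {b}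
  simp at this; exact this

lemma ncard_triple_le (a b c : α) : ({a, b, c} : Set α).ncard ≤ 3 := by
  have := Set.ncard_insert_le a {b, c}
  have := ncard_pair_le b c
  omega

lemma ncard_quad_le (a b c d : α) : ({a, b, c, d} : Set α).ncard ≤ 4 := by
  have := Set.ncard_insert_le a {b, c, d}
  have := ncard_triple_le b c d
  omega

/-- A chain `a - b - c` with labels `3` and `3`, `4` or `5`. -/
structure Path3 (m : α → α → ℕ) (B : Set α) (a b c : α) : Prop where
  nd : In B [a, b, c]
  ab : m a b = 3
  ac : m a c = 2
  bc : m b c = 3 ∨ m b c = 4 ∨ m b c = 5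

/-- A chain `a - b - c - d` of finite type. -/
structure Path4 (m : α → α → ℕ) (B : Set α) (a b c d : α) : Prop where
  nd : In B [a, b, c, d]
  ab : m a b = 3
  ac : m a c = 2
  ad : m a d = 2
  bd : m b d = 2
  lab : (m b c = 3 ∧ (m c d = 3 ∨ m c d = 4 ∨ m c d = 5)) ∨ (m b c = 4 ∧ m c d = 3)

/-- The diagram of type `D₄` with centre `b`. -/
structure Star4 (m : α → α → ℕ) (B : Set α) (b a c d : α) : Prop where
  nd : In B [b, a, c, d]
  ba : m b a = 3
  bc : m b c = 3
  bd : m b d = 3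
  ac : m a c = 2
  ad : m a d = 2
  cd : m c d = 2

lemma Dia.chain3 (hB : Dia m B) {x y z : α} (h : In B [x, y, z]) (h1 : LE' m 3 x y)
    (h2 : LE' m 3 y z) : Path3 m B x y z ∨ Path3 m B z y x := by
  have h' : In B [z, y, x] := by
    simp only [In, List.nodup_cons, List.mem_cons] at h ⊢; grind
  obtain ⟨⟨hx, hy, hz⟩, hxy, hxz, hyz⟩ := h.p3
  have e0 : m x z = 2 := (hB.dichotomy hx hz hxz).resolve_right (no_triangle hB h h1 h2)
  have e1 := no_44 hB h
  have e2 := no_36 hB h h1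
  have e3 := no_36 hB h' (hB.le_symm hy hz h2)
  have := hB.symm x hx y hy
  have := hB.symm y hy z hz
  have := hB.symm x hx z hz
  unfold LE' at *
  by_cases h3 : m x y = 3
  · left
    exact ⟨h, h3, e0, by grind⟩
  · right
    refine ⟨h', by grind, by grind, by grind⟩

/-- In a finite irreducible diagram of rank at least `3`, two adjacent vertices lie on a chain of three
vertices. -/
lemma Dia.shape3 (hB : Dia m B) (hn : 3 ≤ B.ncard) {s t : α} (hs : s ∈ B) (ht : t ∈ B)
    (hst : s ≠ t) (h : LE' m 3 s t) : ∃ a b c, Path3 m B a b c ∧ s ∈ [a, b, c] ∧ t ∈ [a, b, c] := by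
  obtain ⟨u, hu, x, hx, hxU, hxu⟩ := hB.grow (U := {s, t}) (by grind) (u₀ := s) (by simp)
    (not_subset_of_ncard (Set.toFinite _) (ncard_pair_le s t) hn)
  have hxs : x ≠ s := by grind
  have hxt : x ≠ t := by grind
  rcases hu with rfl | rfl
  · have hI : In B [x, u, t] := by
      simp only [In, List.nodup_cons, List.mem_cons]; grind
    rcases hB.chain3 hI hxu h with h | h
    · exact ⟨_, _, _, h, by simp, by simp⟩
    · exact ⟨_, _, _, h, by simp, by simp⟩
  · have hI : In B [x, u, s] := by
      simp only [In, List.nodup_cons, List.mem_cons]; grind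
    rcases hB.chain3 hI hxu (hB.le_symm hs ht h) with h | h
    · exact ⟨_, _, _, h, by simp, by simp⟩
    · exact ⟨_, _, _, h, by simp, by simp⟩

lemma Dia.exists_adj (hB : Dia m B) (hn : 2 ≤ B.ncard) :
    ∃ s ∈ B, ∃ t ∈ B, s ≠ t ∧ LE' m 3 s t := by
  obtain ⟨u₀, hu₀⟩ : B.Nonempty := by
    rw [Set.nonempty_iff_ne_empty]; rintro rfl; simp at hn
  obtain ⟨u, hu, x, hx, hxU, hxu⟩ := hB.grow (U := {u₀}) (by grind) (u₀ := u₀) (by simp)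
    (not_subset_of_ncard (Set.toFinite _) (Set.ncard_singleton _).le hn)
  exact ⟨x, hx, u, by grind, by grind, hxu⟩

/-- In a finite irreducible diagram of rank at least `4`, two adjacent vertices lie on a chain of finite
type with four vertices or on a diagram of type `D₄`. -/
lemma Dia.shape4 (hB : Dia m B) (hn : 4 ≤ B.ncard) {s t : α} (hs : s ∈ B) (ht : t ∈ B)
    (hst : s ≠ t) (h : LE' m 3 s t) : ∃ a b c d, (Path4 m B a b c d ∨ Star4 m B a b c d) ∧
      s ∈ [a, b, c, d] ∧ t ∈ [a, b, c, d] := by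
  obtain ⟨a, b, c, hp, hs', ht'⟩ := hB.shape3 (by omega) hs ht hst h
  obtain ⟨⟨ha, hb, hc⟩, hab, hac, hbc⟩ := hp.nd.p3
  obtain ⟨u, hu, d, hd, hdU, hdu⟩ := hB.grow (U := {a, b, c}) (by grind) (u₀ := a) (by simp)
    (not_subset_of_ncard (Set.toFinite _) (ncard_triple_le a b c) hn)
  have hda : d ≠ a := by grind
  have hdb : d ≠ b := by grind
  have hdc : d ≠ c := by grind
  have q1 : LE' m 3 a b := by unfold LE'; have := hp.ab; omega
  have q2 : LE' m 3 b c := by unfold LE'; have := hp.bc; omega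
  have nI : ∀ l : List α, l.Nodup → (∀ x ∈ l, x ∈ [a, b, c, d]) → In B l := by
    intro l h1 h2
    exact ⟨h1, fun x hx => by have := h2 x hx; simp at this; grind⟩
  have i1 : In B [d, b, a] := nI _ (by grind) (by grind)
  have i2 : In B [d, b, c] := nI _ (by grind) (by grind)
  have i3 : In B [d, a, b] := nI _ (by grind) (by grind)
  have i4 : In B [d, a, b, c] := nI _ (by grind) (by grind)
  have i5 : In B [a, b, c, d] := nI _ (by grind) (by grind)
  have i6 : In B [c, b, a, d] := nI _ (by grind) (by grind)
  have i7 : In B [b, a, c, d] := nI _ (by grind) (by grind)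
  have i8 : In B [b, a, d, c] := nI _ (by grind) (by grind)
  have i9 : In B [b, c, d] := nI _ (by grind) (by grind)
  have i10 : In B [b, a, d] := nI _ (by grind) (by grind)
  have sab := hB.symm a ha b hb
  have sac := hB.symm a ha c hc
  have sad := hB.symm a ha d hd
  have sbc := hB.symm b hb c hc
  have sbd := hB.symm b hb d hd
  have scd := hB.symm c hc d hd
  have q1' := hB.le_symm ha hb q1
  have q2' := hB.le_symm hb hc q2
  have hdu' := hB.le_symm hd (by grind) hdu
  have t1 := hp.ab
  have t2 := hp.ac
  have t3 := hp.bc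
  have dab := hB.dichotomy hd hb hdb
  have dac := hB.dichotomy hd hc hdc
  rcases hu with rfl | rfl | rfl
  · have f1 : m d b = 2 := (hB.dichotomy hd hb hdb).resolve_right
      (no_triangle hB i3 hdu q1)
    have f2 : m d c = 2 := (hB.dichotomy hd hc hdc).resolve_right
      (no_cycle4 hB i4 hdu q1 q2)
    have f3 := no_434 hB i4
    have f4 := no_36 hB i10 q1'
    unfold LE' at *
    by_cases h3 : m b c = 3
    · refine ⟨c, b, u, d, Or.inl ⟨i6, ?_, ?_, ?_, ?_, ?_⟩, ?_, ?_⟩ <;> grind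
    · refine ⟨d, u, b, c, Or.inl ⟨i4, ?_, ?_, ?_, ?_, ?_⟩, ?_, ?_⟩ <;> grind
  · have f1 : m d a = 2 := (hB.dichotomy hd ha hda).resolve_right
      (no_triangle hB i1 hdu q1')
    have f2 : m d c = 2 := (hB.dichotomy hd hc hdc).resolve_right
      (no_triangle hB i2 hdu q2)
    have f3 := no_star334 hB i7 q1' q2
    have f4 := no_star334 hB i8 q1' hdu'
    unfold LE' at *
    refine ⟨u, a, c, d, Or.inr ⟨i7, ?_, ?_, ?_, ?_, ?_, ?_⟩, ?_, ?_⟩ <;> grind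
  · have f1 : m b d = 2 := (hB.dichotomy hb hd hdb.symm).resolve_right
      (no_triangle hB i9 q2 hdu')
    have f2 : m a d = 2 := (hB.dichotomy ha hd hda.symm).resolve_right
      (no_cycle4 hB i5 q1 q2 hdu')
    have f3 := no_353 hB i5 q1
    have f4 := no_44 hB i9
    have f5 := no_36 hB i9 q2
    unfold LE' at *
    refine ⟨a, b, u, d, Or.inl ⟨i5, ?_, ?_, ?_, ?_, ?_⟩, ?_, ?_⟩ <;> grind


/-- A chain `a - b - c - d` with all labels `3`. -/
structure A4 (m : α → α → ℕ) (B : Set α) (a b c d : α) : Prop where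
  nd : In B [a, b, c, d]
  ab : m a b = 3
  bc : m b c = 3
  cd : m c d = 3
  ac : m a c = 2
  ad : m a d = 2
  bd : m b d = 2

/-- Some chain of type `A₄` contains `s` and `t`, or contains one of them and a vertex commuting
with the other. -/
def Reach (m : α → α → ℕ) (B : Set α) (s t : α) : Prop :=
  ∃ w x y z, A4 m B w x y z ∧ ((s ∈ [w, x, y, z] ∧ t ∈ [w, x, y, z]) ∨
    (s ∈ [w, x, y, z] ∧ ∃ u ∈ [w, x, y, z], m u t = 2) ∨
    (t ∈ [w, x, y, z] ∧ ∃ u ∈ [w, x, y, z], m u s = 2))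

lemma reach_of {s t w x y z d : α} (h : A4 m B w x y z) (hd : m x d = 2)
    (hs : s ∈ [x, y, z, d]) (ht : t ∈ [x, y, z, d]) (hst : s ≠ t) : Reach m B s t := by
  refine ⟨w, x, y, z, h, ?_⟩
  simp only [List.mem_cons, List.not_mem_nil, or_false] at *
  grind

/-- Two vertices of a diagram of type `D₄` satisfy `Reach` once a further vertex `e` is adjacent to one of its
leaves. -/
lemma Dia.star_ext (hB : Dia m B) {b a c d e : α} (h : Star4 m B b a c d) (he : e ∈ B)
    (heb : e ≠ b) (hea : e ≠ a) (hec : e ≠ c) (hed : e ≠ d) (h1 : LE' m 3 e a) {s t : α}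
    (hs : s ∈ [b, a, c, d]) (ht : t ∈ [b, a, c, d]) (hst : s ≠ t) : Reach m B s t := by
  obtain ⟨⟨hb, ha, hc, hd⟩, hba, hbc, hbd, hac, had, hcd⟩ := h.nd.p4
  have nI : ∀ l : List α, l.Nodup → (∀ x ∈ l, x ∈ [a, b, c, d, e]) → In B l := by
    intro l h1 h2
    exact ⟨h1, fun x hx => by have := h2 x hx; simp at this; grind⟩
  have t1 := h.ba
  have t2 := h.bc
  have t3 := h.bd
  have t4 := h.ac
  have t5 := h.ad
  have sab := hB.symm a ha b hb
  have sae := hB.symm e he a ha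
  have f1 : m e b = 2 := (hB.dichotomy he hb heb).resolve_right
    (no_triangle hB (nI [e, a, b] (by grind) (by grind)) h1 (by unfold LE'; omega))
  have f2 : m e c = 2 := (hB.dichotomy he hc hec).resolve_right
    (no_cycle4 hB (nI [e, a, b, c] (by grind) (by grind)) h1
      (by unfold LE'; omega) (by unfold LE'; omega))
  have f3 : ¬ LE' m 4 a e := fun h4 => no_affB4 hB
    (nI [e, a, b, c, d] (by grind) (by grind)) h4
      (by unfold LE'; omega) (by unfold LE'; omega) (by unfold LE'; omega)
  refine reach_of (w := e) (x := a) (y := b) (z := c) (d := d)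
    ⟨nI _ (by grind) (by grind), ?_, by omega, t2, f1, f2, t4⟩ t5 ?_ ?_ hst
  · unfold LE' at *; omega
  · grind
  · grind

/-- Two vertices of a chain of four vertices satisfy `Reach` once a further vertex `e` is adjacent to the chain. -/
lemma Dia.chain_ext (hB : Dia m B) {a b c d e : α} (h : Path4 m B a b c d) (he : e ∈ B)
    (hea : e ≠ a) (heb : e ≠ b) (hec : e ≠ c) (hed : e ≠ d)
    (hu : ∃ u ∈ [a, b, c, d], LE' m 3 e u) {s t : α}
    (hs : s ∈ [a, b, c, d]) (ht : t ∈ [a, b, c, d]) (hst : s ≠ t) : Reach m B s t := by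
  obtain ⟨⟨ha, hb, hc, hd⟩, hab, hac, had, hbc, hbd, hcd⟩ := h.nd.p4
  have nI : ∀ l : List α, l.Nodup → (∀ x ∈ l, x ∈ [a, b, c, d, e]) → In B l := by
    intro l h1 h2
    exact ⟨h1, fun x hx => by have := h2 x hx; simp at this; grind⟩
  have sab := hB.symm a ha b hb
  have sbc := hB.symm b hb c hc
  have scd := hB.symm c hc d hd
  have sae := hB.symm a ha e he
  have sbe := hB.symm b hb e he
  have sce := hB.symm c hc e he
  have sde := hB.symm d hd e he
  have t1 := h.ab
  have t2 := h.ac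
  have t3 := h.ad
  have t4 := h.bd
  rcases h.lab with ⟨l1, l2⟩ | ⟨l1, l2⟩
  · by_cases l3 : m c d = 3
    · exact ⟨a, b, c, d, ⟨h.nd, h.ab, l1, l3, h.ac, h.ad, h.bd⟩, Or.inl ⟨hs, ht⟩⟩
    · obtain ⟨u, hu, h1⟩ := hu
      simp only [List.mem_cons, List.not_mem_nil, or_false] at hu
      rcases hu with rfl | rfl | rfl | rfl
      · have f1 : m e b = 2 := (hB.dichotomy he hb heb).resolve_right
          (no_triangle hB (nI [e, u, b] (by grind) (by grind)) h1 (by unfold LE'; omega))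
        have f2 : m e c = 2 := (hB.dichotomy he hc hec).resolve_right
          (no_cycle4 hB (nI [e, u, b, c] (by grind) (by grind)) h1
            (by unfold LE'; omega) (by unfold LE'; omega))
        have f3 : ¬ LE' m 4 e u := fun h4 => no_4334 hB
          (nI [e, u, b, c, d] (by grind) (by grind)) h4
            (by unfold LE'; omega) (by unfold LE'; omega) (by unfold LE'; omega)
        refine reach_of (w := e) (x := u) (y := b) (z := c) (d := d)
          ⟨nI _ (by grind) (by grind), ?_, t1, l1, f1, f2, t2⟩ t3 hs ht hst
        unfold LE' at *; omega
      · exact (no_affB4 hB (nI [d, c, u, a, e] (by grind) (by grind)) (by unfold LE'; omega)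
          (by unfold LE'; omega) (by unfold LE'; omega) (by unfold LE' at *; omega)).elim
      · exact (no_star334 hB (nI [u, b, e, d] (by grind) (by grind)) (by unfold LE'; omega)
          (by unfold LE' at *; omega) (by unfold LE'; omega)).elim
      · exact (no_3433 hB (nI [e, u, c, b, a] (by grind) (by grind)) h1
          (by unfold LE'; omega) (by unfold LE' at *; omega) (by unfold LE'; omega)).elim
  · exfalso
    obtain ⟨u, hu, h1⟩ := hu
    simp only [List.mem_cons, List.not_mem_nil, or_false] at hu
    rcases hu with rfl | rfl | rfl | rfl
    · exact no_3433 hB (nI [d, c, b, u, e] (by grind) (by grind)) (by unfold LE'; omega)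
          (by unfold LE'; omega) (by unfold LE' at *; omega) (by unfold LE' at *; omega)
    · exact no_star334 hB (nI [u, a, e, c] (by grind) (by grind)) (by unfold LE'; omega)
          (by unfold LE' at *; omega) (by unfold LE'; omega)
    · exact no_star334 hB (nI [u, d, e, b] (by grind) (by grind)) (by unfold LE'; omega)
          (by unfold LE' at *; omega) (by unfold LE'; omega)
    · exact no_3433 hB (nI [a, b, c, u, e] (by grind) (by grind)) (by unfold LE'; omega)
          (by unfold LE'; omega) (by unfold LE' at *; omega) (by unfold LE' at *; omega)

/-- In a finite irreducible diagram of rank at least `5`, two adjacent vertices either lie on a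
chain of type `A₄`, or one of them does and the other commutes with some vertex of that chain. -/
lemma Dia.rank5 (hB : Dia m B) (hn : 5 ≤ B.ncard) {s t : α} (hs : s ∈ B) (ht : t ∈ B)
    (hst : s ≠ t) (h : LE' m 3 s t) : Reach m B s t := by
  obtain ⟨a, b, c, d, hp, hs', ht'⟩ := hB.shape4 (by omega) hs ht hst h
  have hI : In B [a, b, c, d] := by rcases hp with hp | hp <;> exact hp.nd
  obtain ⟨⟨ha, hb, hc, hd⟩, hab, hac, had, hbc, hbd, hcd⟩ := hI.p4
  obtain ⟨u, hu, e, he, heU, heu⟩ := hB.grow (U := {a, b, c, d}) (by grind) (u₀ := a) (by simp)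
    (not_subset_of_ncard (Set.toFinite _) (ncard_quad_le a b c d) hn)
  have hea : e ≠ a := by grind
  have heb : e ≠ b := by grind
  have hec : e ≠ c := by grind
  have hed : e ≠ d := by grind
  rcases hp with hp | hp
  · exact hB.chain_ext hp he hea heb hec hed ⟨u, by simpa using hu, heu⟩ hs' ht' hst
  · have t1 := hp.ba
    have t2 := hp.bc
    have t3 := hp.bd
    have s1 := hB.symm b hb c hc
    have s2 := hB.symm b hb d hd
    have s3 := hB.symm c hc d hd
    rcases hu with rfl | rfl | rfl | rfl
    · refine (no_affD4 hB (x := u) (y := b) (z := c) (w := d) (v := e) ⟨?_, ?_⟩ ?_ ?_ ?_ ?_).elim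
      · grind
      · grind
      · unfold LE'; omega
      · unfold LE'; omega
      · unfold LE'; omega
      · exact hB.le_symm he ha heu
    · exact hB.star_ext hp he hea heb hec hed heu hs' ht' hst
    · refine hB.star_ext (b := a) (a := u) (c := b) (d := d) ⟨?_, ?_, ?_, ?_, ?_, ?_, ?_⟩ he hea hec
        heb hed heu (by grind) (by grind) hst
      · exact ⟨by grind, by grind⟩
      · exact t2
      · exact t1
      · exact t3
      · rw [← s1]; exact hp.ac
      · exact hp.cd
      · exact hp.ad
    · refine hB.star_ext (b := a) (a := u) (c := b) (d := c) ⟨?_, ?_, ?_, ?_, ?_, ?_, ?_⟩ he hea hed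
        heb hec heu (by grind) (by grind) hst
      · exact ⟨by grind, by grind⟩
      · exact t3
      · exact t1
      · exact t2
      · rw [← s2]; exact hp.ad
      · rw [← s3]; exact hp.cd
      · exact hp.ac

end
end CoxAux

/-! ### Generalised dihedral quotients -/

namespace CoxAux

/-- `C` exhibits the group as a generalised dihedral group: `C` is abelian of index at most two
and the elements outside of `C` are involutions. -/
structure GD {D : Type*} [Group D] (C : Subgroup D) : Prop where
  comm : ∀ x ∈ C, ∀ y ∈ C, x * y = y * x
  inv : ∀ x, x ∉ C → x * x = 1
  mul : ∀ x, x ∉ C → ∀ y, y ∉ C → x * y ∈ C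

/-- `g` is trivial in every generalised dihedral quotient of `G`. -/
def IsDK {G : Type*} [Group G] (g : G) : Prop :=
  ∀ (N : Subgroup G) [N.Normal] (C : Subgroup (G ⧸ N)), GD C → (QuotientGroup.mk g : G ⧸ N) = 1

section
variable {D G H : Type*} [Group D] [Group G] [Group H]

lemma GD.comap {C : Subgroup D} (hC : GD C) (f : G →* D) (hf : Function.Injective f) :
    GD (C.comap f) where
  comm x hx y hy := hf (by simpa using hC.comm _ hx _ hy)
  inv x hx := hf (by simpa using hC.inv _ hx)
  mul x hx y hy := by
    rw [Subgroup.mem_comap, map_mul]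
    exact hC.mul _ hx _ hy

lemma IsDK.hom {g : G} (hg : IsDK g) (f : G →* D) {C : Subgroup D} (hC : GD C) : f g = 1 := by
  have := hg f.ker _ (hC.comap (QuotientGroup.kerLift f) (QuotientGroup.kerLift_injective f))
  have h2 := congrArg (QuotientGroup.kerLift f) this
  simpa using h2

lemma IsDK.map {g : G} (hg : IsDK g) (f : G →* H) : IsDK (f g) := by
  intro N _ C hC
  exact hg.hom ((QuotientGroup.mk' N).comp f) hC

/-- The elements which die in every generalised dihedral quotient. -/
def dk (G : Type*) [Group G] : Subgroup G where
  carrier := {g | IsDK g}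
  one_mem' := fun N _ C _ => rfl
  mul_mem' := fun {a b} ha hb N _ C hC => by
    rw [QuotientGroup.mk_mul, ha N C hC, hb N C hC, one_mul]
  inv_mem' := fun {a} ha N _ C hC => by
    rw [QuotientGroup.mk_inv, ha N C hC, inv_one]

lemma mem_dk {g : G} : g ∈ dk G ↔ IsDK g := Iff.rfl

instance : (dk G).Normal where
  conj_mem := fun n hn g N _ C hC => by
    rw [QuotientGroup.mk_mul, QuotientGroup.mk_mul, (hn : IsDK n) N C hC, mul_one,
      ← QuotientGroup.mk_mul, mul_inv_cancel, QuotientGroup.mk_one]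

variable {C : Subgroup D} {a b c : D}

lemma inv_of (ha : a * a = 1) : a⁻¹ = a := inv_eq_of_mul_eq_one_left ha

/-- If two involutions have a product of odd order and one lies in `C`, they coincide. -/
lemma GD.odd (hC : GD C) (ha : a * a = 1) (hb : b * b = 1) {n : ℕ}
    (hab : (a * b) ^ (2 * n + 1) = 1) (h : a ∈ C ∨ b ∈ C) : a = b := by
  have key : (a * b) * (a * b) = 1 → a = b := by
    intro h1
    rw [pow_succ, pow_mul, pow_two, h1, one_pow, one_mul] at hab
    rw [← inv_of hb]
    exact eq_inv_of_mul_eq_one_left hab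
  apply key
  have hcase : (a ∈ C ∧ b ∈ C) ∨ a * b ∉ C := by
    by_cases h1 : a ∈ C
    · by_cases h2 : b ∈ C
      · exact Or.inl ⟨h1, h2⟩
      · exact Or.inr fun h3 => h2 ((Subgroup.mul_mem_cancel_left C h1).mp h3)
    · right
      intro h3
      exact h1 ((Subgroup.mul_mem_cancel_right C (h.resolve_left h1)).mp h3)
  rcases hcase with ⟨h1, h2⟩ | h1
  · rw [mul_assoc, ← mul_assoc b a b, ← hC.comm a h1 b h2, mul_assoc, hb, mul_one, ha]
  · exact hC.inv _ h1

lemma comm_of_sq (ha : a * a = 1) (hb : b * b = 1) (h : (a * b) ^ 2 = 1) : a * b = b * a := by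
  rw [pow_two] at h
  have := eq_inv_of_mul_eq_one_left h
  rw [mul_inv_rev, inv_of ha, inv_of hb] at this
  exact this

lemma sq_of_comm (ha : a * a = 1) (hb : b * b = 1) (h : a * b = b * a) : (a * b) ^ 2 = 1 := by
  rw [pow_two]; nth_rw 2 [h]
  rw [mul_assoc, ← mul_assoc b b a, hb, one_mul, ha]

lemma mid_eq (hb : b * b = 1) : (a * b) * (b * c) = a * c := by
  rw [mul_assoc, ← mul_assoc b b c, hb, one_mul]

/-- Two commuting involutions joined by a chain of odd labels coincide. -/
lemma GD.chain_odd (hC : GD C) (ha : a * a = 1) (hb : b * b = 1) (hc : c * c = 1) {n k : ℕ}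
    (hab : (a * b) ^ (2 * n + 1) = 1) (hbc : (b * c) ^ (2 * k + 1) = 1) (hac : (a * c) ^ 2 = 1) :
    a = c := by
  by_cases h1 : a ∈ C
  · have h2 := hC.odd ha hb hab (Or.inl h1)
    have h3 := hC.odd hb hc hbc (Or.inl (h2 ▸ h1))
    rw [h2, h3]
  by_cases h2 : b ∈ C
  · rw [hC.odd ha hb hab (Or.inr h2), hC.odd hb hc hbc (Or.inl h2)]
  by_cases h3 : c ∈ C
  · have h4 := hC.odd hb hc hbc (Or.inr h3)
    exact absurd (h4 ▸ h3) h2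
  have hcm : Commute (a * b) (b * c) := hC.comm _ (hC.mul _ h1 _ h2) _ (hC.mul _ h2 _ h3)
  have e : (a * c) ^ ((2 * n + 1) * (2 * k + 1)) = 1 := by
    rw [← mid_eq (a := a) (c := c) hb, hcm.mul_pow, pow_mul, hab, mul_comm (2 * n + 1),
      pow_mul, hbc, one_pow, one_pow, one_mul]
  have e2 : (2 * n + 1) * (2 * k + 1) = 2 * (2 * n * k + n + k) + 1 := by ring
  rw [e2, pow_succ, pow_mul, hac, one_pow, one_mul] at e
  rw [← inv_of hc]
  exact eq_inv_of_mul_eq_one_left e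

/-- In a generalised dihedral group the generators of a chain with labels `3` and `4` satisfy
`(b * c) ^ 2 = 1`. -/
lemma GD.c3 (hC : GD C) (ha : a * a = 1) (hb : b * b = 1)
    (hab : (a * b) ^ 3 = 1) (hbc : (b * c) ^ 4 = 1) (hac : (a * c) ^ 2 = 1) :
    (b * c) ^ 2 = 1 := by
  by_cases h12 : a ∈ C ∨ b ∈ C
  · rw [← hC.odd ha hb (n := 1) hab h12, hac]
  rw [not_or] at h12
  by_cases h3 : c ∈ C
  · rw [pow_two]
    exact hC.inv _ fun h => h12.2 ((Subgroup.mul_mem_cancel_right C h3).mp h)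
  have hcm : Commute (a * b) (b * c) := hC.comm _ (hC.mul _ h12.1 _ h12.2) _ (hC.mul _ h12.2 _ h3)
  have e : (a * c) ^ 6 = (b * c) ^ 6 := by
    rw [← mid_eq (a := a) (c := c) hb, hcm.mul_pow, show 6 = 3 * 2 by rfl, pow_mul (a * b), hab,
      one_pow, one_mul]
  rw [show 6 = 2 * 3 by rfl, pow_mul, hac, one_pow, show 2 * 3 = 4 + 2 by rfl, pow_add, hbc,
    one_mul] at e
  exact e.symm

end

section
variable {α D : Type*} [Group D] {m : α → α → ℕ} {B : Set α} {C : Subgroup D} {β : α → D}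

/-- `β` satisfies the Coxeter relations of the diagram `m` restricted to `B`. -/
structure Cox (m : α → α → ℕ) (B : Set α) (β : α → D) : Prop where
  sq : ∀ u ∈ B, β u * β u = 1
  rel : ∀ u ∈ B, ∀ v ∈ B, (β u * β v) ^ m u v = 1

lemma Cox.pow (h : Cox m B β) {u v : α} (hu : u ∈ B) (hv : v ∈ B) {k : ℕ} (hk : m u v = k) :
    (β u * β v) ^ k = 1 := hk ▸ h.rel u hu v hv

lemma Cox.eq33 (h : Cox m B β) (hC : GD C) {u p v : α} (hu : u ∈ B) (hp : p ∈ B) (hv : v ∈ B)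
    (h1 : m u p = 3) (h2 : m p v = 3) (h3 : m u v = 2) : β u = β v :=
  hC.chain_odd (n := 1) (k := 1) (h.sq u hu) (h.sq p hp) (h.sq v hv) (h.pow hu hp h1)
    (h.pow hp hv h2) (h.pow hu hv h3)

lemma Cox.eq35 (h : Cox m B β) (hC : GD C) {u p v : α} (hu : u ∈ B) (hp : p ∈ B) (hv : v ∈ B)
    (h1 : m u p = 3) (h2 : m p v = 5) (h3 : m u v = 2) : β u = β v :=
  hC.chain_odd (n := 1) (k := 2) (h.sq u hu) (h.sq p hp) (h.sq v hv) (h.pow hu hp h1)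
    (h.pow hp hv h2) (h.pow hu hv h3)

lemma Cox.comm2 (h : Cox m B β) {u v : α} (hu : u ∈ B) (hv : v ∈ B) (h3 : m u v = 2) :
    β u * β v = β v * β u :=
  comm_of_sq (h.sq u hu) (h.sq v hv) (h.pow hu hv h3)

lemma Cox.eq3 (h : Cox m B β) {u v : α} (hu : u ∈ B) (hv : v ∈ B) (h3 : m u v = 3)
    (hc : β u * β v = β v * β u) : β u = β v := by
  have h1 := h.rel u hu v hv
  rw [h3, pow_succ, sq_of_comm (h.sq u hu) (h.sq v hv) hc, one_mul] at h1
  rw [← inv_of (h.sq v hv)]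
  exact eq_inv_of_mul_eq_one_left h1

lemma Cox.sq4 (h : Cox m B β) (hC : GD C) {u p v : α} (hu : u ∈ B) (hp : p ∈ B) (hv : v ∈ B)
    (h1 : m u p = 3) (h2 : m p v = 4) (h3 : m u v = 2) : (β p * β v) ^ 2 = 1 :=
  hC.c3 (h.sq u hu) (h.sq p hp) (h.pow hu hp h1)
    (h.pow hp hv h2) (h.pow hu hv h3)

lemma Cox.a4 (h : Cox m B β) (hC : GD C) {a b c d : α} (hp : A4 m B a b c d) :
    ∀ u ∈ [a, b, c, d], β u = β a := by
  obtain ⟨⟨ha, hb, hc, hd⟩, hab, hac, had, hbc, hbd, hcd⟩ := hp.nd.p4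
  have e1 : β a = β c := h.eq33 hC ha hb hc hp.ab hp.bc hp.ac
  have e2 : β b = β d := h.eq33 hC hb hc hd hp.bc hp.cd hp.bd
  have e3 : β a * β b = β b * β a := by rw [e2]; exact h.comm2 ha hd hp.ad
  have e4 := h.eq3 ha hb hp.ab e3
  intro u hu
  simp only [List.mem_cons, List.not_mem_nil, or_false] at hu
  rcases hu with rfl | rfl | rfl | rfl
  · rfl
  · exact e4.symm
  · exact e1.symm
  · rw [← e2, e4]

lemma Cox.reach (h : Cox m B β) (hC : GD C) {s t : α} (hs : s ∈ B) (ht : t ∈ B)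
    (hr : Reach m B s t) : β s * β t = β t * β s := by
  obtain ⟨w, x, y, z, hA, hr⟩ := hr
  have he := h.a4 hC hA
  rcases hr with ⟨h1, h2⟩ | ⟨h1, u, h2, h3⟩ | ⟨h1, u, h2, h3⟩
  · rw [he s h1, he t h2]
  · rw [he s h1, ← he u h2]
    exact h.comm2 (hA.nd.2 u h2) ht h3
  · rw [he t h1, ← he u h2]
    exact (h.comm2 (hA.nd.2 u h2) hs h3).symm

/-- In rank at least `5` the generators have commuting images in any generalised dihedral group. -/
lemma Cox.comm5 (h : Cox m B β) (hC : GD C) (hB : Dia m B) (hn : 5 ≤ B.ncard) :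
    ∀ s ∈ B, ∀ t ∈ B, β s * β t = β t * β s := by
  intro s hs t ht
  by_cases hst : s = t
  · rw [hst]
  rcases hB.dichotomy hs ht hst with h2 | h3
  · exact h.comm2 hs ht h2
  · exact h.reach hC hs ht (hB.rank5 hn hs ht hst h3)

end
end CoxAux

/-! ### Elements of `N(⟨B⟩)` die in generalised dihedral quotients -/

namespace CoxAux

section
variable {W : Type*} [Group W] {m : W → W → ℕ} {B : Set W}

lemma hasType_vert {n : ℕ} {std : Fin n → Fin n → ℕ} (h : HasType m B std) :
    ∃ v : Fin n → W, (∀ i, v i ∈ B) ∧ (∀ i j, m (v i) (v j) = std i j) ∧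
      (∀ u ∈ B, ∃ i, u = v i) ∧ Function.Injective v := by
  obtain ⟨e, he⟩ := h
  refine ⟨fun i => (e.symm i : W), fun i => (e.symm i).2, fun i j => ?_, fun u hu => ?_, ?_⟩
  · rw [he]; simp
  · exact ⟨e ⟨u, hu⟩, by simp⟩
  · intro i j hij
    exact e.symm.injective (Subtype.ext hij)

lemma comm_h3 {D : Type*} [Group D] {C : Subgroup D} (hC : GD C) {β : W → D} (h : Cox m B β)
    (ht : HasType m B g3Mat) : ∀ s ∈ B, ∀ t ∈ B, β s * β t = β t * β s := by
  obtain ⟨v, hv, hm, hall, -⟩ := hasType_vert ht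
  have e1 := h.eq35 hC (hv 0) (hv 1) (hv 2) (hm 0 1) (hm 1 2) (hm 0 2)
  have e2 : (β (v 0) * β (v 1)) ^ 3 = 1 := h.pow (hv 0) (hv 1) (hm 0 1)
  have e3 : (β (v 1) * β (v 2)) ^ 5 = 1 := h.pow (hv 1) (hv 2) (hm 1 2)
  have e4 : β (v 0) = β (v 1) := by
    rw [← e1] at e3
    have e5 : (β (v 0) * β (v 1)) ^ 5 = 1 := by
      have : β (v 0) * β (v 1) = (β (v 1) * β (v 0))⁻¹ := by
        rw [mul_inv_rev, inv_of (h.sq _ (hv 0)), inv_of (h.sq _ (hv 1))]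
      rw [this, inv_pow, e3, inv_one]
    have e6 : β (v 0) * β (v 1) = 1 := by
      have : (β (v 0) * β (v 1)) ^ (3 * 2) = (β (v 0) * β (v 1)) ^ 5 * (β (v 0) * β (v 1)) := by
        rw [← pow_succ]
      rw [pow_mul, e2, e5, one_pow, one_mul] at this
      exact this.symm
    rw [← inv_of (h.sq _ (hv 1))]
    exact eq_inv_of_mul_eq_one_left e6
  have e : ∀ s ∈ B, β s = β (v 0) := by
    intro s hs
    obtain ⟨i, rfl⟩ := hall s hs
    fin_cases i
    · rfl
    · exact e4.symm
    · exact e1.symm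
  intro s hs t ht
  rw [e s hs, e t ht]

lemma comm_a4 {D : Type*} [Group D] {C : Subgroup D} (hC : GD C) {β : W → D} (h : Cox m B β)
    (ht : HasType m B (aMat 4)) : ∀ s ∈ B, ∀ t ∈ B, β s * β t = β t * β s := by
  obtain ⟨v, hv, hm, hall, hinj⟩ := hasType_vert ht
  have hA : A4 m B (v 0) (v 1) (v 2) (v 3) := by
    refine ⟨⟨?_, by simp [hv]⟩, hm 0 1, hm 1 2, hm 2 3, hm 0 2, hm 0 3, hm 1 3⟩
    simp [hinj.eq_iff]
  have e : ∀ s ∈ B, β s = β (v 0) := by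
    intro s hs
    obtain ⟨i, rfl⟩ := hall s hs
    apply h.a4 hC hA
    fin_cases i <;> simp
  intro s hs t ht
  rw [e s hs, e t ht]

lemma comm_g4 {D : Type*} [Group D] {C : Subgroup D} (hC : GD C) {β : W → D} (h : Cox m B β)
    (ht : HasType m B g4Mat) : ∀ s ∈ B, ∀ t ∈ B, β s * β t = β t * β s := by
  obtain ⟨v, hv, hm, hall, -⟩ := hasType_vert ht
  have e1 := h.eq33 hC (hv 0) (hv 1) (hv 2) (hm 0 1) (hm 1 2) (hm 0 2)
  have e2 := h.eq35 hC (hv 1) (hv 2) (hv 3) (hm 1 2) (hm 2 3) (hm 1 3)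
  have e3 : β (v 0) = β (v 1) := by
    refine h.eq3 (hv 0) (hv 1) (hm 0 1) ?_
    rw [e2]
    exact h.comm2 (hv 0) (hv 3) (hm 0 3)
  have e : ∀ s ∈ B, β s = β (v 0) := by
    intro s hs
    obtain ⟨i, rfl⟩ := hall s hs
    fin_cases i
    · rfl
    · exact e3.symm
    · exact e1.symm
    · exact (e3.trans e2).symm
  intro s hs t ht
  rw [e s hs, e t ht]

lemma prod_one_of_eq {D : Type*} [Group D] {β : W → D} (h : Cox m B β) {u v : W} (hv : v ∈ B)
    (e : β u = β v) : β u * β v = 1 := by rw [e]; exact h.sq v hv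

/-- A homomorphism from `⟨B⟩` under which the generators commute kills the commutator subgroup. -/
lemma comm_kill {D : Type*} [Group D] (f : Subgroup.closure B →* D)
    (hcomm : ∀ s, ∀ hs : s ∈ B, ∀ t, ∀ ht : t ∈ B,
      f ⟨s, Subgroup.subset_closure hs⟩ * f ⟨t, Subgroup.subset_closure ht⟩ =
      f ⟨t, Subgroup.subset_closure ht⟩ * f ⟨s, Subgroup.subset_closure hs⟩)
    (y : Subgroup.closure B)
    (hy : (y : W) ∈ (⁅Subgroup.closure B, Subgroup.closure B⁆ : Subgroup W)) : f y = 1 := by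
  have key : ∀ a b : Subgroup.closure B, f a * f b = f b * f a := by
    rintro ⟨a, ha⟩ ⟨b, hb⟩
    induction ha, hb using Subgroup.closure_induction₂ with
    | mem x y hx hy => exact hcomm x hx y hy
    | one_left x hx =>
      have : (⟨1, one_mem _⟩ : Subgroup.closure B) = 1 := rfl
      rw [this]; simp
    | one_right x hx =>
      have : (⟨1, one_mem _⟩ : Subgroup.closure B) = 1 := rfl
      rw [this]; simp
    | mul_left x y z hx hy hz h1 h2 =>
      have : (⟨x * y, mul_mem hx hy⟩ : Subgroup.closure B) = ⟨x, hx⟩ * ⟨y, hy⟩ := rfl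
      rw [this, map_mul, mul_assoc, h2, ← mul_assoc, h1, mul_assoc]
    | mul_right x y z hx hy hz h1 h2 =>
      have : (⟨x * y, mul_mem hx hy⟩ : Subgroup.closure B) = ⟨x, hx⟩ * ⟨y, hy⟩ := rfl
      rw [this, map_mul, ← mul_assoc, h1, mul_assoc, h2, mul_assoc]
    | inv_left x y hx hy h1 =>
      have : (⟨x⁻¹, inv_mem hx⟩ : Subgroup.closure B) = (⟨x, hx⟩)⁻¹ := rfl
      rw [this, map_inv]
      exact (Commute.inv_left (h1 : Commute _ _))
    | inv_right x y hx hy h1 =>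
      have : (⟨y⁻¹, inv_mem hy⟩ : Subgroup.closure B) = (⟨y, hy⟩)⁻¹ := rfl
      rw [this, map_inv]
      exact (Commute.inv_right (h1 : Commute _ _))
  rw [← Subgroup.map_subtype_commutator] at hy
  obtain ⟨z, hz, hzy⟩ := hy
  have : z = y := Subtype.ext hzy
  subst this
  have hle : commutator (Subgroup.closure B) ≤ f.ker := by
    rw [commutator_def, Subgroup.commutator_le]
    intro a _ b _
    rw [MonoidHom.mem_ker, map_commutatorElement, commutatorElement_eq_one_iff_mul_comm]
    exact key a b
  exact hle hz

/-- The elements of `N(⟨B⟩)` die in every generalised dihedral quotient of `⟨B⟩`. -/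
theorem nb_le_dk (hB : Dia m B) (hcox : Cox m B (id : W → W)) {x : W}
    (hx : x ∈ NBSubgroup m B) : ∃ h : x ∈ Subgroup.closure B, IsDK (⟨x, h⟩ : Subgroup.closure B) := by
  classical
  obtain ⟨y, hy, rfl⟩ := hx
  refine ⟨y.2, ?_⟩
  suffices hle : Subgroup.normalClosure ((fun x : Subgroup.closure B => (x : W)) ⁻¹' genSetNB m B) ≤
      dk (Subgroup.closure B) from hle hy
  apply Subgroup.normalClosure_le_normal
  intro z hz N _ C hC
  let β : W → Subgroup.closure B ⧸ N := fun u =>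
    if h : u ∈ B then QuotientGroup.mk ⟨u, Subgroup.subset_closure h⟩ else 1
  have hβ : ∀ u (h : u ∈ B), β u = QuotientGroup.mk ⟨u, Subgroup.subset_closure h⟩ :=
    fun u h => dif_pos h
  have hc : Cox m B β := by
    constructor
    · intro u hu
      rw [hβ u hu, ← QuotientGroup.mk_mul, ← QuotientGroup.mk_one]
      congr 1
      exact Subtype.ext (hcox.sq u hu)
    · intro u hu v hv
      rw [hβ u hu, hβ v hv, ← QuotientGroup.mk_mul, ← QuotientGroup.mk_pow, ← QuotientGroup.mk_one]
      congr 1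
      exact Subtype.ext (hcox.rel u hu v hv)
  have hmul : ∀ u (hu : u ∈ B) v (hv : v ∈ B), (z : W) = u * v →
      (QuotientGroup.mk z : Subgroup.closure B ⧸ N) = β u * β v := by
    intro u hu v hv h
    rw [hβ u hu, hβ v hv, ← QuotientGroup.mk_mul]
    congr 1
    exact Subtype.ext h
  have hsqr : ∀ u (hu : u ∈ B) v (hv : v ∈ B), (z : W) = (u * v) ^ 2 →
      (QuotientGroup.mk z : Subgroup.closure B ⧸ N) = (β u * β v) ^ 2 := by
    intro u hu v hv h
    rw [hβ u hu, hβ v hv, ← QuotientGroup.mk_mul, ← QuotientGroup.mk_pow]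
    congr 1
    exact Subtype.ext h
  have hswap : ∀ u (hu : u ∈ B) v (hv : v ∈ B), (β v * β u) ^ 2 = 1 → (β u * β v) ^ 2 = 1 := by
    intro u hu v hv h
    exact sq_of_comm (hc.sq u hu) (hc.sq v hv) (comm_of_sq (hc.sq v hv) (hc.sq u hu) h).symm
  rcases hz with ⟨ht, hz⟩ | ⟨ht, u, hu, v, hv, hne, h2, hz⟩ | ⟨ht, u, hu, v, hv, hne, h2, hz⟩ |
    ⟨ht, u, hu, v, hv, h4, hz⟩ | ⟨ht, u, hu, p, hp, v, hv, q, hq, h1, h2, h3, h4, hz⟩ |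
    ⟨ht, u, hu, v, hv, h4, hz⟩
  · refine comm_kill (QuotientGroup.mk' N) (fun s hs t ht' => ?_) z hz
    simp only [QuotientGroup.mk'_apply]
    rw [← hβ s hs, ← hβ t ht']
    rcases ht with ht | ht | ht | ht
    · exact hc.comm5 hC hB ht s hs t ht'
    · exact comm_a4 hC hc ht s hs t ht'
    · exact comm_h3 hC hc ht s hs t ht'
    · exact comm_g4 hC hc ht s hs t ht'
  · rw [hmul u hu v hv hz]
    apply prod_one_of_eq hc hv
    obtain ⟨w, hw, hm, hall, -⟩ := hasType_vert ht
    obtain ⟨i, rfl⟩ := hall u hu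
    obtain ⟨j, rfl⟩ := hall v hv
    have hdec : ∀ i j : Fin 3, i ≠ j → aMat 3 i j = 2 → aMat 3 i 1 = 3 ∧ aMat 3 1 j = 3 := by decide
    obtain ⟨d1, d2⟩ := hdec i j (fun h => hne (by rw [h])) (by rw [← hm]; exact h2)
    exact hc.eq33 hC hu (hw 1) hv (by rw [hm, d1]) (by rw [hm, d2]) h2
  · rw [hmul u hu v hv hz]
    apply prod_one_of_eq hc hv
    obtain ⟨w, hw, hm, hall, -⟩ := hasType_vert ht
    obtain ⟨i, rfl⟩ := hall u hu
    obtain ⟨j, rfl⟩ := hall v hv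
    have hdec : ∀ i j : Fin 4, i ≠ j → bMat 4 i j = 2 → bMat 4 i 1 = 3 ∧ bMat 4 1 j = 3 := by decide
    obtain ⟨d1, d2⟩ := hdec i j (fun h => hne (by rw [h])) (by rw [← hm]; exact h2)
    exact hc.eq33 hC hu (hw 1) hv (by rw [hm, d1]) (by rw [hm, d2]) h2
  · rw [hsqr u hu v hv hz]
    obtain ⟨w, hw, hm, hall, -⟩ := hasType_vert ht
    obtain ⟨i, rfl⟩ := hall u hu
    obtain ⟨j, rfl⟩ := hall v hv
    have hdec : ∀ i j : Fin 3, cMat 3 i j = 4 → ∃ k, (cMat 3 k i = 3 ∧ cMat 3 k j = 2) ∨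
      (cMat 3 k j = 3 ∧ cMat 3 k i = 2 ∧ cMat 3 j i = 4) := by decide
    obtain ⟨k, ⟨d1, d2⟩ | ⟨d1, d2, d3⟩⟩ := hdec i j (by rw [← hm]; exact h4)
    · exact hc.sq4 hC (hw k) hu hv (by rw [hm, d1]) h4 (by rw [hm, d2])
    · exact hswap _ hu _ hv (hc.sq4 hC (hw k) hv hu (by rw [hm, d1]) (by rw [hm, d3])
        (by rw [hm, d2]))
  · rw [hmul u hu v hv hz]
    apply prod_one_of_eq hc hv
    exact hc.eq33 hC hu hp hv h1 h2 h4
  · rw [hsqr u hu v hv hz]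
    obtain ⟨w, hw, hm, hall, -⟩ := hasType_vert ht
    obtain ⟨i, rfl⟩ := hall u hu
    obtain ⟨j, rfl⟩ := hall v hv
    have hdec : ∀ i j : Fin 4, f4Mat i j = 4 → ∃ k, f4Mat k i = 3 ∧ f4Mat k j = 2 := by decide
    obtain ⟨k, d1, d2⟩ := hdec i j (by rw [← hm]; exact h4)
    exact hc.sq4 hC (hw k) hu hv (by rw [hm, d1]) h4 (by rw [hm, d2])

end
end CoxAux

/-! ### Groups generated by few involutions -/

namespace CoxAux

section
variable {D : Type*} [Group D] {a b c x : D} {S : Set D}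

lemma mem_zpowers_or (ha : a * a = 1) (hb : b * b = 1) (hx : x ∈ Subgroup.closure {a, b}) :
    x ∈ Subgroup.zpowers (a * b) ∨ a * x ∈ Subgroup.zpowers (a * b) := by
  have ea : ∀ y, y ∈ Subgroup.zpowers (a * b) ∨ a * y ∈ Subgroup.zpowers (a * b) →
      a * y ∈ Subgroup.zpowers (a * b) ∨ a * (a * y) ∈ Subgroup.zpowers (a * b) := by
    rintro y (h | h)
    · right; rwa [← mul_assoc, ha, one_mul]
    · exact Or.inl h
  have eb : ∀ y, y ∈ Subgroup.zpowers (a * b) ∨ a * y ∈ Subgroup.zpowers (a * b) →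
      b * y ∈ Subgroup.zpowers (a * b) ∨ a * (b * y) ∈ Subgroup.zpowers (a * b) := by
    rintro y (h | h)
    · right; rw [← mul_assoc]; exact mul_mem (Subgroup.mem_zpowers _) h
    · left
      have : b * y = (a * b)⁻¹ * (a * y) := by
        rw [mul_inv_rev, inv_of ha, inv_of hb, mid_eq ha]
      rw [this]
      exact mul_mem (inv_mem (Subgroup.mem_zpowers _)) h
  induction hx using Subgroup.closure_induction_left with
  | one => exact Or.inl (one_mem _)
  | mul_left u hu y hy ih =>
    rcases hu with rfl | rfl
    · exact ea _ ih
    · exact eb _ ih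
  | inv_mul_cancel u hu y hy ih =>
    rcases hu with rfl | rfl
    · rw [inv_of ha]; exact ea _ ih
    · rw [inv_of hb]; exact eb _ ih

lemma conj_zpowers (ha : a * a = 1) (hb : b * b = 1) {r : D}
    (hr : r ∈ Subgroup.zpowers (a * b)) : a * r * a = r⁻¹ := by
  obtain ⟨k, rfl⟩ := hr
  have h1 : a * (a * b) * a⁻¹ = (a * b)⁻¹ := by
    rw [mul_inv_rev, inv_of ha, inv_of hb, ← mul_assoc, ha, one_mul]
  have h2 := conj_zpow (a := a) (b := a * b) (i := k)
  rw [h1, inv_of ha] at h2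
  rw [inv_zpow] at h2
  exact h2.symm

/-- A group generated by two involutions is generalised dihedral, with respect to the powers of their
product. -/
lemma GD.of_two (ha : a * a = 1) (hb : b * b = 1) (h : Subgroup.closure {a, b} = ⊤) :
    GD (Subgroup.zpowers (a * b)) := by
  have hall : ∀ y, y ∉ Subgroup.zpowers (a * b) → a * y ∈ Subgroup.zpowers (a * b) := fun y hy =>
    (mem_zpowers_or ha hb (x := y) (by rw [h]; trivial)).resolve_left hy
  have key : ∀ y, y ∉ Subgroup.zpowers (a * b) → y * a = (a * y)⁻¹ := by
    intro y hy
    rw [← conj_zpowers ha hb (hall y hy), ← mul_assoc, ha, one_mul]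
  refine ⟨?_, ?_, ?_⟩
  · rintro _ ⟨k, rfl⟩ _ ⟨l, rfl⟩
    exact (Commute.zpow_zpow_self (a * b) k l)
  · intro y hy
    rw [← mid_eq (a := y) (c := y) ha, key y hy, inv_mul_cancel]
  · intro y hy z hz
    rw [← mid_eq (a := y) (c := z) ha, key y hy]
    exact mul_mem (inv_mem (hall y hy)) (hall z hz)

lemma GD.of_comm (h : ∀ x y : D, x * y = y * x) : GD (⊤ : Subgroup D) :=
  ⟨fun x _ y _ => h x y, fun _ hx => absurd trivial hx, fun _ hx => absurd trivial hx⟩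

lemma IsDK.eq_one {C : Subgroup D} (hx : IsDK x) (hC : GD C) : x = 1 :=
  hx.hom (MonoidHom.id D) hC

lemma closure_top {T : Set D} (hS : Subgroup.closure S = ⊤) (h : ∀ s ∈ S, s ∈ Subgroup.closure T) :
    Subgroup.closure T = ⊤ := by
  rw [← top_le_iff, ← hS, Subgroup.closure_le]
  exact h

lemma IsDK.two (hx : IsDK x) (ha : a * a = 1) (hb : b * b = 1) (hS : Subgroup.closure S = ⊤)
    (h : ∀ s ∈ S, s ∈ Subgroup.closure {a, b}) : x = 1 :=
  hx.eq_one (GD.of_two ha hb (closure_top hS h))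

/-- A product of the symmetric group `⟨a, b⟩` and a central involution `c` is dihedral, generated
by the involutions `a` and `b * c`. -/
lemma IsDK.three (hx : IsDK x) (ha : a * a = 1) (hb : b * b = 1) (hc : c * c = 1)
    (hab : (a * b) ^ 3 = 1) (hac : a * c = c * a) (hbc : b * c = c * b)
    (hS : Subgroup.closure S = ⊤) (h : ∀ s ∈ S, s ∈ Subgroup.closure {a, b, c}) : x = 1 := by
  have hbc2 : (b * c) * (b * c) = 1 := by rw [← pow_two]; exact sq_of_comm hb hc hbc
  refine hx.two ha hbc2 (closure_top hS h) ?_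
  have m1 : a ∈ Subgroup.closure {a, b * c} := Subgroup.subset_closure (by simp)
  have m2 : b * c ∈ Subgroup.closure {a, b * c} := Subgroup.subset_closure (by simp)
  have m3 : c ∈ Subgroup.closure {a, b * c} := by
    have : (a * (b * c)) ^ 3 = c := by
      have hcm : Commute (a * b) c := Commute.mul_left hac hbc
      rw [← mul_assoc, hcm.mul_pow, hab, one_mul, pow_succ, pow_two, hc, one_mul]
    have h3 := pow_mem (mul_mem m1 m2) 3
    rwa [this] at h3
  rintro s (rfl | rfl | rfl)
  · exact m1
  · exact (Subgroup.mul_mem_cancel_right _ m3).mp m2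
  · exact m3

lemma central_of_s3 (ha : a * a = 1) (hb : b * b = 1) (hab : (a * b) ^ 3 = 1)
    (hx : x ∈ Subgroup.closure {a, b}) (hxa : a * x = x * a) (hxb : b * x = x * b) :
    x = 1 ∨ (x = a ∧ a = b) := by
  have key : ∀ r ∈ Subgroup.zpowers (a * b), a * r = r * a → r = 1 := by
    intro r hr hc
    have h1 := conj_zpowers ha hb hr
    rw [hc, mul_assoc, ha, mul_one] at h1
    have h3 : r ^ 3 = 1 := by
      obtain ⟨k, rfl⟩ := hr
      simp only
      rw [← zpow_natCast, ← zpow_mul, mul_comm, zpow_mul, zpow_natCast, hab, one_zpow]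
    rw [pow_succ, pow_two] at h3
    nth_rw 1 [h1] at h3
    simpa using h3
  rcases mem_zpowers_or ha hb hx with h | h
  · exact Or.inl (key x h hxa)
  · right
    have h1 := key _ h (by rw [hxa, ← mul_assoc, hxa])
    have h2 : x = a := by
      rw [← inv_of ha]; exact (inv_eq_of_mul_eq_one_right h1).symm
    refine ⟨h2, ?_⟩
    rw [h2] at hxb
    have h4 := sq_of_comm ha hb hxb.symm
    rw [pow_succ, h4, one_mul] at hab
    rw [← inv_of hb]
    exact eq_inv_of_mul_eq_one_left hab

lemma normal_of_comm {T : Set D} (hS : Subgroup.closure S = ⊤)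
    (h : ∀ s ∈ S, s ∈ T ∨ ∀ t ∈ T, s * t = t * s) : (Subgroup.closure T).Normal := by
  constructor
  have hle : (⊤ : Subgroup D) ≤ Subgroup.closure T ⊔ Subgroup.centralizer T := by
    rw [← hS, Subgroup.closure_le]
    intro s hs
    rcases h s hs with h | h
    · exact Subgroup.mem_sup_left (Subgroup.subset_closure h)
    · exact Subgroup.mem_sup_right (Subgroup.mem_centralizer_iff.mpr fun t ht => (h t ht).symm)
  have hle2 : Subgroup.closure T ⊔ Subgroup.centralizer T ≤
      Subgroup.normalizer (Subgroup.closure T : Set D) := by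
    apply sup_le Subgroup.le_normalizer
    rw [← Subgroup.centralizer_closure]
    exact Subgroup.centralizer_le_normalizer _
  exact (Subgroup.normalizer_eq_top_iff.mp (top_le_iff.mp (hle.trans hle2))).conj_mem

/-- If all generators other than the involutions `c`, `d` lie in the normal subgroup `⟨T⟩`, then so
does every element dying in generalised dihedral quotients. -/
lemma IsDK.mem_closure {T : Set D} {d : D} (hx : IsDK x) (hc : c * c = 1) (hd : d * d = 1)
    (hS : Subgroup.closure S = ⊤) (hn : (Subgroup.closure T).Normal)
    (h : ∀ s ∈ S, s ∈ T ∨ s = c ∨ s = d) : x ∈ Subgroup.closure T := by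
  let f := QuotientGroup.mk' (Subgroup.closure T)
  have hf : Function.Surjective f := QuotientGroup.mk'_surjective _
  have h1 : f x = 1 := by
    refine (hx.map f).two (a := f c) (b := f d) (S := f '' S) ?_ ?_ ?_ ?_
    · rw [← map_mul, hc, map_one]
    · rw [← map_mul, hd, map_one]
    · rw [← MonoidHom.map_closure, hS, ← MonoidHom.range_eq_map, MonoidHom.range_eq_top.mpr hf]
    · rintro _ ⟨s, hs, rfl⟩
      rcases h s hs with h | rfl | rfl
      · have : f s = 1 := (QuotientGroup.eq_one_iff s).mpr (Subgroup.subset_closure h)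
        rw [this]
        exact one_mem _
      · exact Subgroup.subset_closure (by simp)
      · exact Subgroup.subset_closure (by simp)
  exact (QuotientGroup.eq_one_iff x).mp h1

lemma comm_of_closure (hS : Subgroup.closure S = ⊤) (h : ∀ s ∈ S, ∀ t ∈ S, s * t = t * s)
    (x y : D) : x * y = y * x := by
  have h1 : S ⊆ Subgroup.centralizer S := fun s hs =>
    Subgroup.mem_centralizer_iff.mpr fun t ht => h t ht s hs
  have h2 : x ∈ Subgroup.centralizer S := by
    have : Subgroup.closure S ≤ Subgroup.centralizer S := (Subgroup.closure_le _).mpr h1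
    exact this (by rw [hS]; trivial)
  rw [← Subgroup.centralizer_closure] at h2
  exact (Subgroup.mem_centralizer_iff.mp h2 y (by rw [hS]; trivial)).symm

/-- In a product of two symmetric groups of degree three, the elements dying in both factors and
in the abelianisation are trivial. -/
lemma IsDK.f4 {d : D} (hx : IsDK x) (ha : a * a = 1) (hb : b * b = 1) (hc : c * c = 1)
    (hd : d * d = 1) (hab : (a * b) ^ 3 = 1) (hcd : (c * d) ^ 3 = 1) (hac : a * c = c * a)
    (had : a * d = d * a) (hbc : b * c = c * b) (hbd : b * d = d * b)
    (hS : Subgroup.closure S = ⊤) (h : ∀ s ∈ S, s = a ∨ s = b ∨ s = c ∨ s = d) : x = 1 := by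
  have n1 : (Subgroup.closure {a, b}).Normal := normal_of_comm hS fun s hs => by
    rcases h s hs with rfl | rfl | rfl | rfl
    · simp
    · simp
    · right; rintro t (rfl | rfl); exacts [hac.symm, hbc.symm]
    · right; rintro t (rfl | rfl); exacts [had.symm, hbd.symm]
  have n2 : (Subgroup.closure {c, d}).Normal := normal_of_comm hS fun s hs => by
    rcases h s hs with rfl | rfl | rfl | rfl
    · right; rintro t (rfl | rfl); exacts [hac, had]
    · right; rintro t (rfl | rfl); exacts [hbc, hbd]
    · simp
    · simp
  have x1 : x ∈ Subgroup.closure {a, b} := hx.mem_closure hc hd hS n1 fun s hs => by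
    rcases h s hs with rfl | rfl | rfl | rfl <;> simp
  have x2 : x ∈ Subgroup.closure {c, d} := hx.mem_closure ha hb hS n2 fun s hs => by
    rcases h s hs with rfl | rfl | rfl | rfl <;> simp
  have hcen : ∀ (s : D) (T : Set D), x ∈ Subgroup.closure T → (∀ t ∈ T, s * t = t * s) →
      s * x = x * s := by
    intro s T hxT hT
    have : Subgroup.closure T ≤ Subgroup.centralizer {s} := by
      rw [Subgroup.closure_le]
      intro t ht
      exact Subgroup.mem_centralizer_iff.mpr fun u hu => by rw [hu]; exact hT t ht
    exact Subgroup.mem_centralizer_iff.mp (this hxT) s rfl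
  have ca := hcen a _ x2 (by rintro t (rfl | rfl); exacts [hac, had])
  have cb := hcen b _ x2 (by rintro t (rfl | rfl); exacts [hbc, hbd])
  have cc := hcen c _ x1 (by rintro t (rfl | rfl); exacts [hac.symm, hbc.symm])
  have cd := hcen d _ x1 (by rintro t (rfl | rfl); exacts [had.symm, hbd.symm])
  rcases central_of_s3 ha hb hab x1 ca cb with h1 | ⟨h1, h2⟩
  · exact h1
  rcases central_of_s3 hc hd hcd x2 cc cd with h3 | ⟨h3, h4⟩
  · exact h3
  refine hx.eq_one (GD.of_comm (comm_of_closure hS ?_))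
  have e : ∀ s ∈ S, s = x := by
    intro s hs
    rcases h s hs with rfl | rfl | rfl | rfl
    · exact h1.symm
    · rw [h1, h2]
    · exact h3.symm
    · rw [h3, h4]
  intro s hs t ht
  rw [e s hs, e t ht]

end
end CoxAux

/-! ### Elements dying in generalised dihedral quotients lie in `N(⟨B⟩)` -/

namespace CoxAux

section
variable {W : Type*} [Group W] {m : W → W → ℕ} {B : Set W}

lemma hasType_of {n : ℕ} {std : Fin n → Fin n → ℕ} (v : Fin n → W) (hinj : Function.Injective v)
    (hv : ∀ i, v i ∈ B) (hall : ∀ u ∈ B, ∃ i, u = v i) (hm : ∀ i j, m (v i) (v j) = std i j) :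
    HasType m B std := by
  have hb : Function.Bijective (fun i => (⟨v i, hv i⟩ : B)) := by
    refine ⟨fun i j h => hinj (congrArg Subtype.val h), fun u => ?_⟩
    obtain ⟨i, hi⟩ := hall u u.2
    exact ⟨i, Subtype.ext hi.symm⟩
  refine ⟨(Equiv.ofBijective _ hb).symm, fun u w => ?_⟩
  obtain ⟨i, rfl⟩ := hb.2 u
  obtain ⟨j, rfl⟩ := hb.2 w
  rw [Equiv.ofBijective_symm_apply_apply _ hb i, Equiv.ofBijective_symm_apply_apply _ hb j]
  exact hm i j

lemma hasType3 {std : Fin 3 → Fin 3 → ℕ} {a b c : W} (hB : Dia m B) (hn : In B [a, b, c])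
    (hall : ∀ u ∈ B, u = a ∨ u = b ∨ u = c) (hs : ∀ i j, std i j = std j i)
    (hd : ∀ i, std i i = 1)
    (h1 : m a b = std 0 1) (h2 : m a c = std 0 2) (h3 : m b c = std 1 2) : HasType m B std := by
  obtain ⟨⟨ha, hb, hc⟩, hab, hac, hbc⟩ := hn.p3
  have e1 := hB.two_symm ha hb h1
  have e2 := hB.two_symm ha hc h2
  have e3 := hB.two_symm hb hc h3
  have d0 := hB.diag a ha
  have d1 := hB.diag b hb
  have d2 := hB.diag c hc
  refine hasType_of ![a, b, c] ?_ ?_ ?_ ?_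
  · intro i j h
    fin_cases i <;> fin_cases j <;> simp_all
  · intro i
    fin_cases i <;> simp_all
  · intro u hu
    rcases hall u hu with h | h | h
    exacts [⟨0, h⟩, ⟨1, h⟩, ⟨2, h⟩]
  · intro i j
    fin_cases i <;> fin_cases j
    exacts [d0.trans (hd 0).symm, h1, h2, e1.trans (hs 0 1), d1.trans (hd 1).symm, h3,
      e2.trans (hs 0 2), e3.trans (hs 1 2), d2.trans (hd 2).symm]

lemma hasType4 {std : Fin 4 → Fin 4 → ℕ} {a b c d : W} (hB : Dia m B) (hn : In B [a, b, c, d])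
    (hall : ∀ u ∈ B, u = a ∨ u = b ∨ u = c ∨ u = d) (hs : ∀ i j, std i j = std j i)
    (hd : ∀ i, std i i = 1) (h1 : m a b = std 0 1) (h2 : m a c = std 0 2) (h3 : m a d = std 0 3)
    (h4 : m b c = std 1 2) (h5 : m b d = std 1 3) (h6 : m c d = std 2 3) : HasType m B std := by
  obtain ⟨⟨ha, hb, hc, hd'⟩, hab, hac, had, hbc, hbd, hcd⟩ := hn.p4
  have e1 := hB.two_symm ha hb h1
  have e2 := hB.two_symm ha hc h2
  have e3 := hB.two_symm ha hd' h3
  have e4 := hB.two_symm hb hc h4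
  have e5 := hB.two_symm hb hd' h5
  have e6 := hB.two_symm hc hd' h6
  have d0 := hB.diag a ha
  have d1 := hB.diag b hb
  have d2 := hB.diag c hc
  have d3 := hB.diag d hd'
  refine hasType_of ![a, b, c, d] ?_ ?_ ?_ ?_
  · intro i j h
    fin_cases i <;> fin_cases j <;> simp_all
  · intro i
    fin_cases i <;> simp_all
  · intro u hu
    rcases hall u hu with h | h | h | h
    exacts [⟨0, h⟩, ⟨1, h⟩, ⟨2, h⟩, ⟨3, h⟩]
  · intro i j
    fin_cases i <;> fin_cases j
    exacts [d0.trans (hd 0).symm, h1, h2, h3, e1.trans (hs 0 1), d1.trans (hd 1).symm, h4, h5,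
      e2.trans (hs 0 2), e4.trans (hs 1 2), d2.trans (hd 2).symm, h6,
      e3.trans (hs 0 3), e5.trans (hs 1 3), e6.trans (hs 2 3), d3.trans (hd 3).symm]

lemma eq_of_mul_one {D : Type*} [Group D] {x y : D} (hy : y * y = 1) (h : x * y = 1) : x = y := by
  rw [← inv_of hy]
  exact eq_inv_of_mul_eq_one_left h

lemma all3 {a b c : W} (hn : In B [a, b, c]) (hB : B.ncard = 3) :
    ∀ u ∈ B, u = a ∨ u = b ∨ u = c := by
  obtain ⟨⟨ha, hb, hc⟩, hab, hac, hbc⟩ := hn.p3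
  have h3 : ({a, b, c} : Set W).ncard = 3 := by
    rw [Set.ncard_eq_three]; exact ⟨a, b, c, hab, hac, hbc, rfl⟩
  have h : ({a, b, c} : Set W) = B := by
    apply Set.eq_of_subset_of_ncard_le
    · rintro x (rfl | rfl | rfl) <;> assumption
    · omega
    · exact Set.finite_of_ncard_pos (by omega)
  intro u hu
  rw [← h] at hu
  exact hu

lemma all4 {a b c d : W} (hn : In B [a, b, c, d]) (hB : B.ncard = 4) :
    ∀ u ∈ B, u = a ∨ u = b ∨ u = c ∨ u = d := by
  obtain ⟨⟨ha, hb, hc, hd⟩, hab, hac, had, hbc, hbd, hcd⟩ := hn.p4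
  have h3 : ({a, b, c, d} : Set W).ncard = 4 := by
    have h' : ({b, c, d} : Set W).ncard = 3 := by
      rw [Set.ncard_eq_three]; exact ⟨b, c, d, hbc, hbd, hcd, rfl⟩
    rw [Set.ncard_insert_of_notMem (by simp [hab, hac, had]), h']
  have h : ({a, b, c, d} : Set W) = B := by
    apply Set.eq_of_subset_of_ncard_le
    · rintro x (rfl | rfl | rfl | rfl) <;> assumption
    · omega
    · exact Set.finite_of_ncard_pos (by omega)
  intro u hu
  rw [← h] at hu
  exact hu

/-- In rank at least three, an element of `⟨B⟩` dying in every generalised dihedral quotient lies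
in `N(⟨B⟩)`: the quotient `⟨B⟩ / N(⟨B⟩)` is abelian, dihedral, or a product of two
symmetric groups of degree three. -/
theorem dk_le_nb (hB : Dia m B) (hcox : Cox m B (id : W → W)) (hn : 3 ≤ B.ncard)
    {y : Subgroup.closure B} (hy : IsDK y) : (y : W) ∈ NBSubgroup m B := by
  classical
  let X : Set (Subgroup.closure B) := (fun x : Subgroup.closure B => (x : W)) ⁻¹' genSetNB m B
  let N : Subgroup (Subgroup.closure B) := Subgroup.normalClosure X
  have hNn : N.Normal := Subgroup.normalClosure_normal
  suffices hyN : y ∈ N from ⟨y, hyN, rfl⟩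
  rw [← QuotientGroup.eq_one_iff]
  have hx : IsDK (QuotientGroup.mk' N y) := hy.map _
  change QuotientGroup.mk' N y = 1
  generalize QuotientGroup.mk' N y = x at hx
  let β : W → Subgroup.closure B ⧸ N := fun u =>
    if h : u ∈ B then QuotientGroup.mk ⟨u, Subgroup.subset_closure h⟩ else 1
  have hβ : ∀ u (h : u ∈ B), β u = QuotientGroup.mk ⟨u, Subgroup.subset_closure h⟩ :=
    fun u h => dif_pos h
  have hc : Cox m B β := by
    constructor
    · intro u hu
      rw [hβ u hu, ← QuotientGroup.mk_mul, ← QuotientGroup.mk_one]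
      congr 1
      exact Subtype.ext (hcox.sq u hu)
    · intro u hu v hv
      rw [hβ u hu, hβ v hv, ← QuotientGroup.mk_mul, ← QuotientGroup.mk_pow, ← QuotientGroup.mk_one]
      congr 1
      exact Subtype.ext (hcox.rel u hu v hv)
  have hgen : ∀ z : Subgroup.closure B, (z : W) ∈ genSetNB m B →
      (QuotientGroup.mk z : Subgroup.closure B ⧸ N) = 1 := fun z hz =>
    (QuotientGroup.eq_one_iff z).mpr (Subgroup.subset_normalClosure hz)
  have hmul : ∀ u, u ∈ B → ∀ v, v ∈ B → u * v ∈ genSetNB m B → β u = β v := by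
    intro u hu v hv h
    apply eq_of_mul_one (hc.sq v hv)
    rw [hβ u hu, hβ v hv, ← QuotientGroup.mk_mul]
    exact hgen _ h
  have hsqr : ∀ u, u ∈ B → ∀ v, v ∈ B → (u * v) ^ 2 ∈ genSetNB m B → β u * β v = β v * β u := by
    intro u hu v hv h
    apply comm_of_sq (hc.sq u hu) (hc.sq v hv)
    rw [hβ u hu, hβ v hv, ← QuotientGroup.mk_mul, ← QuotientGroup.mk_pow]
    exact hgen _ h
  have hS : Subgroup.closure (β '' B) = ⊤ := by
    have h1 : Subgroup.closure ((fun z : Subgroup.closure B => (z : W)) ⁻¹' B) = ⊤ :=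
      Subgroup.closure_closure_coe_preimage
    have h2 : β '' B = QuotientGroup.mk' N '' ((fun z : Subgroup.closure B => (z : W)) ⁻¹' B) := by
      ext q
      constructor
      · rintro ⟨u, hu, rfl⟩
        exact ⟨⟨u, Subgroup.subset_closure hu⟩, hu, (hβ u hu).symm⟩
      · rintro ⟨z, hz, rfl⟩
        exact ⟨z, hz, hβ z hz⟩
    rw [h2, ← MonoidHom.map_closure, h1, ← MonoidHom.range_eq_map,
      MonoidHom.range_eq_top.mpr (QuotientGroup.mk'_surjective N)]
  have hSm : ∀ {P : Subgroup.closure B ⧸ N → Prop}, (∀ u ∈ B, P (β u)) → ∀ s ∈ β '' B, P s := by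
    rintro P h _ ⟨u, hu, rfl⟩; exact h u hu
  have hcomm : (5 ≤ B.ncard ∨ HasType m B (aMat 4) ∨ HasType m B g3Mat ∨ HasType m B g4Mat) →
      x = 1 := by
    intro ht
    refine hx.eq_one (GD.of_comm ?_)
    intro p q
    obtain ⟨p, rfl⟩ := QuotientGroup.mk'_surjective N p
    obtain ⟨q, rfl⟩ := QuotientGroup.mk'_surjective N q
    rw [← commutatorElement_eq_one_iff_mul_comm, ← map_commutatorElement]
    refine hgen _ (Or.inl ⟨ht, ?_⟩)
    exact Subgroup.commutator_mem_commutator p.2 q.2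
  by_cases h5 : 5 ≤ B.ncard
  · exact hcomm (Or.inl h5)
  obtain ⟨s, hs, t, ht, hst, hadj⟩ := hB.exists_adj (by omega)
  by_cases h4 : 4 ≤ B.ncard
  · obtain ⟨a, b, c, d, hp | hp, -, -⟩ := hB.shape4 h4 hs ht hst hadj
    · have hall := all4 hp.nd (by omega)
      obtain ⟨⟨ha, hb, hcB, hd⟩, hab, hac, had, hbc, hbd, hcd⟩ := hp.nd.p4
      have hT : ∀ std : Fin 4 → Fin 4 → ℕ, (∀ i j, std i j = std j i) → (∀ i, std i i = 1) →
          std 0 1 = 3 → std 0 2 = 2 → std 0 3 = 2 → m b c = std 1 2 → std 1 3 = 2 →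
          m c d = std 2 3 → HasType m B std := fun std h1 h2 h3 h4 h5 h6 h7 h8 =>
        hasType4 hB hp.nd hall h1 h2 (hp.ab.trans h3.symm) (hp.ac.trans h4.symm)
          (hp.ad.trans h5.symm) h6 (hp.bd.trans h7.symm) h8
      rcases hp.lab with ⟨l1, l2 | l2 | l2⟩ | ⟨l1, l2⟩
      · exact hcomm (Or.inr (Or.inl (hT _ (by decide) (by decide) (by decide) (by decide)
          (by decide) l1 (by decide) l2)))
      · have hty : HasType m B (cMat 4) := hT _ (by decide) (by decide) (by decide) (by decide)
          (by decide) l1 (by decide) l2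
        have e : β a = β c := hmul a ha c hcB (Or.inr (Or.inr (Or.inr (Or.inr (Or.inl
          ⟨hty, a, ha, b, hb, c, hcB, d, hd, hp.ab, l1, l2, hp.ac, rfl⟩)))))
        refine hx.three (hc.sq a ha) (hc.sq b hb) (hc.sq d hd) (hc.pow ha hb hp.ab)
          (hc.comm2 ha hd hp.ad) (hc.comm2 hb hd hp.bd) hS (hSm fun u hu => ?_)
        apply Subgroup.subset_closure
        rcases hall u hu with rfl | rfl | rfl | rfl
        · simp
        · simp
        · simp [e]
        · simp
      · exact hcomm (Or.inr (Or.inr (Or.inr (hT _ (by decide) (by decide) (by decide) (by decide)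
          (by decide) l1 (by decide) l2))))
      · have hty : HasType m B f4Mat := hT _ (by decide) (by decide) (by decide) (by decide)
          (by decide) l1 (by decide) l2
        have e : β b * β c = β c * β b := hsqr b hb c hcB (Or.inr (Or.inr (Or.inr (Or.inr (Or.inr
          ⟨hty, b, hb, c, hcB, l1, rfl⟩)))))
        refine hx.f4 (hc.sq a ha) (hc.sq b hb) (hc.sq c hcB) (hc.sq d hd) (hc.pow ha hb hp.ab)
          (hc.pow hcB hd l2) (hc.comm2 ha hcB hp.ac)
          (hc.comm2 ha hd hp.ad) e (hc.comm2 hb hd hp.bd) hS (hSm fun u hu => ?_)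
        rcases hall u hu with rfl | rfl | rfl | rfl <;> simp
    · revert a b c d
      intro b a c d hp
      have hn' : In B [b, a, c, d] := hp.nd
      have hn2 : In B [a, b, c, d] := by
        simp only [In, List.nodup_cons, List.mem_cons] at hn' ⊢; grind
      have hall := all4 hn2 (by omega)
      obtain ⟨⟨ha, hb, hcB, hd⟩, hab, hac, had, hbc, hbd, hcd⟩ := hn2.p4
      have hty : HasType m B (bMat 4) := hasType4 hB hn2 hall (by decide) (by decide)
        (hB.two_symm hb ha hp.ba) hp.ac hp.ad hp.bc hp.bd hp.cd
      have e1 : β a = β c := hmul a ha c hcB (Or.inr (Or.inr (Or.inl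
          ⟨hty, a, ha, c, hcB, hac, hp.ac, rfl⟩)))
      have e2 : β a = β d := hmul a ha d hd (Or.inr (Or.inr (Or.inl
          ⟨hty, a, ha, d, hd, had, hp.ad, rfl⟩)))
      refine hx.two (hc.sq a ha) (hc.sq b hb) hS (hSm fun u hu => ?_)
      apply Subgroup.subset_closure
      rcases hall u hu with rfl | rfl | rfl | rfl
      · simp
      · simp
      · simp [e1]
      · simp [e2]
  · obtain ⟨a, b, c, hp, -, -⟩ := hB.shape3 hn hs ht hst hadj
    have hall := all3 hp.nd (by omega)
    obtain ⟨⟨ha, hb, hcB⟩, hab, hac, hbc⟩ := hp.nd.p3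
    have hT : ∀ std : Fin 3 → Fin 3 → ℕ, (∀ i j, std i j = std j i) → (∀ i, std i i = 1) →
        std 0 1 = 3 → std 0 2 = 2 → m b c = std 1 2 → HasType m B std := fun std h1 h2 h3 h4 h5 =>
      hasType3 hB hp.nd hall h1 h2 (hp.ab.trans h3.symm) (hp.ac.trans h4.symm) h5
    rcases hp.bc with l | l | l
    · have hty : HasType m B (aMat 3) := hT _ (by decide) (by decide) (by decide) (by decide) l
      have e1 : β a = β c := hmul a ha c hcB (Or.inr (Or.inl
          ⟨hty, a, ha, c, hcB, hac, hp.ac, rfl⟩))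
      refine hx.two (hc.sq a ha) (hc.sq b hb) hS (hSm fun u hu => ?_)
      apply Subgroup.subset_closure
      rcases hall u hu with rfl | rfl | rfl
      · simp
      · simp
      · simp [e1]
    · have hty : HasType m B (cMat 3) := hT _ (by decide) (by decide) (by decide) (by decide) l
      have e : β b * β c = β c * β b := hsqr b hb c hcB (Or.inr (Or.inr (Or.inr (Or.inl
          ⟨hty, b, hb, c, hcB, l, rfl⟩))))
      refine hx.three (hc.sq a ha) (hc.sq b hb) (hc.sq c hcB) (hc.pow ha hb hp.ab)
          (hc.comm2 ha hcB hp.ac) e hS (hSm fun u hu => ?_)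
      apply Subgroup.subset_closure
      rcases hall u hu with rfl | rfl | rfl <;> simp
    · exact hcomm (Or.inr (Or.inr (Or.inl (hT _ (by decide) (by decide) (by decide) (by decide)
          l))))

end
end CoxAux

/-! ### Reduction to irreducible visual subgroups -/

namespace CoxAux

section
variable {ι : Type*} [Fintype ι] {M : CoxeterMatrix ι} {W : Type*} [Group W]
  (cs : CoxeterSystem M W)

/-- Simple reflections which commute are orthogonal in the geometric representation. -/
lemma gram_eq_zero_of_comm {s t : ι} (hst : s ≠ t)
    (h : cs.simple s * cs.simple t = cs.simple t * cs.simple s) : gram M s t = 0 := by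
  have h1 := congrArg (fun g => geo cs g (ee s) t) h
  have es : bf M s (ee s) = 1 := by rw [bf_ee, gram_self]
  have et : bf M t (ee s) = gram M s t := by rw [bf_ee, gram_symm]
  simp only [geo_mul, geo_simple, refl_apply, map_sub, map_smul, es, et, bf_ee, Pi.sub_apply,
    Pi.smul_apply, ee_self, ee_of_ne hst.symm, smul_eq_mul] at h1
  linarith

/-- Disjoint visual subgroups intersect trivially. -/
lemma vis_disjoint {T₁ T₂ : Set ι} (hd : ∀ i ∈ T₁, i ∉ T₂) : Disjoint (vis cs T₁) (vis cs T₂) := by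
  rw [disjoint_iff_inf_le]
  rintro g ⟨h1, h2⟩
  refine vis_eq_one cs h1 fun t ht => funext fun j => ?_
  by_cases hj : j ∈ T₁
  · exact vis_coord cs h2 (hd j hj) _
  · exact vis_coord cs h1 hj _

lemma vis_union (T₁ T₂ : Set ι) : vis cs (T₁ ∪ T₂) = vis cs T₁ ⊔ vis cs T₂ := by
  unfold vis
  rw [Set.image_union, Subgroup.closure_union]

lemma vis_comm {T₁ T₂ : Set ι} (h2 : ∀ i ∈ T₁, ∀ j ∈ T₂, M i j = 2) (g : vis cs T₁)
    (h : vis cs T₂) : Commute (g : W) (h : W) := by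
  have key : vis cs T₁ ≤ Subgroup.centralizer (vis cs T₂ : Set W) := by
    unfold vis
    rw [Subgroup.centralizer_closure, Subgroup.closure_le]
    rintro _ ⟨i, hi, rfl⟩
    refine Subgroup.mem_centralizer_iff.mpr ?_
    rintro _ ⟨j, hj, rfl⟩
    refine (comm_of_sq (cs.simple_mul_simple_self i) (cs.simple_mul_simple_self j) ?_).symm
    rw [← h2 i hi j hj]
    exact cs.simple_mul_simple_pow i j
  exact (Subgroup.mem_centralizer_iff.mp (key g.2) h h.2).symm

/-- A visual subgroup with disconnected diagram is a direct product. -/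
lemma vis_split {T T₁ T₂ : Set ι} (hT : T = T₁ ∪ T₂) (hd : ∀ i ∈ T₁, i ∉ T₂)
    (h2 : ∀ i ∈ T₁, ∀ j ∈ T₂, M i j = 2) {g : vis cs T} (hg : IsDK g) :
    ∃ g₁ : vis cs T₁, ∃ g₂ : vis cs T₂, IsDK g₁ ∧ IsDK g₂ ∧ (g : W) = g₁ * g₂ := by
  let f : vis cs T₁ × vis cs T₂ →* W :=
    MonoidHom.noncommCoprod (vis cs T₁).subtype (vis cs T₂).subtype (vis_comm cs h2)
  have hf : Function.Injective f := by
    refine (MonoidHom.noncommCoprod_injective _ _ _).mpr ⟨Subtype.val_injective, Subtype.val_injective, ?_⟩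
    rw [Subgroup.range_subtype, Subgroup.range_subtype]
    exact vis_disjoint cs hd
  have hr : vis cs T ≤ f.range := by
    have hr : f.range = _ := MonoidHom.noncommCoprod_range _ _ _
    rw [hr, Subgroup.range_subtype, Subgroup.range_subtype, hT, vis_union]
  let e := (MonoidHom.ofInjective hf).symm.toMonoidHom.comp (Subgroup.inclusion hr)
  have he : f (e g) = g := by
    have := (MonoidHom.ofInjective hf).apply_symm_apply (Subgroup.inclusion hr g)
    exact congrArg Subtype.val this
  have hg' : IsDK (e g) := hg.map e
  exact ⟨(e g).1, (e g).2, hg'.map (MonoidHom.fst _ _), hg'.map (MonoidHom.snd _ _), he.symm⟩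

/-- Reduction to irreducible visual subgroups. -/
lemma dk_induction (L : Subgroup W)
    (hirr : ∀ B : Set ι, B.Nonempty → (vis cs B : Set W).Finite →
      (∀ u ∈ B, ∀ v ∈ B, Relation.ReflTransGen (DAdj (fun i j => M i j) B) u v) →
      ∀ g : vis cs B, IsDK g → (g : W) ∈ L) (n : ℕ) :
    ∀ T : Set ι, T.ncard = n → (vis cs T : Set W).Finite → ∀ g : vis cs T, IsDK g → (g : W) ∈ L := by
  induction n using Nat.strong_induction_on with
  | _ n ih =>
  intro T hTn hfin g hg
  rcases T.eq_empty_or_nonempty with rfl | hne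
  · have : (g : W) = 1 := vis_eq_one cs g.2 (by simp)
    rw [this]; exact one_mem _
  by_cases hconn : ∀ u ∈ T, ∀ v ∈ T, Relation.ReflTransGen (DAdj (fun i j => M i j) T) u v
  · exact hirr T hne hfin hconn g hg
  push Not at hconn
  obtain ⟨u, hu, v, hv, huv⟩ := hconn
  let T₁ : Set ι := {w | w ∈ T ∧ Relation.ReflTransGen (DAdj (fun i j => M i j) T) u w}
  let T₂ : Set ι := {w | w ∈ T ∧ ¬ Relation.ReflTransGen (DAdj (fun i j => M i j) T) u w}
  have hT : T = T₁ ∪ T₂ := by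
    ext w
    constructor
    · intro hw
      by_cases h : Relation.ReflTransGen (DAdj (fun i j => M i j) T) u w
      · exact Or.inl ⟨hw, h⟩
      · exact Or.inr ⟨hw, h⟩
    · rintro (h | h) <;> exact h.1
  have s1 : T₁ ⊆ T := fun w h => h.1
  have s2 : T₂ ⊆ T := fun w h => h.1
  have c1 : T₁.ncard < T.ncard :=
    Set.ncard_lt_ncard ⟨s1, fun h => huv (h hv).2⟩ (Set.toFinite _)
  have c2 : T₂.ncard < T.ncard :=
    Set.ncard_lt_ncard ⟨s2, fun h => (h hu).2 .refl⟩ (Set.toFinite _)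
  have h2 : ∀ i ∈ T₁, ∀ j ∈ T₂, M i j = 2 := by
    intro i hi j hj
    have hij : i ≠ j := by rintro rfl; exact hj.2 hi.2
    have hne1 := M.off_diagonal i j hij
    have hnadj : ¬ (M i j = 0 ∨ 2 < M i j) := fun h =>
      hj.2 (hi.2.tail ⟨hi.1, hj.1, hij, h⟩)
    omega
  obtain ⟨g₁, g₂, k1, k2, e⟩ := vis_split cs hT (fun i h1 h2 => h2.2 h1.2) h2 hg
  have m1 : vis cs T₁ ≤ vis cs T := Subgroup.closure_mono (Set.image_mono s1)
  have m2 : vis cs T₂ ≤ vis cs T := Subgroup.closure_mono (Set.image_mono s2)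
  rw [e]
  exact mul_mem (ih _ (hTn ▸ c1) T₁ rfl (hfin.subset m1) g₁ k1)
    (ih _ (hTn ▸ c2) T₂ rfl (hfin.subset m2) g₂ k2)

end
end CoxAux

/-! ### Independence of the Coxeter generators -/

namespace CoxAux

/-- The normal closure of the elements which die in every generalised dihedral quotient of some
finite subgroup containing them. It is defined without reference to Coxeter generators. -/
def MW (W : Type*) [Group W] : Subgroup W :=
  Subgroup.normalClosure {x | ∃ F : Subgroup W, Finite F ∧ ∃ h : x ∈ F, IsDK (⟨x, h⟩ : F)}

instance (W : Type*) [Group W] : (MW W).Normal := Subgroup.normalClosure_normal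

lemma MW_le_comap {W W₂ : Type*} [Group W] [Group W₂] (f : W →* W₂) : MW W ≤ (MW W₂).comap f := by
  apply Subgroup.normalClosure_le_normal
  rintro x ⟨F, hF, h, hx⟩
  refine Subgroup.subset_normalClosure ⟨F.map f, ?_, ⟨x, h, rfl⟩, hx.map (f.subgroupMap F)⟩
  exact Finite.of_surjective _ (f.subgroupMap_surjective F)

lemma MW_map {W W₂ : Type*} [Group W] [Group W₂] (e : W ≃* W₂) :
    (MW W).map e.toMonoidHom = MW W₂ := by
  apply le_antisymm
  · rw [Subgroup.map_le_iff_le_comap]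
    exact MW_le_comap _
  · intro x hx
    exact ⟨e.symm x, MW_le_comap e.symm.toMonoidHom hx, by simp⟩

section
variable {W : Type*} [Group W] {m : W → W → ℕ} {S : Set W} {cm : CoxeterMatrix S}
  (cs : CoxeterSystem cm W)

lemma vis_val (h1 : ∀ s : S, cs.simple s = (s : W)) (T : Set S) :
    vis cs T = Subgroup.closure (Subtype.val '' T) := by
  unfold vis
  congr 1
  exact Set.image_congr fun s _ => h1 s

lemma cox_of (h1 : ∀ s : S, cs.simple s = (s : W)) (h2 : ∀ s t : S, cm.M s t = m s t) {B : Set W}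
    (hB : B ⊆ S) : Cox m B (id : W → W) := by
  constructor
  · intro u hu
    have := cs.simple_mul_simple_self ⟨u, hB hu⟩
    rw [h1] at this
    exact this
  · intro u hu v hv
    have := cs.simple_mul_simple_pow ⟨u, hB hu⟩ ⟨v, hB hv⟩
    rw [h1, h1, h2 ⟨u, hB hu⟩ ⟨v, hB hv⟩] at this
    exact this

lemma dia_of [Fintype S] (h1 : ∀ s : S, cs.simple s = (s : W))
    (h2 : ∀ s t : S, cm.M s t = m s t) {B : Set W}
    (hB : B ⊆ S) (hirr : IsIrreducibleOn m B) (hfin : (Subgroup.closure B : Set W).Finite) :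
    Dia m B := by
  let T : Set S := Subtype.val ⁻¹' B
  have hT : Subtype.val '' T = B := by
    rw [Subtype.image_preimage_coe, Set.inter_eq_right.mpr hB]
  have hpd : PosDefOn (fun i j => cm i j) T := by
    apply posDef_of_finite cs
    · rw [vis_val cs h1, hT]; exact hfin
    · rintro ⟨u, hu⟩ hu' ⟨v, hv⟩ hv'
      have key : ∀ w, Relation.ReflTransGen (DAdj m B) u w → ∀ hw : w ∈ S,
          Relation.ReflTransGen (DAdj (fun i j => cm i j) T) ⟨u, hu⟩ ⟨w, hw⟩ := by
        intro w hw
        induction hw with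
        | refl => intro _; exact .refl
        | tail _ h ih =>
          intro hw
          refine (ih (hB h.1)).tail ⟨h.1, h.2.1, fun e => h.2.2.1 (congrArg Subtype.val e), ?_⟩
          have := h.2.2.2
          rw [← h2 ⟨_, hB h.1⟩ ⟨_, hw⟩] at this
          exact this
      exact key v (hirr.2 u hu' v hv') hv
  refine ⟨fun x hx y hy => ?_, fun x hx => ?_, fun x hx y hy hxy => ?_, ?_, hirr.2⟩
  · rw [← h2 ⟨x, hB hx⟩ ⟨y, hB hy⟩, ← h2 ⟨y, hB hy⟩ ⟨x, hB hx⟩]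
    exact cm.symmetric _ _
  · rw [← h2 ⟨x, hB hx⟩ ⟨x, hB hx⟩]
    exact cm.diagonal _
  · rw [← h2 ⟨x, hB hx⟩ ⟨y, hB hy⟩]
    exact cm.off_diagonal _ _ fun e => hxy (congrArg Subtype.val e)
  · intro n f a hf hfB ha
    have := hpd n (fun p => ⟨f p, hB (hfB p)⟩) a (fun p q h => hf (congrArg Subtype.val h)) hfB ha
    refine lt_of_lt_of_eq this (Finset.sum_congr rfl fun p _ => Finset.sum_congr rfl fun q _ => ?_)
    rw [← h2 ⟨f p, hB (hfB p)⟩ ⟨f q, hB (hfB q)⟩]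

/-- An irreducible visual subgroup of rank at least two is not cyclic, since adjacent generators do
not commute. -/
lemma not_cyclic [Fintype S] (h1 : ∀ s : S, cs.simple s = (s : W))
    (h2 : ∀ s t : S, cm.M s t = m s t) {B : Set W} (hB : B ⊆ S) (hd : Dia m B)
    (hn : 2 ≤ B.ncard) : ¬ IsCyclic (Subgroup.closure B) := by
  intro hcyc
  obtain ⟨s, hs, t, ht, hst, hadj⟩ := hd.exists_adj hn
  have hc : s * t = t * s := by
    have hcom : ∀ x y : Subgroup.closure B, x * y = y * x := IsCyclic.commGroup.mul_comm
    exact congrArg Subtype.val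
      (hcom ⟨s, Subgroup.subset_closure hs⟩ ⟨t, Subgroup.subset_closure ht⟩)
  have h0 : gram cm ⟨s, hB hs⟩ ⟨t, hB ht⟩ = 0 := by
    apply gram_eq_zero_of_comm cs (fun e => hst (congrArg Subtype.val e))
    rw [h1, h1]
    exact hc
  have h3 := cos_lb (by norm_num : 2 ≤ 3) hadj
  have h4 : Real.cos (Real.pi / ((3 : ℕ) : ℝ)) = 1 / 2 := by
    push_cast; exact Real.cos_pi_div_three
  rw [h4, ← h2 ⟨s, hB hs⟩ ⟨t, hB ht⟩] at h3
  have h5 : Real.cos (Real.pi / cm ⟨s, hB hs⟩ ⟨t, hB ht⟩) = 0 := by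
    unfold gram at h0; linarith
  have h6 : Real.cos (Real.pi / (cm.M ⟨s, hB hs⟩ ⟨t, hB ht⟩ : ℝ)) = 0 := h5
  rw [h6] at h3
  norm_num at h3

/-- The elements of `N(⟨B⟩)` die in every generalised dihedral quotient of the finite group `⟨B⟩`. -/
lemma nw_le_mw (hcs : IsCoxeterSystemOn m S) (hfin : S.Finite) : NWSubgroup m S ≤ MW W := by
  obtain ⟨cm, cs, h1, h2⟩ := hcs
  have := hfin.fintype
  apply Subgroup.normalClosure_le_normal
  rintro x ⟨B, ⟨hBS, hirr, hf, -, -⟩, -, hx⟩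
  obtain ⟨h, hk⟩ := nb_le_dk (dia_of cs h1 h2 hBS hirr hf) (cox_of cs h1 h2 hBS) hx
  exact Subgroup.subset_normalClosure ⟨_, hf, h, hk⟩

/-- An element of a finite irreducible visual subgroup `⟨B⟩` dying in every generalised dihedral quotient lies
in `N(W)`: in rank at most two it is trivial, and otherwise `B` is enlarged to a base. -/
lemma irr_mem_nw (hcs : IsCoxeterSystemOn m S) (hfin : S.Finite) {B : Set W} (hBS : B ⊆ S)
    (hirr : IsIrreducibleOn m B) (hf : (Subgroup.closure B : Set W).Finite)
    {g : Subgroup.closure B} (hg : IsDK g) : (g : W) ∈ NWSubgroup m S := by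
  obtain ⟨cm, cs, h1, h2⟩ := hcs
  have := hfin.fintype
  have hBf : B.Finite := hfin.subset hBS
  by_cases hn : 3 ≤ B.ncard
  · let fam : Set (Set W) :=
      {B' | B' ⊆ S ∧ IsIrreducibleOn m B' ∧ (Subgroup.closure B' : Set W).Finite}
    have hfam : fam.Finite := hfin.finite_subsets.subset fun B' h => h.1
    obtain ⟨B', hle, hmax⟩ := hfam.exists_le_maximal (a := B) ⟨hBS, hirr, hf⟩
    obtain ⟨hB'S, hirr', hf'⟩ := hmax.prop
    have hn' : 3 ≤ B'.ncard := hn.trans (Set.ncard_le_ncard hle (hfin.subset hB'S))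
    have hd := dia_of cs h1 h2 hB'S hirr' hf'
    have hbase : IsBase m S B' := by
      refine ⟨hB'S, hirr', hf', not_cyclic cs h1 h2 hB'S hd (by omega), ?_⟩
      intro B'' k1 k2 k3 k4
      exact (hmax.eq_of_subset ⟨k1, k3, k4⟩ k2).symm
    have hk := dk_le_nb hd (cox_of cs h1 h2 hB'S) hn'
      (hg.map (Subgroup.inclusion (Subgroup.closure_mono hle)))
    exact Subgroup.subset_normalClosure ⟨B', hbase, hn', hk⟩
  · have hex : ∃ a b, B = {a, b} := by
      have hpos : 0 < B.ncard := (Set.ncard_pos hBf).mpr hirr.1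
      obtain h | h : B.ncard = 1 ∨ B.ncard = 2 := by omega
      · obtain ⟨a, rfl⟩ := Set.ncard_eq_one.mp h
        exact ⟨a, a, by simp⟩
      · obtain ⟨a, b, -, rfl⟩ := Set.ncard_eq_two.mp h
        exact ⟨a, b, rfl⟩
    have hcox := cox_of cs h1 h2 hBS
    obtain ⟨a, b, hab⟩ := hex
    have ha : a ∈ B := by simp [hab]
    have hb : b ∈ B := by simp [hab]
    have hS : Subgroup.closure ((fun z : Subgroup.closure B => (z : W)) ⁻¹' B) = ⊤ :=
      Subgroup.closure_closure_coe_preimage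
    have : g = 1 := by
      refine hg.two (a := ⟨a, Subgroup.subset_closure ha⟩) (b := ⟨b, Subgroup.subset_closure hb⟩)
        (Subtype.ext (hcox.sq a ha)) (Subtype.ext (hcox.sq b hb)) hS ?_
      rintro ⟨s, hs⟩ hsB
      apply Subgroup.subset_closure
      have hs' : s = a ∨ s = b := by
        have : s ∈ ({a, b} : Set W) := hab ▸ hsB
        exact this
      rcases hs' with rfl | rfl
      · exact Or.inl rfl
      · exact Or.inr rfl
    rw [this]
    exact one_mem _

/-- `N(W)` does not depend on the Coxeter generators. -/
theorem nw_eq_mw (hcs : IsCoxeterSystemOn m S) (hfin : S.Finite) : NWSubgroup m S = MW W := by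
  apply le_antisymm (nw_le_mw hcs hfin)
  have hcs' := hcs
  obtain ⟨cm, cs, h1, h2⟩ := hcs'
  have := hfin.fintype
  apply Subgroup.normalClosure_le_normal
  rintro x ⟨F, hF, hx, hk⟩
  obtain ⟨w, T, hT, hconj⟩ := tits_finite cs F
  let f : F →* vis cs T := ((MulAut.conj w⁻¹).toMonoidHom.comp F.subtype).codRestrict (vis cs T)
    fun g => by simpa using hconj g g.2
  have hind := dk_induction cs (NWSubgroup m S) ?_ _ T rfl hT (f ⟨x, hx⟩) (hk.map f)
  · have h3 : ((f ⟨x, hx⟩ : vis cs T) : W) = w⁻¹ * x * w := by simp [f]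
    rw [h3] at hind
    have h4 := (inferInstance : (NWSubgroup m S).Normal).conj_mem _ hind w
    have h5 : w * (w⁻¹ * x * w) * w⁻¹ = x := by group
    rwa [h5] at h4
  · intro B hne hBf hconn g hg
    have hv := vis_val cs h1 B
    have hle : vis cs B ≤ Subgroup.closure (Subtype.val '' B) := hv.le
    refine irr_mem_nw hcs hfin (B := Subtype.val '' B) (by rintro _ ⟨s, -, rfl⟩; exact s.2)
      ⟨hne.image _, ?_⟩ (hv ▸ hBf) (hg.map (Subgroup.inclusion hle))
    rintro _ ⟨u, hu, rfl⟩ _ ⟨v, hv, rfl⟩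
    refine (hconn u hu v hv).lift Subtype.val ?_
    rintro a b ⟨k1, k2, k3, k4⟩
    refine ⟨⟨a, k1, rfl⟩, ⟨b, k2, rfl⟩, fun e => k3 (Subtype.ext e), ?_⟩
    rw [← h2]
    exact k4

end
end CoxAux

/-- The isomorphism type of `W^(2) = W/N(W)` is an isomorphism invariant
of `W`. -/
theorem NW_quotient_invariant {W₂ : Type*} [Group W₂]
    (m : W → W → ℕ) (S : Set W) (hcs : IsCoxeterSystemOn m S) (hfin : S.Finite)
    (m₂ : W₂ → W₂ → ℕ) (S₂ : Set W₂) (hcs₂ : IsCoxeterSystemOn m₂ S₂)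
    (hfin₂ : S₂.Finite)
    (e : W ≃* W₂) :
    Nonempty ((W ⧸ NWSubgroup m S) ≃* (W₂ ⧸ NWSubgroup m₂ S₂)) := by
  refine ⟨QuotientGroup.congr _ _ e ?_⟩
  rw [CoxAux.nw_eq_mw hcs hfin, CoxAux.nw_eq_mw hcs₂ hfin₂]
  exact CoxAux.MW_map e
end

section
/- Let (W,S) be the Coxeter system of type F_4, with Coxeter generators f_1,f_2,f_3,f_4 satisfying m(f_1,f_2) = m(f_3,f_4) = 3, m(f_2,f_3) = 4, and m(f_i,f_j) = 2 for all other pairs i < j. Let N(F_4) be the normal closure in W of the element (f_2f_3)^2. Then W/N(F_4) is isomorphic to the Coxeter group of type A_2 × A_2 (i.e. to the direct product of two symmetric groups S_3 × S_3), and N(F_4) is the unique normal subgroup of W with this quotient: if N is any normal subgroup of W with W/N ≅ S_3 × S_3, then N = N(F_4). -/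
/-!
The quotient `Q = W / N(F₄)` is generated by the images `a, b, c, d` of `f₁, f₂, f₃, f₄`. The
generators `a, b` commute with `c, d` (the only missing commutation, that of `b` and `c`, is
exactly the relation `(f₂f₃)² = 1`), and `⟨a, b⟩`, `⟨c, d⟩` have at most six elements each, as
quotients of dihedral groups of order 6. So `|Q| ≤ 36` (`card_le_of_commuting_pairs`). Conversely
`W` maps onto `S₃ × S₃` with `f₁, f₂` going to two transpositions of the first factor and `f₃, f₄`
to two transpositions of the second (`exists_hom`); this map kills `(f₂f₃)²`, so it induces a
surjection `Q → S₃ × S₃`, an isomorphism by counting.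

For uniqueness, let `W → S₃` be any surjection. In `S₃`, the relations of `F₄` force
`(f₂f₃)² = 1` unless all four generators have the same image (`perm_three_dichotomy`), and the
latter is impossible since `S₃` is not cyclic (`sq_mem_ker`). Applied to the two coordinates of a
surjection `W → S₃ × S₃` with kernel `N`, this gives `N(F₄) ≤ N`; both have index 36, so they are
equal.
-/

variable {W : Type*} [Group W]

/-- The six products `1, a, b, ab, ba, aba`, which exhaust the dihedral group of order 6
generated by involutions `a` and `b`. -/
def dihedralWord {G : Type*} [Group G] (a b : G) : Fin 6 → G :=
  ![1, a, b, a * b, b * a, a * b * a]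

theorem map_dihedralWord {G H : Type*} [Group G] [Group H] (φ : G →* H) (a b : G) (i : Fin 6) :
    φ (dihedralWord a b i) = dihedralWord (φ a) (φ b) i := by
  fin_cases i <;> simp [dihedralWord]

theorem commute_dihedralWord {G : Type*} [Group G] {a b c : G} (ha : Commute c a)
    (hb : Commute c b) (i : Fin 6) : Commute c (dihedralWord a b i) := by
  fin_cases i
  · exact Commute.one_right c
  · exact ha
  · exact hb
  · exact ha.mul_right hb
  · exact hb.mul_right ha
  · exact (ha.mul_right hb).mul_right ha

theorem mul_dihedralWord {G : Type*} [Group G] {a b : G} (ha : a * a = 1) (hb : b * b = 1)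
    (hab : (a * b) ^ 3 = 1) (i : Fin 6) :
    (∃ j, a * dihedralWord a b i = dihedralWord a b j) ∧
      ∃ j, b * dihedralWord a b i = dihedralWord a b j := by
  have ha' : ∀ x, a * (a * x) = x := fun x => by rw [← mul_assoc, ha, one_mul]
  have hb' : ∀ x, b * (b * x) = x := fun x => by rw [← mul_assoc, hb, one_mul]
  have braid : b * (a * b) = a * (b * a) := by
    have h : a * (b * (a * (b * (a * b)))) = 1 := by
      simpa [pow_succ, mul_assoc] using hab
    calc b * (a * b) = a * (b * (a * (a * (b * (a * (b * (a * b))))))) := by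
          rw [ha', hb', ha']
      _ = a * (b * a) := by rw [h, mul_one]
  have braid' : b * (a * (b * a)) = a * b := by rw [← braid, hb']
  fin_cases i
  · exact ⟨⟨1, by simp [dihedralWord]⟩, ⟨2, by simp [dihedralWord]⟩⟩
  · exact ⟨⟨0, by simp [dihedralWord, ha]⟩, ⟨4, by simp [dihedralWord]⟩⟩
  · exact ⟨⟨3, by simp [dihedralWord]⟩, ⟨0, by simp [dihedralWord, hb]⟩⟩
  · exact ⟨⟨2, by simp [dihedralWord, ha']⟩, ⟨5, by simp [dihedralWord, braid, mul_assoc]⟩⟩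
  · exact ⟨⟨5, by simp [dihedralWord, mul_assoc]⟩, ⟨1, by simp [dihedralWord, hb']⟩⟩
  · exact ⟨⟨4, by simp [dihedralWord, ha', mul_assoc]⟩,
      ⟨3, by simp [dihedralWord, braid', mul_assoc]⟩⟩

/-- A group generated by two pairs of involutions, each pair satisfying the braid relation and
commuting with the other pair, is a quotient of `S₃ × S₃`; here only the resulting bound on the
order is recorded. -/
theorem card_le_of_commuting_pairs {G : Type*} [Group G] {a b c d : G}
    (hgen : Subgroup.closure ({a, b, c, d} : Set G) = ⊤)
    (ha : a * a = 1) (hb : b * b = 1) (hc : c * c = 1) (hd : d * d = 1)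
    (hab : (a * b) ^ 3 = 1) (hcd : (c * d) ^ 3 = 1)
    (hac : Commute a c) (had : Commute a d) (hbc : Commute b c) (hbd : Commute b d) :
    Finite G ∧ Nat.card G ≤ 36 := by
  let f : Fin 6 × Fin 6 → G := fun p => dihedralWord a b p.1 * dihedralWord c d p.2
  -- the range of `f` contains `1` and is stable under left multiplication by the generators
  have hmul : ∀ s ∈ ({a, b, c, d} : Set G), ∀ p, ∃ q, f q = s * f p := by
    rintro s hs ⟨i, j⟩
    have key1 := mul_dihedralWord ha hb hab i
    have key2 := mul_dihedralWord hc hd hcd j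
    simp only [Set.mem_insert_iff, Set.mem_singleton_iff] at hs
    rcases hs with rfl | rfl | rfl | rfl
    · obtain ⟨k, hk⟩ := key1.1
      exact ⟨(k, j), by simp only [f, ← hk, mul_assoc]⟩
    · obtain ⟨k, hk⟩ := key1.2
      exact ⟨(k, j), by simp only [f, ← hk, mul_assoc]⟩
    · obtain ⟨k, hk⟩ := key2.1
      refine ⟨(i, k), ?_⟩
      have hcomm := commute_dihedralWord hac.symm hbc.symm i
      simp only [f, ← hk]
      rw [← mul_assoc, ← mul_assoc, hcomm.eq]
    · obtain ⟨k, hk⟩ := key2.2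
      refine ⟨(i, k), ?_⟩
      have hcomm := commute_dihedralWord had.symm hbd.symm i
      simp only [f, ← hk]
      rw [← mul_assoc, ← mul_assoc, hcomm.eq]
  have hsurj : Function.Surjective f := by
    intro g
    have hg : g ∈ Subgroup.closure ({a, b, c, d} : Set G) := hgen ▸ Subgroup.mem_top g
    induction hg using Subgroup.closure_induction_left with
    | one => exact ⟨(0, 0), by simp [f, dihedralWord]⟩
    | mul_left x hx y _ ih =>
      obtain ⟨p, rfl⟩ := ih
      exact hmul x hx p
    | inv_mul_cancel x hx y _ ih =>
      obtain ⟨p, rfl⟩ := ih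
      have hinv : x⁻¹ = x := by
        apply inv_eq_of_mul_eq_one_left
        simp only [Set.mem_insert_iff, Set.mem_singleton_iff] at hx
        rcases hx with rfl | rfl | rfl | rfl <;> assumption
      rw [hinv]
      exact hmul x hx p
  refine ⟨Finite.of_surjective f hsurj, ?_⟩
  simpa using Nat.card_le_card_of_surjective f hsurj

set_option synthInstance.maxSize 4096 in
set_option maxRecDepth 10000 in
/-- Elements of `S₃` satisfying the relations of `F₄` either satisfy `(bc)² = 1` or all
coincide. -/
theorem perm_three_dichotomy : ∀ a b : Equiv.Perm (Fin 3), a * a = 1 → b * b = 1 →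
    (a * b) ^ 3 = 1 → ∀ c : Equiv.Perm (Fin 3), c * c = 1 → (a * c) ^ 2 = 1 →
    ∀ d : Equiv.Perm (Fin 3), d * d = 1 → (c * d) ^ 3 = 1 →
    (a * d) ^ 2 = 1 → (b * d) ^ 2 = 1 → (b * c) ^ 2 = 1 ∨ (b = a ∧ c = a ∧ d = a) := by
  decide

theorem dihedralWord_perm_three_surjective :
    ∀ g : Equiv.Perm (Fin 3),
      ∃ i, dihedralWord (Equiv.swap (0 : Fin 3) 1) (Equiv.swap (1 : Fin 3) 2) i = g := by
  decide

/-- Under a surjection onto `S₃` of a group whose generators satisfy the relations of `F₄`,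
the element `(f₂f₃)²` dies. -/
theorem sq_mem_ker {G : Type*} [Group G] {a b c d : G}
    (hgen : Subgroup.closure ({a, b, c, d} : Set G) = ⊤)
    (ha : a * a = 1) (hb : b * b = 1) (hc : c * c = 1) (hd : d * d = 1)
    (hab : (a * b) ^ 3 = 1) (hcd : (c * d) ^ 3 = 1)
    (hac : (a * c) ^ 2 = 1) (had : (a * d) ^ 2 = 1) (hbd : (b * d) ^ 2 = 1)
    (ψ : G →* Equiv.Perm (Fin 3)) (hψ : Function.Surjective ψ) : ψ ((b * c) ^ 2) = 1 := by
  have tr : ∀ {x : G}, x = 1 → ψ x = 1 := fun h => by rw [h, map_one]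
  rcases perm_three_dichotomy (ψ a) (ψ b) (by simpa using tr ha) (by simpa using tr hb)
    (by simpa using tr hab) (ψ c) (by simpa using tr hc) (by simpa using tr hac) (ψ d)
    (by simpa using tr hd) (by simpa using tr hcd) (by simpa using tr had)
    (by simpa using tr hbd) with h | ⟨h1, h2, h3⟩
  · simpa using h
  · exfalso
    -- the image of `ψ` lies in the cyclic group generated by `ψ a`, but `S₃` is not abelian
    have hmem : ∀ g : Equiv.Perm (Fin 3), g ∈ Subgroup.zpowers (ψ a) := by
      intro g
      obtain ⟨x, rfl⟩ := hψ g
      have hle : Subgroup.closure ({a, b, c, d} : Set G) ≤ (Subgroup.zpowers (ψ a)).comap ψ := by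
        rw [Subgroup.closure_le]
        rintro s hs
        simp only [Set.mem_insert_iff, Set.mem_singleton_iff] at hs
        rcases hs with rfl | rfl | rfl | rfl <;> simp [h1, h2, h3]
      exact hle (hgen ▸ Subgroup.mem_top x)
    obtain ⟨m, hm⟩ := Subgroup.mem_zpowers_iff.mp (hmem (Equiv.swap 0 1))
    obtain ⟨n, hn⟩ := Subgroup.mem_zpowers_iff.mp (hmem (Equiv.swap 1 2))
    have hcomm : (Equiv.swap 0 1 : Equiv.Perm (Fin 3)) * Equiv.swap 1 2
        = Equiv.swap 1 2 * Equiv.swap 0 1 := by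
      rw [← hm, ← hn, ← zpow_add, ← zpow_add, add_comm]
    exact absurd hcomm (by decide)

/-- The standard map `W → S₃ × S₃`, from the universal property of the Coxeter presentation. -/
theorem exists_hom {W : Type*} [Group W] {f1 f2 f3 f4 : W} {m : W → W → ℕ}
    (hcs : IsCoxeterSystemOn m ({f1, f2, f3, f4} : Set W))
    (h12 : m f1 f2 = 3) (h34 : m f3 f4 = 3) (h23 : m f2 f3 = 4)
    (h13 : m f1 f3 = 2) (h14 : m f1 f4 = 2) (h24 : m f2 f4 = 2) :
    ∃ φ : W →* Equiv.Perm (Fin 3) × Equiv.Perm (Fin 3),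
      φ f1 = (Equiv.swap 0 1, 1) ∧ φ f2 = (Equiv.swap 1 2, 1) ∧
      φ f3 = (1, Equiv.swap 0 1) ∧ φ f4 = (1, Equiv.swap 1 2) := by
  classical
  obtain ⟨cm, cs, hs, hM⟩ := hcs
  have m1 : f1 ∈ ({f1, f2, f3, f4} : Set W) := by simp
  have m2 : f2 ∈ ({f1, f2, f3, f4} : Set W) := by simp
  have m3 : f3 ∈ ({f1, f2, f3, f4} : Set W) := by simp
  have m4 : f4 ∈ ({f1, f2, f3, f4} : Set W) := by simp
  have hdiag : ∀ s ∈ ({f1, f2, f3, f4} : Set W), m s s = 1 := fun s h => by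
    rw [← hM ⟨s, h⟩ ⟨s, h⟩, cm.diagonal]
  have hsymm : ∀ s ∈ ({f1, f2, f3, f4} : Set W), ∀ t ∈ ({f1, f2, f3, f4} : Set W),
      m s t = m t s := fun s h t h' => by
    rw [← hM ⟨s, h⟩ ⟨t, h'⟩, cm.symmetric, hM]
  have d1 := hdiag f1 m1
  have d2 := hdiag f2 m2
  have d3 := hdiag f3 m3
  have d4 := hdiag f4 m4
  have h21 := (hsymm f2 m2 f1 m1).trans h12
  have h43 := (hsymm f4 m4 f3 m3).trans h34
  have h32 := (hsymm f3 m3 f2 m2).trans h23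
  have h31 := (hsymm f3 m3 f1 m1).trans h13
  have h41 := (hsymm f4 m4 f1 m1).trans h14
  have h42 := (hsymm f4 m4 f2 m2).trans h24
  -- the four generators are distinct, as off-diagonal entries of the matrix differ from `1`
  have n21 : f2 ≠ f1 := by rintro rfl; omega
  have n31 : f3 ≠ f1 := by rintro rfl; omega
  have n41 : f4 ≠ f1 := by rintro rfl; omega
  have n32 : f3 ≠ f2 := by rintro rfl; omega
  have n42 : f4 ≠ f2 := by rintro rfl; omega
  have n43 : f4 ≠ f3 := by rintro rfl; omega
  let g : W → Equiv.Perm (Fin 3) × Equiv.Perm (Fin 3) := fun s =>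
    if s = f1 then (Equiv.swap 0 1, 1) else if s = f2 then (Equiv.swap 1 2, 1)
    else if s = f3 then (1, Equiv.swap 0 1) else (1, Equiv.swap 1 2)
  have g1 : g f1 = (Equiv.swap 0 1, 1) := by simp [g]
  have g2 : g f2 = (Equiv.swap 1 2, 1) := by simp [g, n21]
  have g3 : g f3 = (1, Equiv.swap 0 1) := by simp [g, n31, n32]
  have g4 : g f4 = (1, Equiv.swap 1 2) := by simp [g, n41, n42, n43]
  have hlift : cm.IsLiftable fun s : ({f1, f2, f3, f4} : Set W) => g s := by
    rintro ⟨s, hs'⟩ ⟨t, ht'⟩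
    rw [hM]
    simp only [Set.mem_insert_iff, Set.mem_singleton_iff] at hs' ht'
    rcases hs' with rfl | rfl | rfl | rfl <;> rcases ht' with rfl | rfl | rfl | rfl <;>
      simp only [g1, g2, g3, g4, d1, d2, d3, d4, h12, h13, h14, h23, h24, h34,
        h21, h31, h41, h32, h42, h43] <;> decide
  have happ : ∀ s (h : s ∈ ({f1, f2, f3, f4} : Set W)), cs.lift ⟨_, hlift⟩ s = g s := by
    intro s h
    have := cs.lift_apply_simple hlift ⟨s, h⟩
    rwa [hs] at this
  exact ⟨cs.lift ⟨_, hlift⟩, (happ _ m1).trans g1, (happ _ m2).trans g2,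
    (happ _ m3).trans g3, (happ _ m4).trans g4⟩

/-- For the Coxeter system of type `F₄`, the quotient by the normal closure
of `(f₂f₃)²` is isomorphic to `S₃ × S₃`, and the normal closure of `(f₂f₃)²` is the unique
normal subgroup of `W` with this quotient. -/
theorem f4_unique_quotient (f1 f2 f3 f4 : W) (m : W → W → ℕ)
    (hcs : IsCoxeterSystemOn m ({f1, f2, f3, f4} : Set W))
    (h12 : m f1 f2 = 3) (h34 : m f3 f4 = 3) (h23 : m f2 f3 = 4)
    (h13 : m f1 f3 = 2) (h14 : m f1 f4 = 2) (h24 : m f2 f4 = 2) :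
    Nonempty ((W ⧸ Subgroup.normalClosure {(f2 * f3) ^ 2}) ≃*
        (Equiv.Perm (Fin 3) × Equiv.Perm (Fin 3))) ∧
      ∀ (N : Subgroup W) [N.Normal],
        Nonempty ((W ⧸ N) ≃* (Equiv.Perm (Fin 3) × Equiv.Perm (Fin 3))) →
          N = Subgroup.normalClosure {(f2 * f3) ^ 2} := by
  obtain ⟨φ, p1, p2, p3, p4⟩ := exists_hom hcs h12 h34 h23 h13 h14 h24
  obtain ⟨cm, cs, hs, hM⟩ := hcs
  have hsq : ∀ s ∈ ({f1, f2, f3, f4} : Set W), s * s = 1 := fun s h => by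
    have := cs.simple_mul_simple_self ⟨s, h⟩
    rwa [hs] at this
  have hrel : ∀ s ∈ ({f1, f2, f3, f4} : Set W), ∀ t ∈ ({f1, f2, f3, f4} : Set W),
      (s * t) ^ m s t = 1 := fun s h t h' => by
    have := cs.simple_mul_simple_pow ⟨s, h⟩ ⟨t, h'⟩
    rwa [hs, hs, hM] at this
  have hgen : Subgroup.closure ({f1, f2, f3, f4} : Set W) = ⊤ := by
    rw [← cs.subgroup_closure_range_simple]
    congr 1
    rw [show cs.simple = Subtype.val from funext hs, Subtype.range_coe]
  have s1 := hsq f1 (by simp)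
  have s2 := hsq f2 (by simp)
  have s3 := hsq f3 (by simp)
  have s4 := hsq f4 (by simp)
  have r12 := h12 ▸ hrel f1 (by simp) f2 (by simp)
  have r34 := h34 ▸ hrel f3 (by simp) f4 (by simp)
  have r13 := h13 ▸ hrel f1 (by simp) f3 (by simp)
  have r14 := h14 ▸ hrel f1 (by simp) f4 (by simp)
  have r24 := h24 ▸ hrel f2 (by simp) f4 (by simp)
  clear hrel hsq hM hs cs
  have hcard : Nat.card (Equiv.Perm (Fin 3) × Equiv.Perm (Fin 3)) = 36 := by
    rw [Nat.card_eq_fintype_card]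
    decide
  set M := Subgroup.normalClosure {(f2 * f3) ^ 2} with hMdef
  have hbound : Finite (W ⧸ M) ∧ Nat.card (W ⧸ M) ≤ 36 := by
    let π := QuotientGroup.mk' M
    have tr : ∀ {x : W}, x = 1 → π x = 1 := fun h => by rw [h, map_one]
    have comm : ∀ {x y : W}, x * x = 1 → y * y = 1 → π ((x * y) ^ 2) = 1 →
        Commute (π x) (π y) := by
      intro x y hx hy hxy
      have hx' : (π x)⁻¹ = π x := inv_eq_of_mul_eq_one_left (by rw [← map_mul, tr hx])
      have hy' : (π y)⁻¹ = π y := inv_eq_of_mul_eq_one_left (by rw [← map_mul, tr hy])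
      rw [map_pow, map_mul, pow_two] at hxy
      have h := eq_inv_of_mul_eq_one_left hxy
      rwa [mul_inv_rev, hx', hy'] at h
    have r23 : π ((f2 * f3) ^ 2) = 1 :=
      (QuotientGroup.eq_one_iff _).mpr (Subgroup.subset_normalClosure rfl)
    have hgen' : Subgroup.closure ({π f1, π f2, π f3, π f4} : Set (W ⧸ M)) = ⊤ := by
      have h := congrArg (Subgroup.map π) hgen
      rw [MonoidHom.map_closure, Subgroup.map_top_of_surjective π
        (QuotientGroup.mk'_surjective M)] at h
      simpa [Set.image_insert_eq] using h
    refine card_le_of_commuting_pairs hgen' ?_ ?_ ?_ ?_ ?_ ?_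
      (comm s1 s3 (tr r13)) (comm s1 s4 (tr r14)) (comm s2 s3 r23) (comm s2 s4 (tr r24))
    · rw [← map_mul, tr s1]
    · rw [← map_mul, tr s2]
    · rw [← map_mul, tr s3]
    · rw [← map_mul, tr s4]
    · rw [← map_mul, ← map_pow, tr r12]
    · rw [← map_mul, ← map_pow, tr r34]
  have hφ : Function.Surjective φ := by
    rintro ⟨x, y⟩
    obtain ⟨i, rfl⟩ := dihedralWord_perm_three_surjective x
    obtain ⟨j, rfl⟩ := dihedralWord_perm_three_surjective y
    refine ⟨dihedralWord f1 f2 i * dihedralWord f3 f4 j, ?_⟩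
    rw [map_mul, map_dihedralWord, map_dihedralWord, p1, p2, p3, p4]
    have e1 := map_dihedralWord (MonoidHom.inl (Equiv.Perm (Fin 3)) (Equiv.Perm (Fin 3)))
      (Equiv.swap 0 1) (Equiv.swap 1 2) i
    have e2 := map_dihedralWord (MonoidHom.inr (Equiv.Perm (Fin 3)) (Equiv.Perm (Fin 3)))
      (Equiv.swap 0 1) (Equiv.swap 1 2) j
    simp only [MonoidHom.inl_apply, MonoidHom.inr_apply] at e1 e2
    rw [← e1, ← e2, Prod.mk_mul_mk, mul_one, one_mul]
  have hker : M ≤ φ.ker := by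
    refine Subgroup.normalClosure_le_normal ?_
    rintro x rfl
    rw [SetLike.mem_coe, MonoidHom.mem_ker, map_pow, map_mul, p2, p3]
    decide
  let φ' : W ⧸ M →* Equiv.Perm (Fin 3) × Equiv.Perm (Fin 3) := QuotientGroup.lift M φ hker
  have hφ' : Function.Surjective φ' := QuotientGroup.lift_surjective_of_surjective M φ hφ hker
  have hfin := hbound.1
  have hcardQ : Nat.card (W ⧸ M) = 36 :=
    le_antisymm hbound.2 (hcard ▸ Nat.card_le_card_of_surjective φ' hφ')
  have hbij : Function.Bijective φ' :=
    (Nat.bijective_iff_surjective_and_card φ').mpr ⟨hφ', by rw [hcardQ, hcard]⟩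
  refine ⟨⟨MulEquiv.ofBijective φ' hbij⟩, ?_⟩
  rintro N hN ⟨e⟩
  let ψ : W →* Equiv.Perm (Fin 3) × Equiv.Perm (Fin 3) :=
    e.toMonoidHom.comp (QuotientGroup.mk' N)
  have hψ : Function.Surjective ψ := e.surjective.comp (QuotientGroup.mk'_surjective N)
  have hmem : (f2 * f3) ^ 2 ∈ N := by
    have k1 := sq_mem_ker hgen s1 s2 s3 s4 r12 r34 r13 r14 r24
      ((MonoidHom.fst _ _).comp ψ) (Prod.fst_surjective.comp hψ)
    have k2 := sq_mem_ker hgen s1 s2 s3 s4 r12 r34 r13 r14 r24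
      ((MonoidHom.snd _ _).comp ψ) (Prod.snd_surjective.comp hψ)
    have h : e (QuotientGroup.mk' N ((f2 * f3) ^ 2)) = 1 := Prod.ext k1 k2
    rw [MulEquiv.map_eq_one_iff] at h
    exact (QuotientGroup.eq_one_iff _).mp h
  have hle : M ≤ N := Subgroup.normalClosure_le_normal (by simpa using hmem)
  have hidx : M.relIndex N * 36 = 36 := by
    have h := Subgroup.relIndex_mul_index hle
    have hN' : N.index = 36 := (Nat.card_congr e.toEquiv).trans hcard
    have hM' : M.index = 36 := hcardQ
    rwa [hN', hM'] at h
  have hone : M.relIndex N = 1 := by omega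
  exact le_antisymm (Subgroup.relIndex_eq_one.mp hone) hle
end
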